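/- arXiv:2309.02988 — 4 statements merged into one kernel-verified Lean document; each statement's English description precedes it below -/
import Mathlib

section
/- Let 0 < α < 1, T > 0, and let v : [0,T] → ℝ be continuously differentiable. Then for every t ∈ (0,T), the left Riemann–Liouville derivatives of v and of v² of order α exist at t and satisfy (D_{0+}^α (v²))(t) ≤ 2 v(t) · (D_{0+}^α v)(t). -/
/-- The Riemann–Liouville kernel `ω_β(t) = t^(β-1) / Γ(β)`. -/
noncomputable def rlKernel (β t : ℝ) : ℝ := t ^ (β - 1) / Real.Gamma β

/-!
For a `C¹` function `f` the Riemann–Liouville derivative has the Marchaud form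
`Γ(1-α) (D^α f)(t) = t^(-α) f(t) + α ∫₀ᵗ (t-s)^(-α-1) (f(t) - f(s)) ds`.
It is obtained by rescaling the fractional integral to `[0, 1]`, where `t` enters only through
a power of `t` and `f (t * x)`, differentiating under the integral sign, and integrating by parts
against `s (t-s)^(-α) (f(t) - f(s))`, which is continuous up to `s = t` because `f` is
differentiable there.

For `0 ≤ α < 1` all weights in the Marchaud form are nonnegative. Hence, if `φ` is convex with
`φ 0 ≤ 0` and `L` is its derivative at `v t`, the bounds `φ (v t) ≤ L (v t)` and
`φ (v t) - φ (v s) ≤ L (v t - v s)` give `D^α (φ ∘ v) t ≤ L (D^α v t)`; take `φ y = y ^ 2`.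
-/

open Set Filter Topology MeasureTheory

variable {E : Type*} [NormedAddCommGroup E] [NormedSpace ℝ E]

lemma add_fderiv_sub_le_of_convexOn {φ : E → ℝ} {φ' : E →L[ℝ] ℝ} {x : E} {S : Set E}
    (hφ : ConvexOn ℝ S φ) (hφ' : HasFDerivAt φ φ' x) (hx : x ∈ S) {y : E} (hy : y ∈ S) :
    φ x + φ' (y - x) ≤ φ y := by
  have hline := hφ.comp_affineMap (AffineMap.lineMap x y)
  have hderiv : HasDerivAt (φ ∘ AffineMap.lineMap (k := ℝ) x y) (φ' (y - x)) 0 :=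
    HasFDerivAt.comp_hasDerivAt 0 (by simpa using hφ') AffineMap.hasDerivAt_lineMap
  have hslope := hline.le_slope_of_hasDerivAt (x := 0) (y := 1) (by simpa) (by simpa) one_pos hderiv
  rw [slope_def_field, sub_zero, div_one, Function.comp_apply, Function.comp_apply,
    AffineMap.lineMap_apply_one, AffineMap.lineMap_apply_zero] at hslope
  linarith

section WeaklySingularIntegrals

variable {r t : ℝ} {f f' : ℝ → E}

lemma intervalIntegrable_sub_rpow_smul {a b c : ℝ} (hr : -1 < r) (hf : ContinuousOn f (uIcc a b)) :
    IntervalIntegrable (fun s => (c - s) ^ r • f s) volume a b := by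
  have hpow : IntervalIntegrable (fun s => (c - s) ^ r) volume a b := by
    simpa using (intervalIntegral.intervalIntegrable_rpow' (a := c - a) (b := c - b)
      hr).comp_sub_left c
  exact hpow.smul_continuousOn hf

lemma continuous_sub_rpow {p : ℝ} (hp : 0 ≤ p) (c : ℝ) : Continuous fun s : ℝ => (c - s) ^ p :=
  (continuous_const.sub continuous_id).rpow_const fun _ => Or.inr hp

lemma continuousOn_dslope_of_differentiableAt {S : Set ℝ} (hf : ContinuousOn f S)
    (hd : DifferentiableAt ℝ f t) : ContinuousOn (dslope f t) S := by
  intro x hx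
  rcases eq_or_ne x t with rfl | hne
  · exact (continuousAt_dslope_same.2 hd).continuousWithinAt
  · exact (continuousWithinAt_dslope_of_ne hne).2 (hf x hx)

lemma sub_rpow_smul_sub_eq_dslope {s : ℝ} (hs : s < t) (r : ℝ) (f : ℝ → E) :
    (t - s) ^ r • (f t - f s) = (t - s) ^ (r + 1) • dslope f t s := by
  rw [← neg_sub (f s), ← sub_smul_dslope, ← neg_smul, neg_sub, smul_smul,
    Real.rpow_add_one (sub_pos.2 hs).ne']

lemma intervalIntegrable_sub_rpow_smul_sub (hr : -1 < r) (ht : 0 ≤ t)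
    (hf : ContinuousOn f (Icc 0 t)) (hd : DifferentiableAt ℝ f t) :
    IntervalIntegrable (fun s => (t - s) ^ (r - 1) • (f t - f s)) volume 0 t := by
  rw [← uIcc_of_le ht] at hf
  refine (intervalIntegrable_sub_rpow_smul (c := t) hr
    (continuousOn_dslope_of_differentiableAt hf hd)).congr_uIoo fun s hs => ?_
  rw [uIoo_of_le ht] at hs
  simp only [sub_rpow_smul_sub_eq_dslope hs.2, sub_add_cancel]

lemma continuousOn_sub_rpow_smul_sub (hr : -1 < r) (hf : ContinuousOn f (Icc 0 t))
    (hd : DifferentiableAt ℝ f t) :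
    ContinuousOn (fun s => (t - s) ^ r • (f t - f s)) (Icc 0 t) := by
  have hpow : Continuous fun s => (t - s) ^ (r + 1) := continuous_sub_rpow (by linarith) t
  refine (hpow.continuousOn.smul
    (continuousOn_dslope_of_differentiableAt hf hd)).congr fun s hs => ?_
  rcases hs.2.eq_or_lt with rfl | hlt
  · simp [Real.zero_rpow (by linarith : r + 1 ≠ 0)]
  · exact sub_rpow_smul_sub_eq_dslope hlt r f

lemma integral_sub_rpow_smul_eq_integral_zero_one (r : ℝ) (f : ℝ → E) (ht : 0 < t) :
    ∫ s in (0 : ℝ)..t, (t - s) ^ r • f s =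
      t ^ (r + 1) • ∫ x in (0 : ℝ)..1, (1 - x) ^ r • f (t * x) := by
  have hscale := intervalIntegral.smul_integral_comp_mul_left (a := 0) (b := 1)
    (f := fun s => (t - s) ^ r • f s) t
  rw [mul_zero, mul_one] at hscale
  rw [← hscale, Real.rpow_add_one ht.ne', mul_comm, mul_smul,
    ← intervalIntegral.integral_smul (t ^ r)]
  congr 1
  refine intervalIntegral.integral_congr fun x hx => ?_
  rw [uIcc_of_le zero_le_one] at hx
  simp only [smul_smul, ← Real.mul_rpow ht.le (sub_nonneg.2 hx.2), mul_sub, mul_one]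

lemma mul_mem_Ioo_of_mem_Ioc {T τ x : ℝ} (hτ : τ ∈ Ioo 0 T) (hx : x ∈ Ioc (0 : ℝ) 1) :
    τ * x ∈ Ioo 0 T :=
  ⟨mul_pos hτ.1 hx.1, (mul_le_of_le_one_right hτ.1.le hx.2).trans_lt hτ.2⟩

lemma continuousOn_comp_mul_left {X : Type*} [TopologicalSpace X] {g : ℝ → X} {T τ : ℝ}
    (hg : ContinuousOn g (Icc 0 T)) (hτ : τ ∈ Icc 0 T) :
    ContinuousOn (fun x => g (τ * x)) (uIcc 0 1) := by
  rw [uIcc_of_le zero_le_one]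
  exact hg.comp (by fun_prop) fun x hx =>
    ⟨mul_nonneg hτ.1 hx.1, (mul_le_of_le_one_right hτ.1 hx.2).trans hτ.2⟩

lemma hasDerivAt_integral_one_sub_rpow_smul_comp_mul {T : ℝ} (hr : -1 < r)
    (hf : ContinuousOn f (Icc 0 T)) (hf' : ContinuousOn f' (Icc 0 T))
    (hd : ∀ s ∈ Ioo 0 T, HasDerivAt f (f' s) s) (ht : t ∈ Ioo 0 T) :
    HasDerivAt (fun τ => ∫ x in (0 : ℝ)..1, (1 - x) ^ r • f (τ * x))
      (∫ x in (0 : ℝ)..1, (1 - x) ^ r • x • f' (t * x)) t := by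
  obtain ⟨C, hC⟩ := isCompact_Icc.exists_bound_of_continuousOn hf'
  have hnhds : Ioo 0 T ∈ 𝓝 t := Ioo_mem_nhds ht.1 ht.2
  have hint : ∀ τ ∈ Ioo 0 T,
      IntervalIntegrable (fun x => (1 - x) ^ r • f (τ * x)) volume 0 1 := fun τ hτ =>
    intervalIntegrable_sub_rpow_smul hr (continuousOn_comp_mul_left hf (Ioo_subset_Icc_self hτ))
  refine (intervalIntegral.hasDerivAt_integral_of_dominated_loc_of_deriv_le
    (F' := fun τ x => (1 - x) ^ r • x • f' (τ * x)) (bound := fun x => (1 - x) ^ r • C) hnhds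
    (mem_of_superset hnhds fun τ hτ => (hint τ hτ).aestronglyMeasurable_restrict_uIoc) (hint t ht)
    ?_ (ae_of_all _ fun x hx τ hτ => ?_)
    (intervalIntegrable_sub_rpow_smul hr continuousOn_const)
    (ae_of_all _ fun x hx τ hτ => ?_)).2
  · exact (intervalIntegrable_sub_rpow_smul hr (continuousOn_id.smul (continuousOn_comp_mul_left hf'
      (Ioo_subset_Icc_self ht)))).aestronglyMeasurable_restrict_uIoc
  · rw [uIoc_of_le zero_le_one] at hx
    have hweight : 0 ≤ (1 - x) ^ r := Real.rpow_nonneg (sub_nonneg.2 hx.2) r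
    rw [norm_smul, norm_smul, Real.norm_of_nonneg hweight, Real.norm_of_nonneg hx.1.le, smul_eq_mul]
    gcongr
    exact (mul_le_of_le_one_left (norm_nonneg _) hx.2).trans
      (hC _ (Ioo_subset_Icc_self (mul_mem_Ioo_of_mem_Ioc hτ hx)))
  · rw [uIoc_of_le zero_le_one] at hx
    exact ((hd _ (mul_mem_Ioo_of_mem_Ioc hτ hx)).scomp τ (hasDerivAt_mul_const x)).const_smul _

lemma hasDerivAt_integral_sub_rpow_smul {T : ℝ} (hr : -1 < r)
    (hf : ContinuousOn f (Icc 0 T)) (hf' : ContinuousOn f' (Icc 0 T))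
    (hd : ∀ s ∈ Ioo 0 T, HasDerivAt f (f' s) s) (ht : t ∈ Ioo 0 T) :
    HasDerivAt (fun τ => ∫ s in (0 : ℝ)..τ, (τ - s) ^ r • f s)
      (t⁻¹ • ∫ s in (0 : ℝ)..t, (t - s) ^ r • ((r + 1) • f s + s • f' s)) t := by
  have hscaled : (fun τ => ∫ s in (0 : ℝ)..τ, (τ - s) ^ r • f s) =ᶠ[𝓝 t]
      fun τ => τ ^ (r + 1) • ∫ x in (0 : ℝ)..1, (1 - x) ^ r • f (τ * x) := by
    filter_upwards [Ioi_mem_nhds ht.1] with τ hτ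
    exact integral_sub_rpow_smul_eq_integral_zero_one r f hτ
  have hpow := Real.hasDerivAt_rpow_const (p := r + 1) (Or.inl ht.1.ne')
  refine ((hpow.smul (hasDerivAt_integral_one_sub_rpow_smul_comp_mul hr hf hf' hd
    ht)).congr_of_eventuallyEq hscaled).congr_deriv ?_
  have hint : IntervalIntegrable (fun x => (1 - x) ^ r • f (t * x)) volume 0 1 :=
    intervalIntegrable_sub_rpow_smul hr (continuousOn_comp_mul_left hf (Ioo_subset_Icc_self ht))
  have hint' : IntervalIntegrable (fun x => (1 - x) ^ r • x • f' (t * x)) volume 0 1 :=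
    intervalIntegrable_sub_rpow_smul hr
      (continuousOn_id.smul (continuousOn_comp_mul_left hf' (Ioo_subset_Icc_self ht)))
  have hsplit : ∫ x in (0 : ℝ)..1, (1 - x) ^ r • ((r + 1) • f (t * x) + (t * x) • f' (t * x)) =
      (r + 1) • (∫ x in (0 : ℝ)..1, (1 - x) ^ r • f (t * x)) +
        t • ∫ x in (0 : ℝ)..1, (1 - x) ^ r • x • f' (t * x) := by
    rw [← intervalIntegral.integral_smul, ← intervalIntegral.integral_smul,
      ← intervalIntegral.integral_add (hint.continuousOn_smul continuousOn_const)
        (hint'.continuousOn_smul continuousOn_const)]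
    exact intervalIntegral.integral_congr fun x _ => by module
  rw [integral_sub_rpow_smul_eq_integral_zero_one r (fun s => (r + 1) • f s + s • f' s) ht.1,
    hsplit, add_sub_cancel_right, Real.rpow_add_one ht.1.ne']
  match_scalars <;> field_simp [ht.1.ne']

lemma hasDerivAt_sub_rpow {s : ℝ} (hs : s < t) (p : ℝ) :
    HasDerivAt (fun s => (t - s) ^ p) (-(p * (t - s) ^ (p - 1))) s :=
  (((hasDerivAt_id s).const_sub t).rpow_const (Or.inl (sub_pos.2 hs).ne')).congr_deriv (by simp)

-- Substituting `s = t - (t - s)` in the term `r * s * (t - s) ^ (r - 1)` produces the factor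
-- `r + 1`; the summand `(t - s) ^ (r + 1) • f t` cancels the constant `f t` this leaves behind.
lemma hasDerivAt_neg_smul_sub_rpow_smul_sub_add {s : ℝ} {D : E} (r : ℝ) (hs : s < t)
    (hd : HasDerivAt f D s) :
    HasDerivAt (fun s => -(s • (t - s) ^ r • (f t - f s) + (t - s) ^ (r + 1) • f t))
      ((t - s) ^ r • ((r + 1) • f s + s • D) + (r * t) • (t - s) ^ (r - 1) • (f t - f s)) s := by
  refine (((hasDerivAt_id s).smul ((hasDerivAt_sub_rpow hs r).smul (hd.const_sub (f t)))).add
    ((hasDerivAt_sub_rpow hs (r + 1)).smul_const (f t))).neg.congr_deriv ?_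
  have hrec : (t - s) ^ r = (t - s) ^ (r - 1) * (t - s) := by
    rw [← Real.rpow_add_one (sub_pos.2 hs).ne', sub_add_cancel]
  simp only [id_eq, Pi.smul_apply', add_sub_cancel_right, hrec]
  module

lemma integral_sub_rpow_smul_add_smul_deriv [CompleteSpace E] (hr : -1 < r) (ht : 0 < t)
    (hf : ContinuousOn f (Icc 0 t)) (hf' : ContinuousOn f' (Icc 0 t))
    (hd : ∀ s ∈ Ioc 0 t, HasDerivAt f (f' s) s) :
    ∫ s in (0 : ℝ)..t, (t - s) ^ r • ((r + 1) • f s + s • f' s) =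
      t ^ (r + 1) • f t - (r * t) • ∫ s in (0 : ℝ)..t, (t - s) ^ (r - 1) • (f t - f s) := by
  have hdt : DifferentiableAt ℝ f t := (hd t (right_mem_Ioc.2 ht)).differentiableAt
  have hpow : Continuous fun s => (t - s) ^ (r + 1) := continuous_sub_rpow (by linarith) t
  have hcont : ContinuousOn
      (fun s => -(s • (t - s) ^ r • (f t - f s) + (t - s) ^ (r + 1) • f t)) (Icc 0 t) :=
    ((continuousOn_id.smul (continuousOn_sub_rpow_smul_sub hr hf hdt)).add
      (hpow.continuousOn.smul continuousOn_const)).neg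
  have hint : IntervalIntegrable
      (fun s => (r * t) • (t - s) ^ (r - 1) • (f t - f s)) volume 0 t :=
    (intervalIntegrable_sub_rpow_smul_sub hr ht.le hf hdt).smul (r * t)
  have hint' : IntervalIntegrable
      (fun s => (t - s) ^ r • ((r + 1) • f s + s • f' s)) volume 0 t :=
    intervalIntegrable_sub_rpow_smul hr (by rw [uIcc_of_le ht.le]; fun_prop)
  have hFTC := intervalIntegral.integral_eq_sub_of_hasDerivAt_of_le ht.le hcont
    (fun s hs => hasDerivAt_neg_smul_sub_rpow_smul_sub_add r hs.2 (hd s (Ioo_subset_Ioc_self hs)))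
    (hint'.add hint)
  rw [intervalIntegral.integral_add hint' hint, intervalIntegral.integral_smul] at hFTC
  rw [eq_sub_iff_add_eq, hFTC]
  simp [Real.zero_rpow (by linarith : r + 1 ≠ 0)]

end WeaklySingularIntegrals

section MarchaudDerivative

variable {α t : ℝ}

/-- The Marchaud form of the left Riemann–Liouville derivative of order `α < 1` based at `0`. It
displays the derivative as a combination of `f t` and the increments `f t - f s`. The integral takes
the junk value `0` unless `f` is regular enough near `t`, e.g. differentiable at `t`. -/
noncomputable def marchaudDeriv (α : ℝ) (f : ℝ → E) (t : ℝ) : E :=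
  (Real.Gamma (1 - α))⁻¹ •
    (t ^ (-α) • f t + α • ∫ s in (0 : ℝ)..t, (t - s) ^ (-α - 1) • (f t - f s))

lemma integral_rlKernel_smul (α τ : ℝ) (f : ℝ → E) :
    ∫ s in (0 : ℝ)..τ, rlKernel (1 - α) (τ - s) • f s =
      (Real.Gamma (1 - α))⁻¹ • ∫ s in (0 : ℝ)..τ, (τ - s) ^ (-α) • f s := by
  rw [← intervalIntegral.integral_smul]
  simp only [rlKernel, smul_smul, sub_sub_cancel_left, div_eq_inv_mul]

lemma intervalIntegrable_marchaud_integrand {T : ℝ} {f : ℝ → E} (hα : α < 1)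
    (hf : ContDiffOn ℝ 1 f (Icc 0 T)) (ht : t ∈ Ioo 0 T) :
    IntervalIntegrable (fun s => (t - s) ^ (-α - 1) • (f t - f s)) volume 0 t :=
  intervalIntegrable_sub_rpow_smul_sub (neg_lt_neg hα) ht.1.le
    (hf.continuousOn.mono (Icc_subset_Icc_right ht.2.le))
    ((hf.contDiffAt (Icc_mem_nhds ht.1 ht.2)).differentiableAt one_ne_zero)

lemma hasDerivAt_integral_rlKernel_smul [CompleteSpace E] {T : ℝ} {f : ℝ → E} (hα : α < 1)
    (hf : ContDiffOn ℝ 1 f (Icc 0 T)) (ht : t ∈ Ioo 0 T) :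
    HasDerivAt (fun τ => ∫ s in (0 : ℝ)..τ, rlKernel (1 - α) (τ - s) • f s)
      (marchaudDeriv α f t) t := by
  set f' := derivWithin f (Icc 0 T)
  have hT : 0 < T := ht.1.trans ht.2
  have hf' : ContinuousOn f' (Icc 0 T) := hf.continuousOn_derivWithin (uniqueDiffOn_Icc hT) le_rfl
  have hd : ∀ s ∈ Ioo 0 T, HasDerivAt f (f' s) s := fun s hs =>
    (hf.differentiableOn one_ne_zero s (Ioo_subset_Icc_self hs)).hasDerivWithinAt.hasDerivAt
      (Icc_mem_nhds hs.1 hs.2)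
  have hr : -1 < -α := neg_lt_neg hα
  have hsub : Icc 0 t ⊆ Icc 0 T := Icc_subset_Icc_right ht.2.le
  simp only [integral_rlKernel_smul]
  refine ((hasDerivAt_integral_sub_rpow_smul hr hf.continuousOn hf' hd ht).const_smul
    (Real.Gamma (1 - α))⁻¹).congr_deriv ?_
  rw [integral_sub_rpow_smul_add_smul_deriv hr ht.1 (hf.continuousOn.mono hsub) (hf'.mono hsub)
    fun s hs => hd s ⟨hs.1, hs.2.trans_lt ht.2⟩, marchaudDeriv, Real.rpow_add_one ht.1.ne']
  congr 1
  match_scalars <;> field_simp [ht.1.ne']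

lemma marchaudDeriv_comp_le [CompleteSpace E] {φ : E → ℝ} {L : E →L[ℝ] ℝ} {v : ℝ → E}
    (hα0 : 0 ≤ α) (hα1 : α < 1) (ht : 0 ≤ t) (hφ0 : φ 0 ≤ 0)
    (hL : ∀ y, φ (v t) + L (y - v t) ≤ φ y)
    (hv : IntervalIntegrable (fun s => (t - s) ^ (-α - 1) • (v t - v s)) volume 0 t)
    (hφv : IntervalIntegrable (fun s => (t - s) ^ (-α - 1) • (φ (v t) - φ (v s))) volume 0 t) :
    marchaudDeriv α (φ ∘ v) t ≤ L (marchaudDeriv α v t) := by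
  have hΓ : 0 ≤ (Real.Gamma (1 - α))⁻¹ := inv_nonneg.2 (Real.Gamma_pos_of_pos (sub_pos.2 hα1)).le
  have hpow : 0 ≤ t ^ (-α) := Real.rpow_nonneg ht _
  have hboundary : φ (v t) ≤ L (v t) := by
    have hzero := hL 0
    rw [zero_sub, map_neg] at hzero
    linarith
  have hintegrand : ∀ s ∈ Icc 0 t,
      (t - s) ^ (-α - 1) • (φ (v t) - φ (v s)) ≤ L ((t - s) ^ (-α - 1) • (v t - v s)) := by
    intro s hs
    have hsub := hL (v s)
    rw [map_sub] at hsub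
    rw [map_smul, map_sub]
    exact smul_le_smul_of_nonneg_left (by linarith) (Real.rpow_nonneg (sub_nonneg.2 hs.2) _)
  have hLv : IntervalIntegrable (fun s => L ((t - s) ^ (-α - 1) • (v t - v s))) volume 0 t :=
    ⟨L.integrable_comp hv.1, L.integrable_comp hv.2⟩
  have hintegral := intervalIntegral.integral_mono_on ht hφv hLv hintegrand
  rw [L.intervalIntegral_comp_comm hv] at hintegral
  simp only [marchaudDeriv, map_smul, map_add, Function.comp_apply]
  exact smul_le_smul_of_nonneg_left (add_le_add (smul_le_smul_of_nonneg_left hboundary hpow)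
    (smul_le_smul_of_nonneg_left hintegral hα0)) hΓ

end MarchaudDerivative

theorem rl_deriv_sq_le_general [CompleteSpace E] {α T t : ℝ} {φ : E → ℝ} {v : ℝ → E}
    (hα0 : 0 ≤ α) (hα1 : α < 1) (hφ : ConvexOn ℝ univ φ) (hφ1 : ContDiff ℝ 1 φ) (hφ0 : φ 0 ≤ 0)
    (hv : ContDiffOn ℝ 1 v (Icc 0 T)) (ht : t ∈ Ioo 0 T) :
    ∃ (Dv : E) (Dφ : ℝ),
      HasDerivAt (fun τ => ∫ s in (0 : ℝ)..τ, rlKernel (1 - α) (τ - s) • v s) Dv t ∧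
      HasDerivAt (fun τ => ∫ s in (0 : ℝ)..τ, rlKernel (1 - α) (τ - s) • φ (v s)) Dφ t ∧
      Dφ ≤ fderiv ℝ φ (v t) Dv := by
  have hφv : ContDiffOn ℝ 1 (φ ∘ v) (Icc 0 T) := hφ1.comp_contDiffOn hv
  have htangent : ∀ y, φ (v t) + fderiv ℝ φ (v t) (y - v t) ≤ φ y := fun y =>
    add_fderiv_sub_le_of_convexOn hφ (hφ1.differentiable one_ne_zero _).hasFDerivAt
      (mem_univ _) (mem_univ y)
  exact ⟨marchaudDeriv α v t, marchaudDeriv α (φ ∘ v) t,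
    hasDerivAt_integral_rlKernel_smul hα1 hv ht, hasDerivAt_integral_rlKernel_smul hα1 hφv ht,
    marchaudDeriv_comp_le hα0 hα1 ht.1.le hφ0 htangent
      (intervalIntegrable_marchaud_integrand hα1 hv ht)
      (intervalIntegrable_marchaud_integrand hα1 hφv ht)⟩

/-- For `0 < α < 1` and `v` continuously differentiable on `[0,T]`, the left
Riemann–Liouville derivatives of `v` and of `v²` of order `α` exist at every
`t ∈ (0,T)` and satisfy `(D_{0+}^α (v²))(t) ≤ 2 v(t) (D_{0+}^α v)(t)`. -/
theorem rl_deriv_sq_le (α T : ℝ) (hα0 : 0 < α) (hα1 : α < 1) (hT : 0 < T)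
    (v : ℝ → ℝ) (hv : ContDiffOn ℝ 1 v (Set.Icc 0 T)) :
    ∀ t ∈ Set.Ioo (0 : ℝ) T, ∃ Dv D2 : ℝ,
      HasDerivAt (fun τ => ∫ s in (0:ℝ)..τ, rlKernel (1 - α) (τ - s) * v s) Dv t ∧
      HasDerivAt (fun τ => ∫ s in (0:ℝ)..τ, rlKernel (1 - α) (τ - s) * (v s) ^ 2) D2 t ∧
      D2 ≤ 2 * v t * Dv := by
  intro t ht
  simpa [fderiv_eq_smul_deriv, mul_comm] using rl_deriv_sq_le_general hα0.le hα1
    (even_two.convexOn_pow (𝕜 := ℝ)) (contDiff_id.pow 2) (by simp) hv ht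
end

section
/- Let 0 < α < 1 and α₁, α₂ > 0 with α₁ + α₂ = α, let T > 0, and let v, w : [0,T] → ℝ be continuously differentiable. Then ∫_0^T v(t) · (D_{0+}^α w)(t) dt = ∫_0^T (D_{0+}^{α₁} w)(t) · (D_{T−}^{α₂} v)(t) dt, where all Riemann–Liouville derivatives exist on (0,T) and both integrals converge absolutely. -/
open MeasureTheory Set Filter Topology
open scoped Convolution NNReal

/-!
Extend the kernels `ω_b`, `b > 0`, by zero to the negative half-line. Under convolution they form
the semigroup `ω_a ⋆ ω_b = ω_{a+b}`. A `C¹` function on `[0, T]` is `w = ω₁ ⋆ μ`, where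
`μ = w(0) δ₀ + w' dt`, so its derivative of order `α` is `ω_{1-α} ⋆ μ`. Likewise
`v (T - ·) = ω₁ ⋆ ν`, and the reflected right derivative of `v` of order `α` is `ω_{1-α} ⋆ ν`. Both
sides of the claim are therefore values at `T` of a convolution `(ω_a ⋆ ν) ⋆ (ω_b ⋆ μ)`, which
depends only on `a + b`; here `a + b = 2 - α₁ - α₂` on both sides.
-/

section

variable {E : Type*} [NormedAddCommGroup E]

lemma indicator_Ioi_convolution_indicator_Ioi [NormedSpace ℝ E] (f : ℝ → ℝ) (g : ℝ → E) :
    (Ioi 0).indicator f ⋆ (Ioi 0).indicator g =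
      (Ioi 0).indicator fun x => ∫ t in (0 : ℝ)..x, f (x - t) • g t := by
  rw [← posConvolution_eq_convolution_indicator f g (ContinuousLinearMap.lsmul ℝ ℝ) volume]
  refine indicator_congr fun x _ => ?_
  simpa using
    (intervalIntegral.integral_comp_sub_left (a := 0) (b := x) (fun t => f t • g (x - t)) x).symm

lemma real_convolution_comm (f g : ℝ → ℝ) : f ⋆ g = g ⋆ f := by
  ext x
  rw [convolution_lsmul, convolution_lsmul_swap]
  simp_rw [smul_eq_mul, mul_comm]

lemma integral_rpow_mul_sub_rpow {a b x : ℝ} (ha : 0 < a) (hb : 0 < b) (hx : 0 < x) :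
    ∫ t in (0 : ℝ)..x, t ^ (a - 1) * (x - t) ^ (b - 1) =
      x ^ (a + b - 1) * ProbabilityTheory.beta a b := by
  rw [← Complex.ofReal_inj, ← intervalIntegral.integral_ofReal]
  calc ∫ t in (0 : ℝ)..x, ((t ^ (a - 1) * (x - t) ^ (b - 1) : ℝ) : ℂ)
      = ∫ t in (0 : ℝ)..x, (t : ℂ) ^ ((a : ℂ) - 1) * ((x : ℂ) - t) ^ ((b : ℂ) - 1) := by
        refine intervalIntegral.integral_congr fun t ht => ?_
        rw [uIcc_of_le hx.le] at ht
        push_cast [Complex.ofReal_cpow ht.1, Complex.ofReal_cpow (sub_nonneg.2 ht.2)]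
        rfl
    _ = (x : ℂ) ^ ((a : ℂ) + b - 1) * Complex.betaIntegral a b :=
        Complex.betaIntegral_scaled a b hx
    _ = ((x ^ (a + b - 1) * ProbabilityTheory.beta a b : ℝ) : ℂ) := by
        rw [Complex.betaIntegral_eq_Gamma_mul_div _ _ (by simpa) (by simpa), ProbabilityTheory.beta]
        push_cast [Complex.ofReal_cpow hx.le, ← Complex.Gamma_ofReal]
        rfl

lemma integral_rlKernel_sub_mul_rlKernel {a b x : ℝ} (ha : 0 < a) (hb : 0 < b) (hx : 0 < x) :
    ∫ t in (0 : ℝ)..x, rlKernel a (x - t) * rlKernel b t = rlKernel (a + b) x := by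
  have hΓa := (Real.Gamma_pos_of_pos ha).ne'
  have hΓb := (Real.Gamma_pos_of_pos hb).ne'
  simp only [rlKernel, div_mul_div_comm, intervalIntegral.integral_div]
  simp only [mul_comm ((x - _) ^ (a - 1)), integral_rpow_mul_sub_rpow hb ha hx, add_comm b a,
    ProbabilityTheory.beta]
  field_simp

lemma continuousOn_rlKernel (b : ℝ) : ContinuousOn (rlKernel b) (Ioi 0) := fun _ hx =>
  ((Real.continuousAt_rpow_const _ _ (Or.inl hx.ne')).div_const _).continuousWithinAt

/-- The Riemann–Liouville kernel `rlKernel b` cut off to the positive half-line, so that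
Riemann–Liouville integrals starting at `0` become convolutions over `ℝ`. -/
noncomputable def causalKernel (b : ℝ) : ℝ → ℝ := (Ioi 0).indicator (rlKernel b)

section causalKernel

variable {a b x : ℝ}

lemma causalKernel_of_pos (b : ℝ) (hx : 0 < x) : causalKernel b x = rlKernel b x :=
  indicator_of_mem (mem_Ioi.2 hx) _

lemma causalKernel_of_nonpos (b : ℝ) (hx : x ≤ 0) : causalKernel b x = 0 :=
  indicator_of_notMem (notMem_Ioi.2 hx) _

lemma causalKernel_one_of_pos (hx : 0 < x) : causalKernel 1 x = 1 := by
  simp [causalKernel_of_pos 1 hx, rlKernel]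

lemma causalKernel_pos (hb : 0 < b) (hx : 0 < x) : 0 < causalKernel b x := by
  rw [causalKernel_of_pos b hx]
  exact div_pos (Real.rpow_pos_of_pos hx _) (Real.Gamma_pos_of_pos hb)

lemma causalKernel_nonneg (hb : 0 < b) (x : ℝ) : 0 ≤ causalKernel b x := by
  rcases le_or_gt x 0 with hx | hx
  · exact (causalKernel_of_nonpos b hx).ge
  · exact (causalKernel_pos hb hx).le

lemma measurable_causalKernel (b : ℝ) : Measurable (causalKernel b) := by
  unfold causalKernel rlKernel
  exact Measurable.indicator (by fun_prop) measurableSet_Ioi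

lemma causalKernel_convolution_causalKernel (ha : 0 < a) (hb : 0 < b) :
    causalKernel a ⋆ causalKernel b = causalKernel (a + b) := by
  simp only [causalKernel, indicator_Ioi_convolution_indicator_Ioi, smul_eq_mul]
  exact indicator_congr fun x hx => integral_rlKernel_sub_mul_rlKernel ha hb hx

lemma convolutionExists_causalKernel (ha : 0 < a) (hb : 0 < b) :
    ConvolutionExists (causalKernel a) (causalKernel b) (ContinuousLinearMap.lsmul ℝ ℝ) := by
  intro x
  rcases le_or_gt x 0 with hx | hx
  · refine (integrable_zero ℝ ℝ volume).congr (Eventually.of_forall fun t => ?_)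
    rcases le_or_gt t 0 with ht | ht
    · simp [causalKernel_of_nonpos a ht]
    · simp [causalKernel_of_nonpos b (show x - t ≤ 0 by linarith)]
  · -- A divergent Bochner integral would be `0`, but the value is `causalKernel (a + b) x > 0`.
    refine not_imp_comm.1 integral_undef (ne_of_gt ?_)
    exact (causalKernel_pos (add_pos ha hb) hx).trans_eq
      (congrFun (causalKernel_convolution_causalKernel ha hb) x).symm

lemma exists_causalKernel_le_mul (ha : 0 < a) (hab : a ≤ b) (R : ℝ) :
    ∃ C : ℝ≥0, ∀ x ≤ R, causalKernel b x ≤ C * causalKernel a x := by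
  have hΓa := (Real.Gamma_pos_of_pos ha).ne'
  have hΓb := Real.Gamma_pos_of_pos (ha.trans_le hab)
  refine ⟨(R ^ (b - a) * Real.Gamma a / Real.Gamma b).toNNReal, fun x hx => ?_⟩
  rcases le_or_gt x 0 with hx0 | hx0
  · simp [causalKernel_of_nonpos _ hx0]
  calc causalKernel b x = x ^ (b - a) * x ^ (a - 1) / Real.Gamma b := by
        rw [causalKernel_of_pos b hx0, rlKernel, ← Real.rpow_add hx0, sub_add_sub_cancel]
    _ ≤ R ^ (b - a) * x ^ (a - 1) / Real.Gamma b := by gcongr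
    _ = R ^ (b - a) * Real.Gamma a / Real.Gamma b * causalKernel a x := by
        rw [causalKernel_of_pos a hx0, rlKernel]
        field_simp [hΓa]
    _ ≤ _ := mul_le_mul_of_nonneg_right (Real.le_coe_toNNReal _) (causalKernel_nonneg ha x)

lemma integrableOn_Iic_causalKernel (hb : 0 < b) (R : ℝ) :
    IntegrableOn (causalKernel b) (Iic R) := by
  have h : IntervalIntegrable (rlKernel b) volume 0 R :=
    (intervalIntegral.intervalIntegrable_rpow' (by linarith)).div_const _
  rw [causalKernel, integrableOn_indicator_iff measurableSet_Ioi, Ioi_inter_Iic]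
  exact h.1

end causalKernel

/-- A function on `ℝ` which near `0` has at most the singularity of `causalKernel b`, in the sense
that on each half-line `(-∞, R]` it is bounded by a multiple of that kernel; in particular it
vanishes on `(-∞, 0]`. Convolutions within this class converge at every point, not just almost
everywhere. -/
structure KernelDominated (b : ℝ) (f : ℝ → E) : Prop where
  stronglyMeasurable : StronglyMeasurable f
  exists_norm_le : ∀ R, ∃ C : ℝ≥0, ∀ x ≤ R, ‖f x‖ ≤ C * causalKernel b x

lemma kernelDominated_causalKernel {b : ℝ} (hb : 0 < b) : KernelDominated b (causalKernel b) where
  stronglyMeasurable := (measurable_causalKernel b).stronglyMeasurable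
  exists_norm_le _ := ⟨1, fun x _ => by
    rw [Real.norm_of_nonneg (causalKernel_nonneg hb x), NNReal.coe_one, one_mul]⟩

lemma kernelDominated_one_indicator_Ioi {g : ℝ → E} (hg : Continuous g) :
    KernelDominated 1 ((Ioi 0).indicator g) where
  stronglyMeasurable := hg.stronglyMeasurable.indicator measurableSet_Ioi
  exists_norm_le R := by
    obtain ⟨C, hC⟩ := (isCompact_Icc (a := 0) (b := R)).exists_bound_of_continuousOn hg.continuousOn
    refine ⟨C.toNNReal, fun x hx => ?_⟩
    rcases le_or_gt x 0 with hx0 | hx0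
    · simp [hx0, causalKernel_of_nonpos 1 hx0]
    · rw [indicator_of_mem (mem_Ioi.2 hx0), causalKernel_one_of_pos hx0, mul_one]
      exact (hC x ⟨hx0.le, hx⟩).trans (Real.le_coe_toNNReal C)

namespace KernelDominated

variable {a b c : ℝ} {f : ℝ → ℝ} {g h : ℝ → E}

lemma eq_zero_of_nonpos (hg : KernelDominated b g) {x : ℝ} (hx : x ≤ 0) : g x = 0 := by
  obtain ⟨C, hC⟩ := hg.exists_norm_le 0
  simpa [causalKernel_of_nonpos b hx] using hC x hx

lemma indicator_Ioi_eq (hg : KernelDominated b g) : (Ioi 0).indicator g = g :=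
  indicator_eq_self.2 fun x hx => by
    by_contra! hx0
    exact hx (hg.eq_zero_of_nonpos (notMem_Ioi.1 hx0))

lemma norm (hg : KernelDominated b g) : KernelDominated b fun x => ‖g x‖ :=
  ⟨hg.stronglyMeasurable.norm, fun R => by simpa using hg.exists_norm_le R⟩

lemma add (hg : KernelDominated b g) (hh : KernelDominated b h) : KernelDominated b (g + h) := by
  refine ⟨hg.stronglyMeasurable.add hh.stronglyMeasurable, fun R => ?_⟩
  obtain ⟨C, hC⟩ := hg.exists_norm_le R
  obtain ⟨D, hD⟩ := hh.exists_norm_le R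
  refine ⟨C + D, fun x hx => (norm_add_le _ _).trans ?_⟩
  rw [NNReal.coe_add, add_mul]
  exact add_le_add (hC x hx) (hD x hx)

lemma mono (hg : KernelDominated b g) (ha : 0 < a) (hab : a ≤ b) : KernelDominated a g := by
  refine ⟨hg.stronglyMeasurable, fun R => ?_⟩
  obtain ⟨C, hC⟩ := hg.exists_norm_le R
  obtain ⟨D, hD⟩ := exists_causalKernel_le_mul ha hab R
  refine ⟨C * D, fun x hx => (hC x hx).trans ?_⟩
  rw [NNReal.coe_mul, mul_assoc]
  exact mul_le_mul_of_nonneg_left (hD x hx) C.coe_nonneg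

lemma integrableOn_Iic (hg : KernelDominated b g) (hb : 0 < b) (R : ℝ) :
    IntegrableOn g (Iic R) := by
  obtain ⟨C, hC⟩ := hg.exists_norm_le R
  refine ((integrableOn_Iic_causalKernel hb R).const_mul (C : ℝ)).mono'
    hg.stronglyMeasurable.aestronglyMeasurable ?_
  filter_upwards [ae_restrict_mem measurableSet_Iic] with x hx using hC x hx

variable [NormedSpace ℝ E]

lemma smul_const (hf : KernelDominated b f) (e : E) : KernelDominated b fun x => f x • e := by
  refine ⟨hf.stronglyMeasurable.smul_const e, fun R => ?_⟩
  obtain ⟨C, hC⟩ := hf.exists_norm_le R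
  refine ⟨C * ‖e‖₊, fun x hx => ?_⟩
  rw [norm_smul, NNReal.coe_mul, coe_nnnorm, mul_right_comm]
  exact mul_le_mul_of_nonneg_right (hC x hx) (norm_nonneg e)

lemma exists_norm_convolution_integrand_le (hf : KernelDominated a f) (hg : KernelDominated b g)
    (R : ℝ) : ∃ C : ℝ≥0, ∀ x ≤ R, ∀ t,
      ‖f t • g (x - t)‖ ≤ C * (causalKernel a t * causalKernel b (x - t)) := by
  obtain ⟨C, hC⟩ := hf.exists_norm_le R
  obtain ⟨D, hD⟩ := hg.exists_norm_le R
  refine ⟨C * D, fun x hx t => ?_⟩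
  rcases le_or_gt t 0 with ht | ht
  · simp [hf.eq_zero_of_nonpos ht, causalKernel_of_nonpos a ht]
  rcases le_or_gt (x - t) 0 with hxt | hxt
  · simp [hg.eq_zero_of_nonpos hxt, causalKernel_of_nonpos b hxt]
  have hft := hC t (by linarith)
  rw [norm_smul, NNReal.coe_mul, mul_mul_mul_comm]
  exact mul_le_mul hft (hD (x - t) (by linarith)) (norm_nonneg _) ((norm_nonneg _).trans hft)

lemma stronglyMeasurable_convolution_integrand (hf : KernelDominated a f)
    (hg : KernelDominated b g) :
    StronglyMeasurable (Function.uncurry fun x t : ℝ => f t • g (x - t)) :=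
  (hf.stronglyMeasurable.comp_measurable measurable_snd).smul
    (hg.stronglyMeasurable.comp_measurable (measurable_fst.sub measurable_snd))

lemma convolutionExists (hf : KernelDominated a f) (hg : KernelDominated b g) (ha : 0 < a)
    (hb : 0 < b) : ConvolutionExists f g (ContinuousLinearMap.lsmul ℝ ℝ) := by
  intro x
  obtain ⟨C, hC⟩ := hf.exists_norm_convolution_integrand_le hg x
  exact ((convolutionExists_causalKernel ha hb x).integrable.const_mul (C : ℝ)).mono'
    ((hf.stronglyMeasurable_convolution_integrand hg).comp_measurable
      measurable_prodMk_left).aestronglyMeasurable (Eventually.of_forall (hC x le_rfl))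

lemma convolution (hf : KernelDominated a f) (hg : KernelDominated b g) (ha : 0 < a)
    (hb : 0 < b) : KernelDominated (a + b) (f ⋆ g) := by
  refine ⟨(hf.stronglyMeasurable_convolution_integrand hg).integral_prod_right, fun R => ?_⟩
  obtain ⟨C, hC⟩ := hf.exists_norm_convolution_integrand_le hg R
  refine ⟨C, fun x hx => ?_⟩
  rw [← causalKernel_convolution_causalKernel ha hb, convolution_lsmul, convolution_lsmul,
    ← integral_const_mul]
  exact norm_integral_le_of_norm_le
    ((convolutionExists_causalKernel ha hb x).integrable.const_mul (C : ℝ))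
    (Eventually.of_forall (hC x hx))

lemma convolution_apply (hf : KernelDominated a f) (hg : KernelDominated b g) {x : ℝ}
    (hx : 0 < x) : (f ⋆ g) x = ∫ t in (0 : ℝ)..x, f (x - t) • g t := by
  have h := congrFun (indicator_Ioi_convolution_indicator_Ioi f g) x
  rwa [hf.indicator_Ioi_eq, hg.indicator_Ioi_eq, indicator_of_mem (mem_Ioi.2 hx)] at h

lemma causalKernel_one_convolution_apply (hg : KernelDominated b g) {x : ℝ} (hx : 0 < x) :
    (causalKernel 1 ⋆ g) x = ∫ t in (0 : ℝ)..x, g t := by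
  rw [(kernelDominated_causalKernel one_pos).convolution_apply hg hx]
  refine intervalIntegral.integral_congr_Ioo_of_le hx.le fun t ht => ?_
  simp only [causalKernel_one_of_pos (sub_pos.2 ht.2), one_smul]

lemma convolution_assoc [CompleteSpace E] {f₁ f₂ : ℝ → ℝ} (hf₁ : KernelDominated a f₁)
    (hf₂ : KernelDominated b f₂) (hg : KernelDominated c g) (ha : 0 < a) (hb : 0 < b)
    (hc : 0 < c) : (f₁ ⋆ f₂) ⋆ g = f₁ ⋆ (f₂ ⋆ g) := by
  ext x
  exact MeasureTheory.convolution_assoc _ _ _ _ (fun r s e => mul_smul r s e)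
    hf₁.stronglyMeasurable.aestronglyMeasurable hf₂.stronglyMeasurable.aestronglyMeasurable
    hg.stronglyMeasurable.aestronglyMeasurable
    (Eventually.of_forall (hf₁.convolutionExists hf₂ ha hb))
    (Eventually.of_forall (hf₂.norm.convolutionExists hg.norm hb hc))
    (hf₁.norm.convolutionExists (hf₂.norm.convolution hg.norm hb hc) ha (add_pos hb hc) x)

lemma continuous_convolution_indicator_Ioi (hf : KernelDominated b f) (hb : 0 < b)
    (hg : Continuous g) : Continuous (f ⋆ (Ioi 0).indicator g) := by
  have hg₁ := kernelDominated_one_indicator_Ioi hg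
  refine continuous_iff_continuousAt.2 fun x₀ => ?_
  obtain ⟨C, hC⟩ := hg₁.exists_norm_le (x₀ + 1)
  have hC' : ∀ x ≤ x₀ + 1, ‖(Ioi 0).indicator g x‖ ≤ C := fun x hx => by
    rcases le_or_gt x 0 with hx0 | hx0
    · simp [hg₁.eq_zero_of_nonpos hx0]
    · simpa [causalKernel_one_of_pos hx0] using hC x hx
  refine continuousAt_of_dominated
    (bound := (Iic (x₀ + 1)).indicator fun t => ‖f t‖ * C)
    (Eventually.of_forall fun x =>
      ((hf.stronglyMeasurable_convolution_integrand hg₁).comp_measurable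
        measurable_prodMk_left).aestronglyMeasurable) ?_
    ((integrable_indicator_iff measurableSet_Iic).2
      ((hf.integrableOn_Iic hb _).norm.mul_const _)) ?_
  · filter_upwards [Iio_mem_nhds (lt_add_one x₀)] with x (hx : x < x₀ + 1)
    refine Eventually.of_forall fun t => ?_
    rcases le_or_gt t 0 with ht | ht
    · simp [hf.eq_zero_of_nonpos ht, indicator_apply]
    by_cases htx : t ≤ x₀ + 1
    · rw [indicator_of_mem (mem_Iic.2 htx)]
      exact (norm_smul_le _ _).trans
        (mul_le_mul_of_nonneg_left (hC' _ (by linarith)) (norm_nonneg _))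
    · simp [hg₁.eq_zero_of_nonpos (show x - t ≤ 0 by linarith), htx]
  · filter_upwards [compl_mem_ae_iff.2 (measure_singleton (μ := volume) x₀)] with t ht
    have hgt : ContinuousAt ((Ioi 0).indicator g) (x₀ - t) :=
      hg.continuousOn.continuousAt_indicator (by simpa [sub_eq_zero, eq_comm] using ht)
    have hsub : ContinuousAt (fun x => x - t) x₀ := by fun_prop
    exact continuousAt_const.smul (hgt.comp (f := fun x => x - t) hsub)

end KernelDominated

variable [NormedSpace ℝ E]

/-- The Riemann–Liouville integral of order `b` of the measure `c δ₀ + g(t) dt` on the positive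
half-line. For `b = 1` this is the function with initial value `c` and derivative `g`, and for
`b = 1 - α` it is the Riemann–Liouville derivative of order `α` of that function. -/
noncomputable def rlPotential (c : E) (g : ℝ → E) (b : ℝ) : ℝ → E :=
  (fun x => causalKernel b x • c) + causalKernel b ⋆ (Ioi 0).indicator g

section rlPotential

variable {a b : ℝ} {g : ℝ → E}

lemma kernelDominated_rlPotential (c : E) (hg : Continuous g) (hb : 0 < b) :
    KernelDominated b (rlPotential c g b) := by
  have hk := kernelDominated_causalKernel hb
  have hkg := hk.convolution (kernelDominated_one_indicator_Ioi hg) hb one_pos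
  exact (hk.smul_const c).add (hkg.mono hb (by linarith))

lemma continuousOn_rlPotential (c : E) (hg : Continuous g) (hb : 0 < b) :
    ContinuousOn (rlPotential c g b) (Ioi 0) := by
  have hk : ContinuousOn (causalKernel b) (Ioi 0) :=
    (continuousOn_rlKernel b).congr fun x hx => causalKernel_of_pos b hx
  exact (hk.smul continuousOn_const).add
    ((kernelDominated_causalKernel hb).continuous_convolution_indicator_Ioi hb hg).continuousOn

lemma causalKernel_convolution_rlPotential [CompleteSpace E] (c : E) (hg : Continuous g)
    (ha : 0 < a) (hb : 0 < b) :
    causalKernel a ⋆ rlPotential c g b = rlPotential c g (a + b) := by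
  have hka := kernelDominated_causalKernel ha
  have hkb := kernelDominated_causalKernel hb
  have hg₁ := kernelDominated_one_indicator_Ioi hg
  have hatom : causalKernel a ⋆ (fun x => causalKernel b x • c) =
      fun x => causalKernel (a + b) x • c := by
    ext x
    simp only [← causalKernel_convolution_causalKernel ha hb, convolution_lsmul, smul_assoc,
      ← integral_smul_const]
  rw [rlPotential, (hka.convolutionExists (hkb.smul_const c) ha hb).distrib_add
      (hka.convolutionExists (hkb.convolution hg₁ hb one_pos) ha (by linarith)), hatom,
    ← hka.convolution_assoc hkb hg₁ ha hb one_pos, causalKernel_convolution_causalKernel ha hb,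
    rlPotential]

lemma hasDerivAt_rlPotential_one_add [CompleteSpace E] (c : E) (hg : Continuous g) (hb : 0 < b)
    {t : ℝ} (ht : 0 < t) : HasDerivAt (rlPotential c g (1 + b)) (rlPotential c g b t) t := by
  have hd := kernelDominated_rlPotential c hg hb
  have hint : IntervalIntegrable (rlPotential c g b) volume 0 t :=
    (intervalIntegrable_iff_integrableOn_Ioc_of_le ht.le).2
      ((hd.integrableOn_Iic hb t).mono_set Ioc_subset_Iic_self)
  refine (intervalIntegral.integral_hasDerivAt_right hint
    hd.stronglyMeasurable.stronglyMeasurableAtFilter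
    ((continuousOn_rlPotential c hg hb).continuousAt (Ioi_mem_nhds ht))).congr_of_eventuallyEq ?_
  filter_upwards [Ioi_mem_nhds ht] with x (hx : 0 < x)
  rw [← causalKernel_convolution_rlPotential c hg one_pos hb,
    hd.causalKernel_one_convolution_apply hx]

lemma rlPotential_one_apply (c : E) (hg : Continuous g) {x : ℝ} (hx : 0 < x) :
    rlPotential c g 1 x = c + ∫ t in (0 : ℝ)..x, g t := by
  have hind : ∫ t in (0 : ℝ)..x, (Ioi 0).indicator g t = ∫ t in (0 : ℝ)..x, g t :=
    intervalIntegral.integral_congr_Ioo_of_le hx.le fun t ht => indicator_of_mem ht.1 _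
  rw [rlPotential, Pi.add_apply, causalKernel_one_of_pos hx, one_smul,
    (kernelDominated_one_indicator_Ioi hg).causalKernel_one_convolution_apply hx, hind]

lemma exists_eqOn_rlPotential_one [CompleteSpace E] {T : ℝ} {w : ℝ → E} (hT : 0 < T)
    (hw : ContDiffOn ℝ 1 w (Icc 0 T)) :
    ∃ g, Continuous g ∧ EqOn w (rlPotential (w 0) g 1) (Ioo 0 T) := by
  have hw' : ContinuousOn (derivWithin w (Icc 0 T)) (Icc 0 T) :=
    hw.continuousOn_derivWithin (uniqueDiffOn_Icc hT) le_rfl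
  obtain ⟨g, hg, hgw⟩ : ∃ g, Continuous g ∧ EqOn g (derivWithin w (Icc 0 T)) (Icc 0 T) :=
    ⟨_, hw'.domRestrict.Icc_extend', fun x hx => IccExtend_of_mem hT.le _ hx⟩
  have hderiv : EqOn g (deriv w) (Ioo 0 T) := fun x hx =>
    (hgw (Ioo_subset_Icc_self hx)).trans (derivWithin_of_mem_nhds (Icc_mem_nhds hx.1 hx.2))
  refine ⟨g, hg, fun x hx => ?_⟩
  rw [rlPotential_one_apply _ hg hx.1, intervalIntegral.integral_congr_Ioo_of_le hx.1.le
      (hderiv.mono (Ioo_subset_Ioo_right hx.2.le)),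
    intervalIntegral.integral_deriv_of_contDiffOn_Icc
      (hw.mono (Icc_subset_Icc_right hx.2.le)) hx.1.le, add_sub_cancel]

variable {T : ℝ}

lemma integral_rlKernel_smul_eq_rlPotential [CompleteSpace E] {c : E} {w : ℝ → E}
    (hg : Continuous g) (hw : EqOn w (rlPotential c g 1) (Ioo 0 T)) (hb : 0 < b) {x : ℝ}
    (hx : x ∈ Ioo 0 T) :
    ∫ s in (0 : ℝ)..x, rlKernel b (x - s) • w s = rlPotential c g (1 + b) x := by
  rw [add_comm, ← causalKernel_convolution_rlPotential c hg hb one_pos,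
    (kernelDominated_causalKernel hb).convolution_apply
      (kernelDominated_rlPotential c hg one_pos) hx.1]
  refine intervalIntegral.integral_congr_Ioo_of_le hx.1.le fun s hs => ?_
  simp only [causalKernel_of_pos b (sub_pos.2 hs.2), hw ⟨hs.1, hs.2.trans hx.2⟩]

lemma hasDerivAt_integral_rlKernel_left [CompleteSpace E] {c : E} {w : ℝ → E}
    (hg : Continuous g) (hw : EqOn w (rlPotential c g 1) (Ioo 0 T)) (hb : 0 < b) {t : ℝ}
    (ht : t ∈ Ioo 0 T) :
    HasDerivAt (fun τ => ∫ s in (0 : ℝ)..τ, rlKernel b (τ - s) • w s) (rlPotential c g b t) t := by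
  refine (hasDerivAt_rlPotential_one_add c hg hb ht.1).congr_of_eventuallyEq ?_
  filter_upwards [Ioo_mem_nhds ht.1 ht.2] with x hx
  exact integral_rlKernel_smul_eq_rlPotential hg hw hb hx

lemma hasDerivAt_integral_rlKernel_right [CompleteSpace E] {c : E} {v : ℝ → E}
    (hg : Continuous g) (hv : EqOn (fun s => v (T - s)) (rlPotential c g 1) (Ioo 0 T))
    (hb : 0 < b) {t : ℝ} (ht : t ∈ Ioo 0 T) :
    HasDerivAt (fun τ => ∫ s in τ..T, rlKernel b (s - τ) • v s)
      (-rlPotential c g b (T - t)) t := by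
  have hreflect : ∀ τ, ∫ s in τ..T, rlKernel b (s - τ) • v s =
      ∫ s in (0 : ℝ)..(T - τ), rlKernel b (T - τ - s) • v (T - s) := fun τ => by
    have h := intervalIntegral.integral_comp_sub_left (a := 0) (b := T - τ)
      (fun s => rlKernel b (s - τ) • v s) T
    simp only [sub_sub_cancel, sub_zero] at h
    simp only [← h, sub_right_comm]
  simp only [hreflect]
  exact (hasDerivAt_integral_rlKernel_left hg hv hb
    ⟨sub_pos.2 ht.2, sub_lt_self T ht.1⟩).comp_const_sub T t

variable {h : ℝ → ℝ}

lemma intervalIntegrable_rlPotential_sub_smul (d : ℝ) (c : E) (hh : Continuous h)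
    (hg : Continuous g) (ha : 0 < a) (hb : 0 < b) (x : ℝ) :
    IntervalIntegrable (fun t => rlPotential d h a (x - t) • rlPotential c g b t) volume 0 x :=
  ((kernelDominated_rlPotential d hh ha).convolutionExists
    (kernelDominated_rlPotential c hg hb) ha hb x).integrable_swap.intervalIntegrable

variable [CompleteSpace E]

lemma rlPotential_add_convolution_rlPotential (d : ℝ) (c : E) (hh : Continuous h)
    (hg : Continuous g) {r : ℝ} (ha : 0 < a) (hr : 0 < r) (hb : 0 < b) :
    rlPotential d h (a + r) ⋆ rlPotential c g b = rlPotential d h a ⋆ rlPotential c g (r + b) := by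
  have hkr := kernelDominated_causalKernel hr
  have hψ := kernelDominated_rlPotential d hh ha
  have hφ := kernelDominated_rlPotential c hg hb
  rw [add_comm a r, ← causalKernel_convolution_rlPotential d hh hr ha, real_convolution_comm,
    hψ.convolution_assoc hkr hφ ha hr hb, causalKernel_convolution_rlPotential c hg hr hb]

lemma rlPotential_convolution_rlPotential_congr (d : ℝ) (c : E) (hh : Continuous h)
    (hg : Continuous g) {a' b' : ℝ} (ha : 0 < a) (hb : 0 < b) (ha' : 0 < a') (hb' : 0 < b')
    (hab : a + b = a' + b') :
    rlPotential d h a ⋆ rlPotential c g b = rlPotential d h a' ⋆ rlPotential c g b' := by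
  wlog hle : a' ≤ a generalizing a b a' b'
  · exact (this ha' hb' ha hb hab.symm (le_of_not_ge hle)).symm
  rcases hle.eq_or_lt with rfl | hlt
  · rw [add_left_cancel hab]
  · obtain ⟨r, hr, rfl⟩ := exists_pos_add_of_lt' hlt
    obtain rfl : b' = r + b := by linarith
    exact rlPotential_add_convolution_rlPotential d c hh hg ha' hr hb

lemma integral_rlPotential_sub_smul_congr (d : ℝ) (c : E) (hh : Continuous h)
    (hg : Continuous g) {a' b' : ℝ} (ha : 0 < a) (hb : 0 < b) (ha' : 0 < a') (hb' : 0 < b')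
    (hab : a + b = a' + b') {x : ℝ} (hx : 0 < x) :
    ∫ t in (0 : ℝ)..x, rlPotential d h a (x - t) • rlPotential c g b t =
      ∫ t in (0 : ℝ)..x, rlPotential d h a' (x - t) • rlPotential c g b' t := by
  have hψ {r : ℝ} (hr : 0 < r) := kernelDominated_rlPotential d hh hr
  have hφ {r : ℝ} (hr : 0 < r) := kernelDominated_rlPotential c hg hr
  rw [← (hψ ha).convolution_apply (hφ hb) hx, ← (hψ ha').convolution_apply (hφ hb') hx,
    rlPotential_convolution_rlPotential_congr d c hh hg ha hb ha' hb' hab]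

end rlPotential

/-- A negative order of differentiation stands for fractional integration of the opposite order. -/
theorem rl_integration_by_parts_split_general [CompleteSpace E] (α₁ α₂ T : ℝ) (h₁ : α₁ < 1)
    (h₂ : α₂ < 1) (hsum : α₁ + α₂ < 1) (hT : 0 < T) (v : ℝ → ℝ) (w : ℝ → E)
    (hv : ContDiffOn ℝ 1 v (Icc 0 T)) (hw : ContDiffOn ℝ 1 w (Icc 0 T)) :
    ∃ (DLα DLα₁ : ℝ → E) (DRα₂ : ℝ → ℝ),
      (∀ t ∈ Ioo 0 T, HasDerivAt
        (fun τ => ∫ s in (0 : ℝ)..τ, rlKernel (1 - (α₁ + α₂)) (τ - s) • w s) (DLα t) t) ∧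
      (∀ t ∈ Ioo 0 T, HasDerivAt
        (fun τ => ∫ s in (0 : ℝ)..τ, rlKernel (1 - α₁) (τ - s) • w s) (DLα₁ t) t) ∧
      (∀ t ∈ Ioo 0 T, HasDerivAt
        (fun τ => ∫ s in τ..T, rlKernel (1 - α₂) (s - τ) • v s) (-DRα₂ t) t) ∧
      IntervalIntegrable (fun t => v t • DLα t) volume 0 T ∧
      IntervalIntegrable (fun t => DRα₂ t • DLα₁ t) volume 0 T ∧
      ∫ t in (0 : ℝ)..T, v t • DLα t = ∫ t in (0 : ℝ)..T, DRα₂ t • DLα₁ t := by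
  obtain ⟨g, hg, hwg⟩ := exists_eqOn_rlPotential_one hT hw
  have hv_refl : ContDiffOn ℝ 1 (fun s => v (T - s)) (Icc 0 T) :=
    hv.comp (contDiff_const.sub contDiff_id).contDiffOn fun s hs =>
      ⟨sub_nonneg.2 hs.2, sub_le_self T hs.1⟩
  obtain ⟨h, hh, hvh⟩ := exists_eqOn_rlPotential_one hT hv_refl
  have hα : 0 < 1 - (α₁ + α₂) := sub_pos.2 hsum
  have hα₁ : 0 < 1 - α₁ := sub_pos.2 h₁
  have hα₂ : 0 < 1 - α₂ := sub_pos.2 h₂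
  let φ := rlPotential (w 0) g
  let ψ := rlPotential (v (T - 0)) h
  have hvψ : EqOn (fun t => ψ 1 (T - t) • φ (1 - (α₁ + α₂)) t)
      (fun t => v t • φ (1 - (α₁ + α₂)) t) (Ioo 0 T) := fun t ht => by
    simp only [ψ, ← hvh ⟨sub_pos.2 ht.2, sub_lt_self T ht.1⟩, sub_sub_cancel]
  refine ⟨φ (1 - (α₁ + α₂)), φ (1 - α₁), fun t => ψ (1 - α₂) (T - t),
    fun t => hasDerivAt_integral_rlKernel_left hg hwg hα,
    fun t => hasDerivAt_integral_rlKernel_left hg hwg hα₁,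
    fun t => hasDerivAt_integral_rlKernel_right hh hvh hα₂,
    (intervalIntegrable_rlPotential_sub_smul _ _ hh hg one_pos hα T).congr_uIoo
      (by rwa [uIoo_of_le hT.le]),
    intervalIntegrable_rlPotential_sub_smul _ _ hh hg hα₂ hα₁ T, ?_⟩
  rw [← intervalIntegral.integral_congr_Ioo_of_le hT.le hvψ]
  exact integral_rlPotential_sub_smul_congr _ _ hh hg one_pos hα hα₂ hα₁ (by ring) hT

end

/-- Fractional integration by parts (splitting of orders):
`∫_0^T v (D_{0+}^α w) = ∫_0^T (D_{0+}^{α₁} w)(D_{T-}^{α₂} v)` for `α₁ + α₂ = α < 1`. -/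
theorem rl_integration_by_parts_split (α α₁ α₂ T : ℝ)
    (hα0 : 0 < α) (hα1 : α < 1) (h₁ : 0 < α₁) (h₂ : 0 < α₂) (hsum : α₁ + α₂ = α)
    (hT : 0 < T)
    (v w : ℝ → ℝ)
    (hv : ContDiffOn ℝ 1 v (Set.Icc 0 T)) (hw : ContDiffOn ℝ 1 w (Set.Icc 0 T)) :
    ∃ DLα DLα₁ DRα₂ : ℝ → ℝ,
      (∀ t ∈ Set.Ioo (0 : ℝ) T,
        HasDerivAt (fun τ => ∫ s in (0:ℝ)..τ, rlKernel (1 - α) (τ - s) * w s) (DLα t) t) ∧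
      (∀ t ∈ Set.Ioo (0 : ℝ) T,
        HasDerivAt (fun τ => ∫ s in (0:ℝ)..τ, rlKernel (1 - α₁) (τ - s) * w s) (DLα₁ t) t) ∧
      (∀ t ∈ Set.Ioo (0 : ℝ) T,
        HasDerivAt (fun τ => ∫ s in τ..T, rlKernel (1 - α₂) (s - τ) * v s) (-(DRα₂ t)) t) ∧
      IntervalIntegrable (fun t => v t * DLα t) MeasureTheory.volume 0 T ∧
      IntervalIntegrable (fun t => DLα₁ t * DRα₂ t) MeasureTheory.volume 0 T ∧
      (∫ t in (0:ℝ)..T, v t * DLα t) = ∫ t in (0:ℝ)..T, DLα₁ t * DRα₂ t := by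
  subst hsum
  simpa only [smul_eq_mul, mul_comm] using
    rl_integration_by_parts_split_general α₁ α₂ T (by linarith) (by linarith) hα1 hT v w hv hw
end

section
/- Let 0 < α < 1/2. There exist constants c₁, c₂, c₃ > 0 depending only on α such that for every T > 0 and every infinitely differentiable v : ℝ → ℝ with compact support contained in the open interval (0,T): (i) ∫_0^T ((D_{0+}^α v)(t))² dt ≤ c₁ · |∫_0^T (D_{0+}^α v)(t) · (D_{T−}^α v)(t) dt|; (ii) |∫_0^T (D_{0+}^α v)(t) · (D_{T−}^α v)(t) dt| ≤ c₂ · ∫_0^T ((D_{T−}^α v)(t))² dt; and (iii) ∫_0^T ((D_{T−}^α v)(t))² dt ≤ c₃ · ∫_0^T ((D_{0+}^α v)(t))² dt. -/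
/-!
For `v` supported in `[0, T]`, the functions `D_{0+}^α v` and `-D_{T-}^α v` on `(0, T)` are, up to
the factor `1 / Γ(1 - α)`, the convolutions `L` and `R` of `w = v'` with the truncated power
`t₊ ^ (-α)` and with its mirror image. Since `∫ w = 0`, Fubini's theorem turns `∫ L²`, `∫ R²` and
`∫ L R` over the whole line into multiples of the same energy `∬ |s - r| ^ (1 - 2α) w(s) w(r)`: the
integral over `t` of `((t - s)₊ ^ (-α) - (t - r)₊ ^ (-α))²` or of `(t - s)₊ ^ (-α) (r - t)₊ ^ (-α)`
is homogeneous of degree `1 - 2α` in `r - s`, and the latter is a beta integral. Hence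
`∫ L² = ∫ R² = -c ∫ L R`. Passing to `[0, T]` does not change `∫ L R`, because `L` vanishes to the
left of `0` and `R` to the right of `T`, and can only decrease `∫ L²` and `∫ R²`. The remaining
upper bounds on `|∫ L R|` follow from the Cauchy–Schwarz inequality.
-/

open MeasureTheory Set Filter Asymptotics
open ProbabilityTheory (beta beta_pos betaPDFReal betaPDFReal_pos measurable_betaPDFReal
  lintegral_betaPDF_eq_one)

/-- The truncated power `u ↦ u₊ ^ γ`; it vanishes for `u ≤ 0`, also when `γ ≤ 0`. -/
noncomputable def truncPow (γ u : ℝ) : ℝ := (Ioi (0 : ℝ)).indicator (· ^ γ) u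

section TruncPow

variable {γ δ u : ℝ}

lemma truncPow_of_pos (hu : 0 < u) : truncPow γ u = u ^ γ :=
  indicator_of_mem (mem_Ioi.2 hu) _

lemma truncPow_of_nonpos (hu : u ≤ 0) : truncPow γ u = 0 :=
  indicator_of_notMem (notMem_Ioi.2 hu) _

lemma truncPow_nonneg (γ u : ℝ) : 0 ≤ truncPow γ u :=
  indicator_nonneg (fun _ hx => Real.rpow_nonneg (le_of_lt hx) _) u

@[fun_prop]
lemma measurable_truncPow (γ : ℝ) : Measurable (truncPow γ) :=
  Measurable.indicator (by fun_prop) measurableSet_Ioi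

lemma continuous_truncPow (hγ : 0 < γ) : Continuous (truncPow γ) := by
  have hmax : truncPow γ = fun u => max u 0 ^ γ := by
    ext u
    rcases lt_or_ge 0 u with hu | hu
    · rw [truncPow_of_pos hu, max_eq_left hu.le]
    · rw [truncPow_of_nonpos hu, max_eq_right hu, Real.zero_rpow hγ.ne']
  rw [hmax]
  exact (continuous_id.max continuous_const).rpow_const fun _ => Or.inr hγ.le

lemma truncPow_sq (γ u : ℝ) : truncPow γ u ^ 2 = truncPow (2 * γ) u := by
  rcases lt_or_ge 0 u with hu | hu
  · rw [truncPow_of_pos hu, truncPow_of_pos hu, mul_comm, Real.rpow_mul hu.le, Real.rpow_two]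
  · rw [truncPow_of_nonpos hu, truncPow_of_nonpos hu, zero_pow two_ne_zero]

lemma truncPow_eq_rpow_mul_truncPow_div {a : ℝ} (ha : 0 < a) (γ u : ℝ) :
    truncPow γ u = a ^ γ * truncPow γ (u / a) := by
  rcases lt_or_ge 0 u with hu | hu
  · rw [truncPow_of_pos hu, truncPow_of_pos (div_pos hu ha), Real.div_rpow hu.le ha.le,
      mul_div_cancel₀ _ (Real.rpow_pos_of_pos ha γ).ne']
  · rw [truncPow_of_nonpos hu, truncPow_of_nonpos (div_nonpos_of_nonpos_of_nonneg hu ha.le),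
      mul_zero]

lemma truncPow_add_truncPow_neg (hγ : γ ≠ 0) (u : ℝ) :
    truncPow γ u + truncPow γ (-u) = |u| ^ γ := by
  rcases lt_trichotomy u 0 with hu | rfl | hu
  · rw [truncPow_of_nonpos hu.le, truncPow_of_pos (neg_pos.2 hu), zero_add, abs_of_neg hu]
  · simp [truncPow_of_nonpos, Real.zero_rpow hγ]
  · rw [truncPow_of_pos hu, truncPow_of_nonpos (neg_nonpos.2 hu.le), add_zero, abs_of_pos hu]

lemma locallyIntegrable_truncPow_sub (hγ : -1 < γ) (s : ℝ) :
    LocallyIntegrable fun t => truncPow γ (t - s) := by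
  have hInd : (fun t => truncPow γ (t - s)) = (Ioi s).indicator fun t => (t - s) ^ γ := by
    ext t
    simp only [truncPow, indicator, mem_Ioi, sub_pos]
  rw [hInd]
  refine LocallyIntegrable.indicator (fun x => ?_) measurableSet_Ioi
  refine ⟨Ioc (x - 1) (x + 1), Ioc_mem_nhds (by linarith) (by linarith), ?_⟩
  have hInt := intervalIntegral.intervalIntegrable_rpow' hγ (a := x - 1 - s) (b := x + 1 - s)
  simpa using (hInt.comp_sub_right s).1

lemma locallyIntegrable_truncPow (hγ : -1 < γ) : LocallyIntegrable (truncPow γ) := by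
  simpa using locallyIntegrable_truncPow_sub hγ 0

lemma integrable_comp_sub_div {F : ℝ → ℝ} (hF : Integrable F) (s : ℝ) {a : ℝ} (ha : a ≠ 0) :
    Integrable fun t => F ((t - s) / a) :=
  (hF.comp_div ha).comp_sub_right s

lemma integral_comp_sub_div (F : ℝ → ℝ) (s a : ℝ) :
    ∫ t, F ((t - s) / a) = |a| * ∫ t, F t := by
  rw [integral_sub_right_eq_self (fun t => F (t / a)) s, Measure.integral_comp_div, smul_eq_mul]

lemma betaPDFReal_nonneg (hγ : 0 < γ) (hδ : 0 < δ) (x : ℝ) : 0 ≤ betaPDFReal γ δ x := by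
  by_cases hx : 0 < x ∧ x < 1
  · exact (betaPDFReal_pos hx.1 hx.2 hγ hδ).le
  · rw [betaPDFReal, if_neg hx]

lemma integrable_betaPDFReal (hγ : 0 < γ) (hδ : 0 < δ) : Integrable (betaPDFReal γ δ) := by
  refine ⟨(measurable_betaPDFReal γ δ).aestronglyMeasurable, ?_⟩
  rw [hasFiniteIntegral_iff_ofReal (Eventually.of_forall (betaPDFReal_nonneg hγ hδ))]
  exact (lintegral_betaPDF_eq_one hγ hδ).trans_lt ENNReal.one_lt_top

lemma integral_betaPDFReal (hγ : 0 < γ) (hδ : 0 < δ) : ∫ x, betaPDFReal γ δ x = 1 := by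
  rw [integral_eq_lintegral_of_nonneg_ae (Eventually.of_forall (betaPDFReal_nonneg hγ hδ))
    (measurable_betaPDFReal γ δ).aestronglyMeasurable]
  exact congrArg ENNReal.toReal (lintegral_betaPDF_eq_one hγ hδ)

lemma truncPow_mul_truncPow_one_sub (hγ : -1 < γ) (hδ : -1 < δ) (t : ℝ) :
    truncPow γ t * truncPow δ (1 - t) =
      beta (γ + 1) (δ + 1) * betaPDFReal (γ + 1) (δ + 1) t := by
  have hB : beta (γ + 1) (δ + 1) ≠ 0 := (beta_pos (by linarith) (by linarith)).ne'
  by_cases ht : 0 < t ∧ t < 1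
  · rw [truncPow_of_pos ht.1, truncPow_of_pos (sub_pos.2 ht.2), betaPDFReal, if_pos ht]
    field_simp
    simp only [add_sub_cancel_right]
  · rw [betaPDFReal, if_neg ht, mul_zero]
    rcases not_and_or.1 ht with h | h
    · rw [truncPow_of_nonpos (not_lt.1 h), zero_mul]
    · rw [truncPow_of_nonpos (u := 1 - t) (by linarith), mul_zero]

lemma truncPow_sub_mul_truncPow_sub_eq (γ δ t : ℝ) {s r : ℝ} (hsr : s < r) :
    truncPow γ (t - s) * truncPow δ (r - t) = (r - s) ^ (γ + δ) *
      (truncPow γ ((t - s) / (r - s)) * truncPow δ (1 - (t - s) / (r - s))) := by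
  have ha : 0 < r - s := sub_pos.2 hsr
  have hdiv : (r - t) / (r - s) = 1 - (t - s) / (r - s) := by
    field_simp
    ring
  rw [truncPow_eq_rpow_mul_truncPow_div ha γ, truncPow_eq_rpow_mul_truncPow_div ha δ (r - t),
    hdiv, Real.rpow_add ha]
  ring

lemma truncPow_sub_mul_truncPow_sub_eq_zero (γ δ t : ℝ) {s r : ℝ} (hrs : r ≤ s) :
    truncPow γ (t - s) * truncPow δ (r - t) = 0 := by
  rcases le_total t s with h | h
  · rw [truncPow_of_nonpos (sub_nonpos.2 h), zero_mul]
  · rw [truncPow_of_nonpos (sub_nonpos.2 (hrs.trans h)), mul_zero]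

lemma integrable_truncPow_sub_mul_truncPow_sub (hγ : -1 < γ) (hδ : -1 < δ) (s r : ℝ) :
    Integrable fun t => truncPow γ (t - s) * truncPow δ (r - t) := by
  rcases le_or_gt r s with hrs | hsr
  · simp [truncPow_sub_mul_truncPow_sub_eq_zero γ δ _ hrs]
  · simp only [truncPow_sub_mul_truncPow_sub_eq γ δ _ hsr, truncPow_mul_truncPow_one_sub hγ hδ]
    have hpdf := integrable_betaPDFReal (γ := γ + 1) (δ := δ + 1) (by linarith) (by linarith)
    exact (integrable_comp_sub_div (hpdf.const_mul _) s (sub_pos.2 hsr).ne').const_mul _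

/-- Euler's beta integral. -/
lemma integral_truncPow_sub_mul_truncPow_sub (hγ : -1 < γ) (hδ : -1 < δ) (s r : ℝ) :
    ∫ t, truncPow γ (t - s) * truncPow δ (r - t) =
      beta (γ + 1) (δ + 1) * truncPow (γ + δ + 1) (r - s) := by
  rcases le_or_gt r s with hrs | hsr
  · simp only [truncPow_sub_mul_truncPow_sub_eq_zero γ δ _ hrs, integral_zero,
      truncPow_of_nonpos (sub_nonpos.2 hrs), mul_zero]
  · have ha : 0 < r - s := sub_pos.2 hsr
    simp only [truncPow_sub_mul_truncPow_sub_eq γ δ _ hsr, truncPow_mul_truncPow_one_sub hγ hδ,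
      integral_const_mul]
    rw [integral_comp_sub_div, integral_betaPDFReal (by linarith) (by linarith),
      truncPow_of_pos ha, abs_of_pos ha, Real.rpow_add_one ha.ne']
    ring

lemma abs_rpow_sub_rpow_sub_one_le {t : ℝ} (hγ : γ ≤ 1) (ht : 1 < t) :
    |t ^ γ - (t - 1) ^ γ| ≤ |γ| * (t - 1) ^ (γ - 1) := by
  have ht0 : 0 < t - 1 := sub_pos.2 ht
  have hderiv : ∀ x ∈ Icc (t - 1) t,
      HasDerivWithinAt (· ^ γ) (γ * x ^ (γ - 1)) (Icc (t - 1) t) x := fun x hx =>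
    (Real.hasDerivAt_rpow_const (Or.inl (ht0.trans_le hx.1).ne')).hasDerivWithinAt
  have hbound : ∀ x ∈ Icc (t - 1) t, ‖γ * x ^ (γ - 1)‖ ≤ |γ| * (t - 1) ^ (γ - 1) := fun x hx => by
    rw [norm_mul, Real.norm_eq_abs, Real.norm_of_nonneg (by have := ht0.trans_le hx.1; positivity)]
    gcongr ?_ * ?_
    exact Real.rpow_le_rpow_of_nonpos ht0 hx.1 (by linarith)
  simpa using (convex_Icc (t - 1) t).norm_image_sub_le_of_norm_hasDerivWithin_le hderiv hbound
    (left_mem_Icc.2 (by linarith)) (right_mem_Icc.2 (by linarith))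

lemma isBigO_truncPow_sub_sq_atTop (hγ : γ ≤ 1) :
    (fun t => (truncPow γ t - truncPow γ (t - 1)) ^ 2) =O[atTop]
      fun t => (t - 1) ^ (2 * γ - 2) := by
  refine IsBigO.of_bound (γ ^ 2) ?_
  filter_upwards [eventually_gt_atTop 1] with t ht
  have ht0 : 0 < t - 1 := sub_pos.2 ht
  rw [truncPow_of_pos (by linarith), truncPow_of_pos ht0, Real.norm_of_nonneg (sq_nonneg _),
    Real.norm_of_nonneg (by positivity), ← sq_abs, ← sq_abs γ,
    show 2 * γ - 2 = (γ - 1) * (2 : ℕ) by push_cast; ring, Real.rpow_mul_natCast ht0.le, ← mul_pow]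
  gcongr
  exact abs_rpow_sub_rpow_sub_one_le hγ ht

lemma integrable_truncPow_sub_sq (hγ : |γ| < 1 / 2) :
    Integrable fun t => (truncPow γ t - truncPow γ (t - 1)) ^ 2 := by
  obtain ⟨hγl, hγu⟩ := abs_lt.1 hγ
  have hloc : LocallyIntegrable fun t => (truncPow γ t - truncPow γ (t - 1)) ^ 2 := by
    have h2γ : -1 < 2 * γ := by linarith
    refine ((locallyIntegrable_truncPow h2γ).add
      (locallyIntegrable_truncPow_sub h2γ 1)).mono (by fun_prop) (Eventually.of_forall fun t => ?_)
    rw [Pi.add_apply, ← truncPow_sq, ← truncPow_sq, Real.norm_of_nonneg (by positivity),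
      Real.norm_of_nonneg (by positivity)]
    nlinarith [mul_nonneg (truncPow_nonneg γ t) (truncPow_nonneg γ (t - 1))]
  have hbot : (fun t => (truncPow γ t - truncPow γ (t - 1)) ^ 2) =O[atBot] fun _ => (0 : ℝ) := by
    refine EventuallyEq.isBigO ?_
    filter_upwards [eventually_le_atBot 0] with t ht
    rw [truncPow_of_nonpos ht, truncPow_of_nonpos (by linarith), sub_zero, zero_pow two_ne_zero]
  have htop : IntegrableAtFilter (fun t : ℝ => (t - 1) ^ (2 * γ - 2)) atTop :=
    ⟨Ioi 2, Ioi_mem_atTop 2,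
      integrableOn_add_rpow_Ioi_of_lt (m := -1) (by linarith) (by norm_num)⟩
  exact hloc.integrable_of_isBigO_atBot_atTop hbot ⟨univ, univ_mem, integrableOn_zero⟩
    (isBigO_truncPow_sub_sq_atTop (by linarith)) htop

/-- The squared `L²` distance between `t₊ ^ γ` and its unit translate. By homogeneity it determines
the distance between any two translates. -/
noncomputable def incrementConst (γ : ℝ) : ℝ := ∫ t, (truncPow γ t - truncPow γ (t - 1)) ^ 2

lemma incrementConst_pos (hγ : |γ| < 1 / 2) : 0 < incrementConst γ := by
  rw [incrementConst, integral_pos_iff_support_of_nonneg (fun _ => sq_nonneg _)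
    (integrable_truncPow_sub_sq hγ)]
  refine lt_of_lt_of_le (b := volume (Ioo (0 : ℝ) 1)) (by simp) (measure_mono fun t ht => ?_)
  have ht0 : 0 < t := ht.1
  rw [Function.mem_support, truncPow_of_pos ht0, truncPow_of_nonpos (by linarith [ht.2]), sub_zero]
  positivity

lemma truncPow_sub_sub_truncPow_sub_sq_eq (γ t : ℝ) {s r : ℝ} (hsr : s < r) :
    (truncPow γ (t - s) - truncPow γ (t - r)) ^ 2 = (r - s) ^ (2 * γ) *
      (truncPow γ ((t - s) / (r - s)) - truncPow γ ((t - s) / (r - s) - 1)) ^ 2 := by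
  have ha : 0 < r - s := sub_pos.2 hsr
  have hdiv : (t - r) / (r - s) = (t - s) / (r - s) - 1 := by
    field_simp
    ring
  rw [truncPow_eq_rpow_mul_truncPow_div ha γ (t - s),
    truncPow_eq_rpow_mul_truncPow_div ha γ (t - r), hdiv, mul_comm 2 γ,
    Real.rpow_mul ha.le, Real.rpow_two]
  ring

lemma integrable_truncPow_sub_sub_truncPow_sub_sq (hγ : |γ| < 1 / 2) (s r : ℝ) :
    Integrable fun t => (truncPow γ (t - s) - truncPow γ (t - r)) ^ 2 := by
  wlog hsr : s ≤ r generalizing s r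
  · simpa only [sub_sq_comm (truncPow γ (_ - s))] using this r s (le_of_not_ge hsr)
  rcases hsr.eq_or_lt with rfl | hsr
  · simp
  · simp only [truncPow_sub_sub_truncPow_sub_sq_eq γ _ hsr]
    exact (integrable_comp_sub_div (integrable_truncPow_sub_sq hγ) s
      (sub_pos.2 hsr).ne').const_mul _

lemma integral_truncPow_sub_sub_truncPow_sub_sq (hγ : 2 * γ + 1 ≠ 0) (s r : ℝ) :
    ∫ t, (truncPow γ (t - s) - truncPow γ (t - r)) ^ 2 =
      incrementConst γ * |s - r| ^ (2 * γ + 1) := by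
  wlog hsr : s ≤ r generalizing s r
  · simpa only [sub_sq_comm (truncPow γ (_ - s)), abs_sub_comm s] using this r s (le_of_not_ge hsr)
  rcases hsr.eq_or_lt with rfl | hsr
  · simp [Real.zero_rpow hγ]
  · have ha : 0 < r - s := sub_pos.2 hsr
    simp only [truncPow_sub_sub_truncPow_sub_sq_eq γ _ hsr, integral_const_mul]
    rw [integral_comp_sub_div (fun x => (truncPow γ x - truncPow γ (x - 1)) ^ 2),
      ← incrementConst, abs_sub_comm s, abs_of_pos ha, Real.rpow_add_one ha.ne']
    ring

end TruncPow

lemma integrable_uncurry_mul_of_nonneg {X Y : Type*} [MeasurableSpace X] [MeasurableSpace Y]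
    {μ : Measure X} {ν : Measure Y} [SFinite μ] [SFinite ν] {K : X → Y → ℝ} {W : Y → ℝ}
    (hKm : AEStronglyMeasurable (Function.uncurry K) (μ.prod ν)) (hK0 : ∀ x y, 0 ≤ K x y)
    (hK : ∀ y, Integrable (K · y) μ) (hW : AEStronglyMeasurable W ν)
    (hKW : Integrable (fun y => (∫ x, K x y ∂μ) * W y) ν) :
    Integrable (Function.uncurry fun x y => K x y * W y) (μ.prod ν) := by
  refine (integrable_prod_iff' (hKm.mul hW.comp_snd)).2
    ⟨Eventually.of_forall fun y => (hK y).mul_const (W y), hKW.norm.congr ?_⟩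
  refine Eventually.of_forall fun y => ?_
  simp only [Pi.mul_apply, Function.uncurry_apply_pair, norm_mul, Real.norm_of_nonneg (hK0 _ _),
    integral_mul_const, Real.norm_of_nonneg (integral_nonneg fun x => hK0 x y)]

/-- The energy `∬ |s - r| ^ β w(s) w(r) ds dr` of a density `w` on the line. -/
noncomputable def rieszEnergy (β : ℝ) (w : ℝ → ℝ) : ℝ :=
  ∫ p : ℝ × ℝ, |p.1 - p.2| ^ β * (w p.1 * w p.2)

lemma rieszEnergy_comp_neg (β : ℝ) (w : ℝ → ℝ) :
    rieszEnergy β (fun s => w (-s)) = rieszEnergy β w := by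
  rw [rieszEnergy, rieszEnergy, ← integral_neg_eq_self]
  simp only [Prod.fst_neg, Prod.snd_neg, neg_neg, neg_sub_neg, abs_sub_comm]

section Energy

variable {β γ t : ℝ} {w : ℝ → ℝ}

lemma integrable_mul_tensor {Φ : ℝ × ℝ → ℝ} (hΦ : Continuous Φ) (hw : Continuous w)
    (hwc : HasCompactSupport w) : Integrable fun p : ℝ × ℝ => Φ p * (w p.1 * w p.2) := by
  have htensor : HasCompactSupport fun p : ℝ × ℝ => w p.1 * w p.2 := by
    refine HasCompactSupport.intro (hwc.prod hwc) fun p hp => ?_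
    rw [mem_prod, not_and_or] at hp
    rcases hp with h | h <;> simp only [image_eq_zero_of_notMem_tsupport h, zero_mul, mul_zero]
  exact (by fun_prop : Continuous _).integrable_of_hasCompactSupport htensor.mul_left

lemma integral_truncPow_sub_mul_tensor (hβ : 0 < β) (hw : Continuous w)
    (hwc : HasCompactSupport w) :
    ∫ p : ℝ × ℝ, truncPow β (p.2 - p.1) * (w p.1 * w p.2) = rieszEnergy β w / 2 := by
  have hcont := continuous_truncPow hβ
  have hlower : ∫ p : ℝ × ℝ, truncPow β (p.1 - p.2) * (w p.1 * w p.2) =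
      ∫ p : ℝ × ℝ, truncPow β (p.2 - p.1) * (w p.1 * w p.2) := by
    rw [Measure.volume_eq_prod, ← integral_prod_swap]
    simp only [Prod.fst_swap, Prod.snd_swap, mul_comm]
  have hsum : rieszEnergy β w = (∫ p : ℝ × ℝ, truncPow β (p.1 - p.2) * (w p.1 * w p.2)) +
      ∫ p : ℝ × ℝ, truncPow β (p.2 - p.1) * (w p.1 * w p.2) := by
    rw [← integral_add (integrable_mul_tensor (by fun_prop) hw hwc)
      (integrable_mul_tensor (by fun_prop) hw hwc)]
    simp only [rieszEnergy, ← truncPow_add_truncPow_neg hβ.ne', neg_sub, add_mul]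
  linarith

/-- The potential `∫ (t - s)₊ ^ γ w(s) ds`, the left fractional integral of order `γ + 1` over the
whole line up to the factor `Γ(γ + 1)`. -/
noncomputable def leftPotential (γ : ℝ) (w : ℝ → ℝ) (t : ℝ) : ℝ :=
  ∫ s, truncPow γ (t - s) * w s

/-- The potential `∫ (s - t)₊ ^ γ w(s) ds`, the mirror image of `leftPotential`. -/
noncomputable def rightPotential (γ : ℝ) (w : ℝ → ℝ) (t : ℝ) : ℝ :=
  ∫ s, truncPow γ (s - t) * w s

lemma rightPotential_eq_leftPotential_comp_neg (γ : ℝ) (w : ℝ → ℝ) (t : ℝ) :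
    rightPotential γ w t = leftPotential γ (fun s => w (-s)) (-t) := by
  rw [rightPotential, leftPotential, ← integral_neg_eq_self]
  simp only [neg_sub_comm]

lemma leftPotential_eq_convolution (γ : ℝ) (w : ℝ → ℝ) :
    leftPotential γ w = convolution (truncPow γ) w (ContinuousLinearMap.mul ℝ ℝ) volume :=
  funext fun _ => convolution_mul_swap.symm

lemma continuous_leftPotential (hγ : -1 < γ) (hw : Continuous w) (hwc : HasCompactSupport w) :
    Continuous (leftPotential γ w) := by
  rw [leftPotential_eq_convolution]
  exact hwc.continuous_convolution_right _ (locallyIntegrable_truncPow hγ) hw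

lemma hasDerivAt_leftPotential (hγ : -1 < γ) (hw : ContDiff ℝ 1 w) (hwc : HasCompactSupport w)
    (t : ℝ) : HasDerivAt (leftPotential γ w) (leftPotential γ (deriv w) t) t := by
  simp only [leftPotential_eq_convolution]
  exact hwc.hasDerivAt_convolution_right _ (locallyIntegrable_truncPow hγ) hw t

lemma hasDerivAt_rightPotential (hγ : -1 < γ) (hw : ContDiff ℝ 1 w) (hwc : HasCompactSupport w)
    (t : ℝ) : HasDerivAt (rightPotential γ w) (rightPotential γ (deriv w) t) t := by
  have hleft := (hasDerivAt_leftPotential hγ (w := fun s => w (-s)) (hw.comp contDiff_neg)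
    (hwc.comp_homeomorph (Homeomorph.neg ℝ)) (-t)).scomp t (hasDerivAt_neg t)
  have hderiv : rightPotential γ (deriv w) t =
      (-1 : ℝ) • leftPotential γ (deriv fun s => w (-s)) (-t) := by
    rw [rightPotential_eq_leftPotential_comp_neg, leftPotential, leftPotential, smul_eq_mul,
      neg_one_mul, ← integral_neg]
    simp only [deriv_comp_neg, mul_neg, neg_neg]
  rw [hderiv, funext (rightPotential_eq_leftPotential_comp_neg γ w)]
  exact hleft

lemma leftPotential_eq_zero (hw : ∀ s < t, w s = 0) : leftPotential γ w t = 0 := by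
  refine integral_eq_zero_of_ae (Eventually.of_forall fun s => ?_)
  rcases lt_or_ge s t with h | h
  · simp [hw s h]
  · simp [truncPow_of_nonpos (sub_nonpos.2 h)]

lemma rightPotential_eq_zero (hw : ∀ s > t, w s = 0) : rightPotential γ w t = 0 := by
  refine integral_eq_zero_of_ae (Eventually.of_forall fun s => ?_)
  rcases lt_or_ge t s with h | h
  · simp [hw s h]
  · simp [truncPow_of_nonpos (sub_nonpos.2 h)]

lemma integrable_truncPow_sub_mul (hγ : -1 < γ) (hw : Continuous w) (hwc : HasCompactSupport w)
    (t : ℝ) : Integrable fun s => truncPow γ (t - s) * w s := by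
  have hconv := (hwc.convolutionExists_right (ContinuousLinearMap.mul ℝ ℝ)
    (locallyIntegrable_truncPow hγ) hw t).integrable
  simpa using hconv.comp_sub_left t

/-- Expanding the square, the two terms containing only one kernel factor integrate to zero because
`w` has mean zero. -/
lemma integral_truncPow_sub_sq_mul_tensor (hγ : -1 < 2 * γ) (hw : Continuous w)
    (hwc : HasCompactSupport w) (hw0 : ∫ s, w s = 0) (t : ℝ) :
    ∫ p : ℝ × ℝ, (truncPow γ (t - p.1) - truncPow γ (t - p.2)) ^ 2 * (w p.1 * w p.2) =
      -2 * leftPotential γ w t ^ 2 := by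
  let k : ℝ → ℝ := fun s => truncPow γ (t - s) * w s
  let k₂ : ℝ → ℝ := fun s => truncPow (2 * γ) (t - s) * w s
  have hk : Integrable k := integrable_truncPow_sub_mul (by linarith) hw hwc t
  have hk₂ : Integrable k₂ := integrable_truncPow_sub_mul hγ hw hwc t
  have hwi : Integrable w := hw.integrable_of_hasCompactSupport hwc
  have hexpand : ∀ p : ℝ × ℝ,
      (truncPow γ (t - p.1) - truncPow γ (t - p.2)) ^ 2 * (w p.1 * w p.2) =
        k₂ p.1 * w p.2 + w p.1 * k₂ p.2 - 2 * (k p.1 * k p.2) := fun p => by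
    simp only [k, k₂, ← truncPow_sq]
    ring
  have hsum : Integrable (fun p : ℝ × ℝ => k₂ p.1 * w p.2 + w p.1 * k₂ p.2)
      (volume.prod volume) := (hk₂.mul_prod hwi).add (hwi.mul_prod hk₂)
  simp only [hexpand]
  rw [Measure.volume_eq_prod, integral_sub hsum ((hk.mul_prod hk).const_mul 2),
    integral_add (hk₂.mul_prod hwi) (hwi.mul_prod hk₂), integral_const_mul, integral_prod_mul,
    integral_prod_mul, integral_prod_mul, hw0, leftPotential]
  ring

lemma integrable_uncurry_truncPow_sub_sq_mul_tensor (hγ : |γ| < 1 / 2) (hw : Continuous w)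
    (hwc : HasCompactSupport w) :
    Integrable (Function.uncurry fun (t : ℝ) (p : ℝ × ℝ) =>
      (truncPow γ (t - p.1) - truncPow γ (t - p.2)) ^ 2 * (w p.1 * w p.2))
      (volume.prod volume) := by
  have hexp : 0 < 2 * γ + 1 := by linarith [(abs_lt.1 hγ).1]
  refine integrable_uncurry_mul_of_nonneg ?_ (fun _ _ => sq_nonneg _)
    (fun p => integrable_truncPow_sub_sub_truncPow_sub_sq hγ p.1 p.2) (by fun_prop) ?_
  · simp only [Function.uncurry_def]
    fun_prop
  · simp only [integral_truncPow_sub_sub_truncPow_sub_sq hexp.ne']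
    refine integrable_mul_tensor (continuous_const.mul ?_) hw hwc
    exact (by fun_prop : Continuous fun p : ℝ × ℝ => |p.1 - p.2|).rpow_const
      fun _ => Or.inr hexp.le

lemma integrable_uncurry_truncPow_sub_mul_truncPow_sub_mul_tensor (hγ : -1 / 2 < γ)
    (hw : Continuous w) (hwc : HasCompactSupport w) :
    Integrable (Function.uncurry fun (t : ℝ) (p : ℝ × ℝ) =>
      truncPow γ (t - p.1) * truncPow γ (p.2 - t) * (w p.1 * w p.2)) (volume.prod volume) := by
  have hγ' : -1 < γ := by linarith
  refine integrable_uncurry_mul_of_nonneg ?_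
    (fun _ _ => mul_nonneg (truncPow_nonneg _ _) (truncPow_nonneg _ _))
    (fun p => integrable_truncPow_sub_mul_truncPow_sub hγ' hγ' p.1 p.2) (by fun_prop) ?_
  · simp only [Function.uncurry_def]
    fun_prop
  · simp only [integral_truncPow_sub_mul_truncPow_sub hγ' hγ']
    have hcont := continuous_truncPow (γ := γ + γ + 1) (by linarith)
    exact integrable_mul_tensor (by fun_prop) hw hwc

lemma memLp_leftPotential (hγ : |γ| < 1 / 2) (hw : Continuous w) (hwc : HasCompactSupport w)
    (hw0 : ∫ s, w s = 0) : MemLp (leftPotential γ w) 2 := by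
  have hγl := (abs_lt.1 hγ).1
  rw [memLp_two_iff_integrable_sq
    (continuous_leftPotential (by linarith) hw hwc).aestronglyMeasurable]
  have hint := (integrable_uncurry_truncPow_sub_sq_mul_tensor hγ hw hwc).integral_prod_left
  simp only [Function.uncurry_apply_pair,
    integral_truncPow_sub_sq_mul_tensor (by linarith : -1 < 2 * γ) hw hwc hw0] at hint
  simpa using hint.const_mul (-2)⁻¹

lemma integral_leftPotential_sq (hγ : |γ| < 1 / 2) (hw : Continuous w)
    (hwc : HasCompactSupport w) (hw0 : ∫ s, w s = 0) :
    ∫ t, leftPotential γ w t ^ 2 = -(incrementConst γ / 2) * rieszEnergy (2 * γ + 1) w := by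
  have hexp : 0 < 2 * γ + 1 := by linarith [(abs_lt.1 hγ).1]
  have hswap := integral_integral_swap (integrable_uncurry_truncPow_sub_sq_mul_tensor hγ hw hwc)
  simp only [integral_truncPow_sub_sq_mul_tensor (by linarith : -1 < 2 * γ) hw hwc hw0,
    integral_mul_const, integral_truncPow_sub_sub_truncPow_sub_sq hexp.ne', mul_assoc,
    integral_const_mul] at hswap
  rw [rieszEnergy]
  linarith

lemma memLp_rightPotential (hγ : |γ| < 1 / 2) (hw : Continuous w) (hwc : HasCompactSupport w)
    (hw0 : ∫ s, w s = 0) : MemLp (rightPotential γ w) 2 := by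
  have hw0' : ∫ s, w (-s) = 0 := by rwa [integral_neg_eq_self]
  rw [funext (rightPotential_eq_leftPotential_comp_neg γ w)]
  exact (memLp_leftPotential hγ (hw.comp continuous_neg)
    (hwc.comp_homeomorph (Homeomorph.neg ℝ)) hw0').comp_measurePreserving
    (Measure.measurePreserving_neg volume)

lemma integral_rightPotential_sq (hγ : |γ| < 1 / 2) (hw : Continuous w)
    (hwc : HasCompactSupport w) (hw0 : ∫ s, w s = 0) :
    ∫ t, rightPotential γ w t ^ 2 = -(incrementConst γ / 2) * rieszEnergy (2 * γ + 1) w := by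
  have hw0' : ∫ s, w (-s) = 0 := by rwa [integral_neg_eq_self]
  simp only [rightPotential_eq_leftPotential_comp_neg]
  rw [integral_neg_eq_self fun t => leftPotential γ (fun s => w (-s)) t ^ 2,
    ← rieszEnergy_comp_neg]
  exact integral_leftPotential_sq hγ (hw.comp continuous_neg)
    (hwc.comp_homeomorph (Homeomorph.neg ℝ)) hw0'

lemma integral_leftPotential_mul_rightPotential (hγ : -1 / 2 < γ) (hw : Continuous w)
    (hwc : HasCompactSupport w) :
    ∫ t, leftPotential γ w t * rightPotential γ w t =
      beta (γ + 1) (γ + 1) / 2 * rieszEnergy (2 * γ + 1) w := by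
  have hγ' : -1 < γ := by linarith
  calc ∫ t, leftPotential γ w t * rightPotential γ w t
      = ∫ t, ∫ p : ℝ × ℝ, truncPow γ (t - p.1) * truncPow γ (p.2 - t) * (w p.1 * w p.2) := by
        simp only [leftPotential, rightPotential, Measure.volume_eq_prod, ← integral_prod_mul,
          mul_mul_mul_comm]
    _ = ∫ p : ℝ × ℝ, ∫ t, truncPow γ (t - p.1) * truncPow γ (p.2 - t) * (w p.1 * w p.2) :=
        integral_integral_swap
          (integrable_uncurry_truncPow_sub_mul_truncPow_sub_mul_tensor hγ hw hwc)
    _ = beta (γ + 1) (γ + 1) *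
          ∫ p : ℝ × ℝ, truncPow (γ + γ + 1) (p.2 - p.1) * (w p.1 * w p.2) := by
        simp only [integral_mul_const, integral_truncPow_sub_mul_truncPow_sub hγ' hγ']
        simp only [mul_assoc, integral_const_mul]
    _ = beta (γ + 1) (γ + 1) / 2 * rieszEnergy (2 * γ + 1) w := by
        rw [integral_truncPow_sub_mul_tensor (by linarith) hw hwc, two_mul]
        ring

end Energy

section CrossTerm

variable {X : Type*} [MeasurableSpace X] {μ : Measure X} {f g : X → ℝ}

lemma two_mul_integral_mul_le (hf : MemLp f 2 μ) (hg : MemLp g 2 μ) (c : ℝ) :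
    2 * (c * ∫ x, f x * g x ∂μ) ≤ ∫ x, f x ^ 2 ∂μ + c ^ 2 * ∫ x, g x ^ 2 ∂μ := by
  rw [← integral_const_mul, ← integral_const_mul, ← integral_const_mul,
    ← integral_add hf.integrable_sq (hg.integrable_sq.const_mul _)]
  refine integral_mono (((hf.integrable_mul hg).const_mul c).const_mul 2)
    (hf.integrable_sq.add (hg.integrable_sq.const_mul _)) fun x => ?_
  simp only
  linarith [sq_nonneg (f x - c * g x)]

lemma abs_integral_mul_le_of_integral_sq_le {c : ℝ} (hf : MemLp f 2 μ) (hg : MemLp g 2 μ)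
    (hc : 0 < c) (hfg : ∫ x, f x ^ 2 ∂μ ≤ c * |∫ x, f x * g x ∂μ|) :
    |∫ x, f x * g x ∂μ| ≤ c * ∫ x, g x ^ 2 ∂μ := by
  have hcross : 2 * (c * |∫ x, f x * g x ∂μ|) ≤ ∫ x, f x ^ 2 ∂μ + c ^ 2 * ∫ x, g x ^ 2 ∂μ := by
    rcases abs_choice (∫ x, f x * g x ∂μ) with h | h
    · rw [h]
      exact two_mul_integral_mul_le hf hg c
    · rw [h, mul_neg, ← neg_mul, ← neg_sq c]
      exact two_mul_integral_mul_le hf hg (-c)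
  refine le_of_mul_le_mul_left ?_ hc
  linarith

end CrossTerm

/-- The ratio of `∫ L²` to `-∫ L R`, where `L` and `R` are the left and right potentials of a
density of mean zero. -/
noncomputable def energyRatio (γ : ℝ) : ℝ := incrementConst γ / beta (γ + 1) (γ + 1)

lemma energyRatio_pos {γ : ℝ} (hγ : |γ| < 1 / 2) : 0 < energyRatio γ := by
  have hγ1 : 0 < γ + 1 := by linarith [(abs_lt.1 hγ).1]
  exact div_pos (incrementConst_pos hγ) (beta_pos hγ1 hγ1)

section Interval

variable {γ a b : ℝ} {w : ℝ → ℝ}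

lemma neg_incrementConst_div_two_mul_rieszEnergy (hγ : -1 / 2 < γ) (hw : Continuous w)
    (hwc : HasCompactSupport w) :
    -(incrementConst γ / 2) * rieszEnergy (2 * γ + 1) w =
      energyRatio γ * -∫ t, leftPotential γ w t * rightPotential γ w t := by
  have hB : beta (γ + 1) (γ + 1) ≠ 0 := (beta_pos (by linarith) (by linarith)).ne'
  rw [integral_leftPotential_mul_rightPotential hγ hw hwc, energyRatio]
  field_simp

lemma intervalIntegral_leftPotential_mul_rightPotential (hsupp : Function.support w ⊆ Icc a b) :
    ∫ t in a..b, leftPotential γ w t * rightPotential γ w t =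
      ∫ t, leftPotential γ w t * rightPotential γ w t := by
  have hw0 : ∀ s ∉ Icc a b, w s = 0 := fun s hs => Function.notMem_support.1 fun h => hs (hsupp h)
  refine intervalIntegral.integral_eq_integral_of_support_subset fun t ht => ?_
  have hLt := left_ne_zero_of_mul ht
  have hRt := right_ne_zero_of_mul ht
  constructor
  · by_contra! hta
    exact hLt (leftPotential_eq_zero fun s hs => hw0 s fun h => (hs.trans_le hta).not_ge h.1)
  · by_contra! hbt
    exact hRt (rightPotential_eq_zero fun s hs => hw0 s fun h => (hbt.trans hs).not_ge h.2)

lemma intervalIntegral_sq_le_integral_sq {f : ℝ → ℝ} (hab : a ≤ b) (hf : MemLp f 2) :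
    ∫ t in a..b, f t ^ 2 ≤ ∫ t, f t ^ 2 := by
  rw [intervalIntegral.integral_of_le hab]
  exact setIntegral_le_integral hf.integrable_sq (Eventually.of_forall fun _ => sq_nonneg _)

/-- The pairing of the two potentials vanishes off `[a, b]`, whereas their energies only shrink
upon restriction to `[a, b]`. -/
lemma potential_seminorm_equivalence (hγ : |γ| < 1 / 2) (hab : a ≤ b) (hw : Continuous w)
    (hw0 : ∫ s, w s = 0) (hsupp : Function.support w ⊆ Icc a b) :
    ∫ t in a..b, leftPotential γ w t ^ 2 ≤
        energyRatio γ * |∫ t in a..b, leftPotential γ w t * rightPotential γ w t| ∧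
      |∫ t in a..b, leftPotential γ w t * rightPotential γ w t| ≤
        energyRatio γ * ∫ t in a..b, rightPotential γ w t ^ 2 ∧
      ∫ t in a..b, rightPotential γ w t ^ 2 ≤
        energyRatio γ ^ 2 * ∫ t in a..b, leftPotential γ w t ^ 2 := by
  have hwc : HasCompactSupport w :=
    HasCompactSupport.of_support_subset_isCompact isCompact_Icc hsupp
  have hc := energyRatio_pos hγ
  have hL := memLp_leftPotential hγ hw hwc hw0
  have hR := memLp_rightPotential hγ hw hwc hw0
  have henergy : -(incrementConst γ / 2) * rieszEnergy (2 * γ + 1) w ≤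
      energyRatio γ * |∫ t in a..b, leftPotential γ w t * rightPotential γ w t| := by
    rw [neg_incrementConst_div_two_mul_rieszEnergy (by linarith [(abs_lt.1 hγ).1]) hw hwc,
      intervalIntegral_leftPotential_mul_rightPotential hsupp]
    gcongr
    exact neg_le_abs _
  have hleft := (intervalIntegral_sq_le_integral_sq hab hL).trans
    ((integral_leftPotential_sq hγ hw hwc hw0).trans_le henergy)
  have hright := (intervalIntegral_sq_le_integral_sq hab hR).trans
    ((integral_rightPotential_sq hγ hw hwc hw0).trans_le henergy)
  simp only [intervalIntegral.integral_of_le hab] at hleft hright ⊢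
  have hcross := abs_integral_mul_le_of_integral_sq_le (hL.restrict _) (hR.restrict _) hc hleft
  have hcross' := abs_integral_mul_le_of_integral_sq_le (hR.restrict _) (hL.restrict _) hc
    (by simpa only [mul_comm (rightPotential γ w _)] using hright)
  simp only [mul_comm (rightPotential γ w _)] at hcross'
  refine ⟨hleft, hcross, hright.trans ?_⟩
  rw [sq, mul_assoc]
  gcongr

end Interval

section RiemannLiouville

variable {β a b t : ℝ} {v : ℝ → ℝ}

lemma integral_rlKernel_left (hat : a ≤ t) (hv : ∀ s < a, v s = 0) :
    ∫ s in a..t, rlKernel β (t - s) * v s =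
      leftPotential (β - 1) (fun s => v s / Real.Gamma β) t := by
  rw [intervalIntegral.integral_of_le hat, ← integral_Ico_eq_integral_Ioc, leftPotential,
    ← integral_indicator measurableSet_Ico]
  congr 1 with s
  by_cases hs : s ∈ Ico a t
  · rw [indicator_of_mem hs, truncPow_of_pos (sub_pos.2 hs.2), rlKernel, div_mul_eq_mul_div,
      mul_div_assoc]
  · rw [indicator_of_notMem hs]
    rcases lt_or_ge s a with h | h
    · rw [hv s h, zero_div, mul_zero]
    · rw [truncPow_of_nonpos (sub_nonpos.2 (not_lt.1 fun hst => hs ⟨h, hst⟩)), zero_mul]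

lemma integral_rlKernel_right (htb : t ≤ b) (hv : ∀ s > b, v s = 0) :
    ∫ s in t..b, rlKernel β (s - t) * v s =
      rightPotential (β - 1) (fun s => v s / Real.Gamma β) t := by
  rw [intervalIntegral.integral_of_le htb, rightPotential, ← integral_indicator measurableSet_Ioc]
  congr 1 with s
  by_cases hs : s ∈ Ioc t b
  · rw [indicator_of_mem hs, truncPow_of_pos (sub_pos.2 hs.1), rlKernel, div_mul_eq_mul_div,
      mul_div_assoc]
  · rw [indicator_of_notMem hs]
    rcases lt_or_ge b s with h | h
    · rw [hv s h, zero_div, mul_zero]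
    · rw [truncPow_of_nonpos (sub_nonpos.2 (not_lt.1 fun hts => hs ⟨hts, h⟩)), zero_mul]

lemma hasDerivAt_integral_rlKernel_left_s5 (hβ : 0 < β) (hv : ContDiff ℝ 1 v)
    (hvc : HasCompactSupport v) (hva : ∀ s < a, v s = 0) (hat : a < t) :
    HasDerivAt (fun τ => ∫ s in a..τ, rlKernel β (τ - s) * v s)
      (leftPotential (β - 1) (fun s => deriv v s / Real.Gamma β) t) t := by
  simp only [← deriv_div_const]
  refine (hasDerivAt_leftPotential (by linarith) (hv.div_const _)
    (hvc.mul_right (f' := fun _ => (Real.Gamma β)⁻¹)) t).congr_of_eventuallyEq ?_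
  filter_upwards [Ioi_mem_nhds hat] with τ hτ using integral_rlKernel_left (le_of_lt hτ) hva

lemma hasDerivAt_integral_rlKernel_right_s5 (hβ : 0 < β) (hv : ContDiff ℝ 1 v)
    (hvc : HasCompactSupport v) (hvb : ∀ s > b, v s = 0) (htb : t < b) :
    HasDerivAt (fun τ => ∫ s in τ..b, rlKernel β (s - τ) * v s)
      (rightPotential (β - 1) (fun s => deriv v s / Real.Gamma β) t) t := by
  simp only [← deriv_div_const]
  refine (hasDerivAt_rightPotential (by linarith) (hv.div_const _)
    (hvc.mul_right (f' := fun _ => (Real.Gamma β)⁻¹)) t).congr_of_eventuallyEq ?_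
  filter_upwards [Iio_mem_nhds htb] with τ hτ using integral_rlKernel_right (le_of_lt hτ) hvb

end RiemannLiouville

lemma integral_deriv_eq_zero_of_hasCompactSupport {v : ℝ → ℝ} (hv : ContDiff ℝ 1 v)
    (hvc : HasCompactSupport v) : ∫ s, deriv v s = 0 :=
  integral_eq_zero_of_hasDerivAt_of_integrable
    (fun s => (hv.differentiable one_ne_zero s).hasDerivAt)
    ((hv.continuous_deriv le_rfl).integrable_of_hasCompactSupport hvc.deriv)
    (hv.continuous.integrable_of_hasCompactSupport hvc)

/-- For `α ≤ 0` the functions `DL` and `DR` are fractional integrals of order `-α`. -/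
theorem rl_seminorm_equivalence_general (α : ℝ) (hα : |α| < 1 / 2) :
    ∃ c₁ c₂ c₃ : ℝ, 0 < c₁ ∧ 0 < c₂ ∧ 0 < c₃ ∧
      ∀ T : ℝ, 0 ≤ T → ∀ v : ℝ → ℝ, ContDiff ℝ 1 v → tsupport v ⊆ Icc 0 T →
        ∀ DL DR : ℝ → ℝ,
          (∀ t ∈ Ioo (0 : ℝ) T,
            HasDerivAt (fun τ => ∫ s in (0:ℝ)..τ, rlKernel (1 - α) (τ - s) * v s) (DL t) t) →
          (∀ t ∈ Ioo (0 : ℝ) T,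
            HasDerivAt (fun τ => ∫ s in τ..T, rlKernel (1 - α) (s - τ) * v s) (-(DR t)) t) →
          ((∫ t in (0:ℝ)..T, (DL t) ^ 2) ≤ c₁ * |∫ t in (0:ℝ)..T, DL t * DR t|) ∧
          (|∫ t in (0:ℝ)..T, DL t * DR t| ≤ c₂ * ∫ t in (0:ℝ)..T, (DR t) ^ 2) ∧
          ((∫ t in (0:ℝ)..T, (DR t) ^ 2) ≤ c₃ * ∫ t in (0:ℝ)..T, (DL t) ^ 2) := by
  have hγ : |1 - α - 1| < 1 / 2 := by rwa [sub_sub_cancel_left, abs_neg]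
  have hβ : 0 < 1 - α := by linarith [(abs_lt.1 hα).2]
  have hc := energyRatio_pos hγ
  refine ⟨_, _, _, hc, hc, pow_pos hc 2, fun T hT v hv hvT DL DR hDL hDR => ?_⟩
  have hvc : HasCompactSupport v := isCompact_Icc.of_isClosed_subset (isClosed_tsupport v) hvT
  have hv0 : ∀ s ∉ Icc 0 T, v s = 0 := fun s hs => image_eq_zero_of_notMem_tsupport (mt (@hvT s) hs)
  let w : ℝ → ℝ := fun s => deriv v s / Real.Gamma (1 - α)
  have hw0 : ∫ s, w s = 0 := by
    rw [integral_div, integral_deriv_eq_zero_of_hasCompactSupport hv hvc, zero_div]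
  have hwT : Function.support w ⊆ Icc 0 T := fun s hs =>
    hvT (support_deriv_subset (left_ne_zero_of_mul hs))
  have hL : EqOn DL (leftPotential (1 - α - 1) w) (Ioo 0 T) := fun t ht => (hDL t ht).unique <|
    hasDerivAt_integral_rlKernel_left_s5 hβ hv hvc (fun s hs => hv0 s fun h => hs.not_ge h.1) ht.1
  have hR : EqOn DR (-rightPotential (1 - α - 1) w) (Ioo 0 T) := fun t ht =>
    neg_eq_iff_eq_neg.1 <| (hDR t ht).unique <|
      hasDerivAt_integral_rlKernel_right_s5 hβ hv hvc (fun s hs => hv0 s fun h => hs.not_ge h.2) ht.2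
  rw [intervalIntegral.integral_congr_Ioo_of_le hT fun t ht => congrArg (· ^ 2) (hL ht),
    intervalIntegral.integral_congr_Ioo_of_le hT fun t ht => congrArg (· ^ 2) (hR ht),
    intervalIntegral.integral_congr_Ioo_of_le hT fun t ht => congrArg₂ (· * ·) (hL ht) (hR ht)]
  simpa only [Pi.neg_apply, neg_sq, mul_neg, intervalIntegral.integral_neg, abs_neg] using
    potential_seminorm_equivalence hγ hT ((hv.continuous_deriv le_rfl).div_const _) hw0 hwT

/-- Norm equivalences between the left and right Riemann–Liouville fractional derivatives
of order `0 < α < 1/2` for smooth compactly supported functions: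
(i) `∫ (D_{0+}^α v)² ≤ c₁ |∫ (D_{0+}^α v)(D_{T-}^α v)|`,
(ii) `|∫ (D_{0+}^α v)(D_{T-}^α v)| ≤ c₂ ∫ (D_{T-}^α v)²`,
(iii) `∫ (D_{T-}^α v)² ≤ c₃ ∫ (D_{0+}^α v)²`. -/
theorem rl_seminorm_equivalence (α : ℝ) (hα0 : 0 < α) (hα2 : α < 1 / 2) :
    ∃ c₁ c₂ c₃ : ℝ, 0 < c₁ ∧ 0 < c₂ ∧ 0 < c₃ ∧
      ∀ T : ℝ, 0 < T → ∀ v : ℝ → ℝ, ContDiff ℝ (⊤ : ℕ∞) v → HasCompactSupport v →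
        tsupport v ⊆ Set.Ioo 0 T →
        ∀ DL DR : ℝ → ℝ,
          (∀ t ∈ Set.Ioo (0 : ℝ) T,
            HasDerivAt (fun τ => ∫ s in (0:ℝ)..τ, rlKernel (1 - α) (τ - s) * v s) (DL t) t) →
          (∀ t ∈ Set.Ioo (0 : ℝ) T,
            HasDerivAt (fun τ => ∫ s in τ..T, rlKernel (1 - α) (s - τ) * v s) (-(DR t)) t) →
          ((∫ t in (0:ℝ)..T, (DL t) ^ 2) ≤ c₁ * |∫ t in (0:ℝ)..T, DL t * DR t|) ∧
          (|∫ t in (0:ℝ)..T, DL t * DR t| ≤ c₂ * ∫ t in (0:ℝ)..T, (DR t) ^ 2) ∧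
          ((∫ t in (0:ℝ)..T, (DR t) ^ 2) ≤ c₃ * ∫ t in (0:ℝ)..T, (DL t) ^ 2) := by
  obtain ⟨c₁, c₂, c₃, hc₁, hc₂, hc₃, hbounds⟩ :=
    rl_seminorm_equivalence_general α (abs_lt.2 ⟨by linarith, hα2⟩)
  exact ⟨c₁, c₂, c₃, hc₁, hc₂, hc₃, fun T hT v hv _ hvT =>
    hbounds T hT.le v (hv.of_le (by exact_mod_cast le_top)) (hvT.trans Ioo_subset_Icc_self)⟩
end

section
/- Let T > 0, 0 < α < 1, r ≥ 1, p ≥ 1 an integer, and let v satisfy the regularity condition with constants C₀ > 0 and σ ∈ (0,1), where moreover σ ≤ p + (p+1)/α. Then there exists C > 0 depending only on p, σ, α, r, C₀ and T (in particular independent of N and n) such that for every integer N ≥ 1 and every 1 ≤ n ≤ N: ∫_0^{t_n} ((D_{0+}^{α/2} η_v)(t))² dt ≤ C · B, where B = N^{−r(1+2σ−α)} if 1 ≤ r < (2p+2−α)/(1+2σ−α); B = N^{−2p−2+α}(1 + ln n) if r = (2p+2−α)/(1+2σ−α); and B = N^{−2p−2+α} · t_n^{1+2σ−α−(2p+2−α)/r}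 if r > (2p+2−α)/(1+2σ−α). -/
/-- The graded mesh `t_n = (n/N)^r * T`. -/
noncomputable def gradedMesh (T r : ℝ) (N n : ℕ) : ℝ := ((n : ℝ) / (N : ℝ)) ^ r * T

/-- The bound `B` of Lemma 6 of the paper:
`B = N^{-r(1+2σ-α)}` if `r < (2p+2-α)/(1+2σ-α)`,
`B = N^{-2p-2+α}(1+ln n)` if `r = (2p+2-α)/(1+2σ-α)`,
`B = N^{-2p-2+α} t_n^{1+2σ-α-(2p+2-α)/r}` if `r > (2p+2-α)/(1+2σ-α)`. -/
noncomputable def halfDerivBound (T r α σ : ℝ) (p N n : ℕ) : ℝ :=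
  if r < (2 * (p : ℝ) + 2 - α) / (1 + 2 * σ - α) then
    (N : ℝ) ^ (-(r * (1 + 2 * σ - α)))
  else if r = (2 * (p : ℝ) + 2 - α) / (1 + 2 * σ - α) then
    (N : ℝ) ^ (-2 * (p : ℝ) - 2 + α) * (1 + Real.log n)
  else
    (N : ℝ) ^ (-2 * (p : ℝ) - 2 + α) *
      gradedMesh T r N n ^ (1 + 2 * σ - α - (2 * (p : ℝ) + 2 - α) / r)

/-!
Write `η = v - Π^p v`, `γ = α / 2`, and let `[a, b]` be a mesh interval. With `δ = t_1`, the grading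
turns the weak singularity of `v` into a bound `|η(s)| ≤ H s^(σ - m)`, where `H` is of order `δ^m`,
together with a Lipschitz bound on `[a, b]` that degenerates only like `(s - a)^(σ - 1)`.
For `t ∈ (a, b)` the increments of the fractional integral of `η` split into the history on
`[0, a]`, controlled by the derivative of the kernel, and the part on `[a, t]`, where the increment
is moved from the kernel to `η`. Both are `O(h)`, so that
`|D^γ η(t)| ≤ C H b^(σ - m) (t - a)^(-γ)`, which is square integrable because `γ < 1/2`.
Summing the squares over the mesh gives `δ^(1 + 2σ - α) ∑_{k ≤ n} k^(e - 1)`, and the three grading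
regimes are the cases `e < 0`, `e = 0` and `e > 0`.
-/

open Set MeasureTheory

/-! ### Powers -/

theorem rpow_le_rpow_abs_mul_rpow {x y R : ℝ} (hx : 0 < x) (hy : 0 < y) (hR : 1 ≤ R)
    (hxy : x ≤ R * y) (hyx : y ≤ R * x) (d : ℝ) : x ^ d ≤ R ^ |d| * y ^ d := by
  have hR0 : 0 < R := by linarith
  rcases le_total 0 d with hd | hd
  · rw [abs_of_nonneg hd, ← Real.mul_rpow hR0.le hy.le]
    exact Real.rpow_le_rpow hx.le hxy hd
  · rw [abs_of_nonpos hd, Real.rpow_neg hR0.le, ← div_eq_inv_mul,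
      le_div_iff₀ (Real.rpow_pos_of_pos hR0 d), mul_comm, ← Real.mul_rpow hR0.le hx.le]
    exact Real.rpow_le_rpow_of_nonpos hy hyx hd

theorem rpow_mul_rpow_le_of_add_eq {x y t : ℝ} (hx : 0 < x) (hy : 0 < y) (ht : x + y = t)
    (c d : ℝ) :
    x ^ c * y ^ d ≤ (2 ^ |c| + 2 ^ |d|) * (t ^ d * x ^ c + t ^ c * y ^ d) := by
  have ht0 : 0 < t := by linarith
  have hxc : 0 < x ^ c := Real.rpow_pos_of_pos hx c
  have hyd : 0 < y ^ d := Real.rpow_pos_of_pos hy d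
  have htc : 0 < t ^ c := Real.rpow_pos_of_pos ht0 c
  have htd : 0 < t ^ d := Real.rpow_pos_of_pos ht0 d
  have h2c : (0 : ℝ) < 2 ^ |c| := by positivity
  have h2d : (0 : ℝ) < 2 ^ |d| := by positivity
  rcases le_total x y with h | h
  · have hyt := rpow_le_rpow_abs_mul_rpow hy ht0 one_le_two (by linarith) (by linarith) d
    calc x ^ c * y ^ d ≤ x ^ c * (2 ^ |d| * t ^ d) := by gcongr
      _ = 2 ^ |d| * (t ^ d * x ^ c) := by ring
      _ ≤ _ := by gcongr <;> linarith [mul_pos htc hyd]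
  · have hxt := rpow_le_rpow_abs_mul_rpow hx ht0 one_le_two (by linarith) (by linarith) c
    calc x ^ c * y ^ d ≤ (2 ^ |c| * t ^ c) * y ^ d := by gcongr
      _ = 2 ^ |c| * (t ^ c * y ^ d) := by ring
      _ ≤ _ := by gcongr <;> linarith [mul_pos htd hxc]

theorem one_add_rpow_le_mul_rpow {T x z d : ℝ} (hx : 0 < x) (hxz : x ≤ z) (hzT : z ≤ T)
    (hd : d ≤ 0) : 1 + z ^ d ≤ (1 + T ^ (-d)) * x ^ d := by
  have hT : 0 < T := by linarith
  have hzx : z ^ d ≤ x ^ d := Real.rpow_le_rpow_of_nonpos hx hxz hd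
  have hTx : 1 ≤ T ^ (-d) * x ^ d := by
    rw [Real.rpow_neg hT.le, ← div_eq_inv_mul, one_le_div (Real.rpow_pos_of_pos hT d)]
    exact Real.rpow_le_rpow_of_nonpos hx (hxz.trans hzT) hd
  linarith

theorem abs_rpow_neg_sub_rpow_neg_le {γ x h : ℝ} (hγ : 0 ≤ γ) (hx : 0 < x) (hh : 0 ≤ h) :
    |(x + h) ^ (-γ) - x ^ (-γ)| ≤ γ * x ^ (-γ - 1) * h := by
  have hder : ∀ y ∈ Icc x (x + h),
      HasDerivWithinAt (fun y : ℝ => y ^ (-γ)) (-γ * y ^ (-γ - 1)) (Icc x (x + h)) y := fun y hy =>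
    (Real.hasDerivAt_rpow_const (Or.inl (hx.trans_le hy.1).ne')).hasDerivWithinAt
  have hbound : ∀ y ∈ Icc x (x + h), ‖-γ * y ^ (-γ - 1)‖ ≤ γ * x ^ (-γ - 1) := by
    intro y hy
    rw [Real.norm_eq_abs, abs_mul, abs_neg, abs_of_nonneg hγ,
      abs_of_pos (Real.rpow_pos_of_pos (hx.trans_le hy.1) _)]
    have := Real.rpow_le_rpow_of_nonpos hx hy.1 (by linarith : -γ - 1 ≤ 0)
    gcongr
  have hmvt := (convex_Icc x (x + h)).norm_image_sub_le_of_norm_hasDerivWithin_le hder hbound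
    (left_mem_Icc.mpr (by linarith)) (right_mem_Icc.mpr (by linarith))
  simpa [abs_of_nonneg hh] using hmvt

/-! ### Lagrange interpolation at equispaced nodes -/

/-- The Lagrange interpolant of degree `p` of `v` at the `p + 1` equispaced nodes
`a + j (b - a) / p` of `[a, b]`. For `p = 0` the only node is `a`. -/
structure IsEquispacedInterpolant (p : ℕ) (a b : ℝ) (v : ℝ → ℝ) (q : Polynomial ℝ) : Prop where
  degree_le : q.degree ≤ p
  eval_node : ∀ j ≤ p,
    q.eval (a + (j : ℝ) * (b - a) / (p : ℝ)) = v (a + (j : ℝ) * (b - a) / (p : ℝ))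

/-- The regularity class used for local errors on `[a, b]`: size at most `M` and a Lipschitz
constant blowing up like `(x - a) ^ (σ - 1)` at the left endpoint, normalised so that `M` is
invariant under rescaling of `[a, b]`. -/
structure LeftSingularOn (σ M a b : ℝ) (f : ℝ → ℝ) : Prop where
  abs_le : ∀ x ∈ Icc a b, |f x| ≤ M
  abs_sub_le : ∀ x y, a < x → x ≤ y → y ≤ b →
    |f y - f x| ≤ M * (b - a) ^ (-σ) * (x - a) ^ (σ - 1) * (y - x)

/-- The regularity condition on the interpolated function `v`: continuity on `[0, T]`, `p + 1`
continuous derivatives on `(0, T]`, and the derivative bounds of a weak singularity `t ^ σ`. -/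
structure IsWeaklySingular (T σ C₀ : ℝ) (p : ℕ) (v : ℝ → ℝ) : Prop where
  continuousOn : ContinuousOn v (Icc 0 T)
  contDiffOn : ContDiffOn ℝ (p + 1) v (Ioc 0 T)
  abs_sub_zero_le : ∀ t ∈ Ioc 0 T, |v t - v 0| ≤ C₀ * t ^ σ
  abs_iteratedDerivWithin_le : ∀ t ∈ Ioc 0 T, ∀ ℓ ≤ p + 1,
    |iteratedDerivWithin ℓ v (Ioc 0 T) t| ≤ C₀ * (1 + t ^ (σ - (ℓ : ℝ)))

theorem LeftSingularOn.mono {σ M M' a b : ℝ} {f : ℝ → ℝ} (hf : LeftSingularOn σ M a b f)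
    (hM : M ≤ M') : LeftSingularOn σ M' a b f where
  abs_le x hx := (hf.abs_le x hx).trans hM
  abs_sub_le x y hx hxy hy := by
    have hba : 0 ≤ b - a := by linarith
    have : 0 ≤ x - a := by linarith
    have : 0 ≤ y - x := by linarith
    exact (hf.abs_sub_le x y hx hxy hy).trans (by gcongr)

theorem LeftSingularOn.congr {σ M a b : ℝ} {f g : ℝ → ℝ} (hf : LeftSingularOn σ M a b f)
    (hfg : EqOn g f (Icc a b)) : LeftSingularOn σ M a b g where
  abs_le x hx := by rw [hfg hx]; exact hf.abs_le x hx
  abs_sub_le x y hx hxy hy := by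
    rw [hfg ⟨hx.le, hxy.trans hy⟩, hfg ⟨hx.le.trans hxy, hy⟩]
    exact hf.abs_sub_le x y hx hxy hy

theorem LeftSingularOn.sub {σ M M' a b : ℝ} {f g : ℝ → ℝ} (hf : LeftSingularOn σ M a b f)
    (hg : LeftSingularOn σ M' a b g) : LeftSingularOn σ (M + M') a b fun x => f x - g x where
  abs_le x hx := (abs_sub _ _).trans (add_le_add (hf.abs_le x hx) (hg.abs_le x hx))
  abs_sub_le x y hx hxy hy := by
    rw [sub_sub_sub_comm, add_mul, add_mul, add_mul]
    exact (abs_sub _ _).trans (add_le_add (hf.abs_sub_le x y hx hxy hy)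
      (hg.abs_sub_le x y hx hxy hy))

theorem LeftSingularOn.of_lipschitz {σ M a b : ℝ} {f : ℝ → ℝ} (hσ : σ ≤ 1) (hM : 0 ≤ M)
    (hf : ∀ x ∈ Icc a b, |f x| ≤ M)
    (hlip : ∀ x ∈ Icc a b, ∀ y ∈ Icc a b, |f y - f x| ≤ M / (b - a) * |y - x|) :
    LeftSingularOn σ M a b f where
  abs_le := hf
  abs_sub_le x y hx hxy hy := by
    have hba : 0 < b - a := by linarith
    have hyx : 0 ≤ y - x := by linarith
    have hsplit : M / (b - a) = M * (b - a) ^ (-σ) * (b - a) ^ (σ - 1) := by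
      rw [mul_assoc, ← Real.rpow_add hba, show -σ + (σ - 1) = -1 by ring, Real.rpow_neg_one,
        div_eq_mul_inv]
    have hpow : (b - a) ^ (σ - 1) ≤ (x - a) ^ (σ - 1) :=
      Real.rpow_le_rpow_of_nonpos (by linarith) (by linarith) (by linarith)
    have h := hlip x ⟨hx.le, hxy.trans hy⟩ y ⟨hx.le.trans hxy, hy⟩
    rw [abs_of_nonneg hyx, hsplit] at h
    exact h.trans (by gcongr)

theorem iteratedDerivWithin_eq_of_subset {s t : Set ℝ} {f : ℝ → ℝ} {n : ℕ} {x : ℝ} (hst : s ⊆ t)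
    (hs : UniqueDiffOn ℝ s) (ht : UniqueDiffOn ℝ t) (hf : ContDiffOn ℝ n f t) (hx : x ∈ s) :
    iteratedDerivWithin n f s x = iteratedDerivWithin n f t x := by
  simp only [iteratedDerivWithin, iteratedFDerivWithin_subset hst hs ht hf hx]

theorem contDiff_polynomial_eval (q : Polynomial ℝ) {n : WithTop ℕ∞} :
    ContDiff ℝ n fun y => q.eval y := by
  simpa using Polynomial.contDiff_aeval (𝕜 := ℝ) q n

theorem iteratedDerivWithin_polynomial_eval_eq_zero {s : Set ℝ} {q : Polynomial ℝ} {n : ℕ} {x : ℝ}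
    (hs : UniqueDiffOn ℝ s) (hq : q.degree < n) (hx : x ∈ s) :
    iteratedDerivWithin n (fun y => q.eval y) s x = 0 := by
  have hiter : deriv^[n] (fun y => q.eval y) = fun y => (Polynomial.derivative^[n] q).eval y :=
    (Function.Semiconj.iterate_right (f := fun (r : Polynomial ℝ) y => r.eval y)
      (fun r => funext fun y => r.deriv.symm) n q).symm
  rw [iteratedDerivWithin_eq_iteratedDeriv hs (contDiff_polynomial_eval q).contDiffAt hx,
    iteratedDeriv_eq_iterate, hiter, Polynomial.iterate_derivative_eq_zero_of_degree_lt hq]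
  exact Polynomial.eval_zero

theorem exists_strictMono_derivWithin_eq_zero {a b : ℝ} {m : ℕ} {f : ℝ → ℝ}
    (hf : ContinuousOn f (Icc a b)) {x : Fin (m + 1) → ℝ} (hx : StrictMono x)
    (hmem : ∀ j, x j ∈ Icc a b) (hzero : ∀ j, f (x j) = 0) :
    ∃ z : Fin m → ℝ, StrictMono z ∧ (∀ j, z j ∈ Icc a b) ∧
      ∀ j, derivWithin f (Icc a b) (z j) = 0 := by
  have hrolle : ∀ j : Fin m, ∃ z ∈ Ioo (x j.castSucc) (x j.succ), deriv f z = 0 := fun j =>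
    exists_deriv_eq_zero (hx Fin.castSucc_lt_succ)
      (hf.mono (Icc_subset_Icc (hmem _).1 (hmem _).2)) (by rw [hzero, hzero])
  choose z hz hdz using hrolle
  have hzmem : ∀ j, z j ∈ Ioo a b := fun j =>
    ⟨(hmem _).1.trans_lt (hz j).1, (hz j).2.trans_le (hmem _).2⟩
  refine ⟨z, fun i j hij => ?_, fun j => Ioo_subset_Icc_self (hzmem j), fun j => ?_⟩
  · calc z i < x i.succ := (hz i).2
      _ ≤ x j.castSucc := hx.monotone (Fin.succ_le_castSucc_iff.mpr hij)
      _ < z j := (hz j).1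
  · rw [derivWithin_of_mem_nhds (Icc_mem_nhds (hzmem j).1 (hzmem j).2), hdz]

theorem abs_iteratedDerivWithin_le_of_zeros {a b K : ℝ} (hab : a < b) {m : ℕ} {f : ℝ → ℝ}
    (hf : ContDiffOn ℝ m f (Icc a b)) {x : Fin m → ℝ} (hx : StrictMono x)
    (hmem : ∀ j, x j ∈ Icc a b) (hzero : ∀ j, f (x j) = 0)
    (hK : ∀ y ∈ Icc a b, |iteratedDerivWithin m f (Icc a b) y| ≤ K) :
    ∀ i ≤ m, ∀ y ∈ Icc a b, |iteratedDerivWithin i f (Icc a b) y| ≤ K * (b - a) ^ (m - i) := by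
  induction m generalizing f with
  | zero =>
    intro i hi y hy
    obtain rfl : i = 0 := by omega
    simpa using hK y hy
  | succ m ih =>
    obtain ⟨z, hz, hzmem, hzzero⟩ :=
      exists_strictMono_derivWithin_eq_zero hf.continuousOn hx hmem hzero
    have hderiv : ∀ i ≤ m, ∀ y ∈ Icc a b,
        |iteratedDerivWithin (i + 1) f (Icc a b) y| ≤ K * (b - a) ^ (m - i) := by
      simp only [iteratedDerivWithin_succ'] at hK ⊢
      exact ih (hf.derivWithin (uniqueDiffOn_Icc hab) (by norm_cast)) hz hzmem hzzero hK
    rintro (_ | i) hi y hy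
    · have hmvt := (convex_Icc a b).norm_image_sub_le_of_norm_derivWithin_le
        (hf.differentiableOn (by simp))
        (fun y hy => by
          simpa only [zero_add, iteratedDerivWithin_one, Real.norm_eq_abs]
            using hderiv 0 m.zero_le y hy)
        (hmem 0) hy
      rw [hzero, sub_zero, Real.norm_eq_abs, Real.norm_eq_abs] at hmvt
      have hK0 : 0 ≤ K * (b - a) ^ (m - 0) := (abs_nonneg _).trans (hderiv 0 m.zero_le y hy)
      rw [iteratedDerivWithin_zero]
      calc |f y| ≤ K * (b - a) ^ (m - 0) * |y - x 0| := hmvt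
        _ ≤ K * (b - a) ^ (m - 0) * (b - a) := by
          gcongr
          exact abs_sub_le_of_le_of_le hy.1 hy.2 (hmem 0).1 (hmem 0).2
        _ = K * (b - a) ^ (m + 1 - 0) := by simp only [Nat.sub_zero]; ring
    · rw [Nat.add_sub_add_right]
      exact hderiv i (by omega) y hy

theorem equispaced_node_mem_Icc {a b : ℝ} {p j : ℕ} (hab : a ≤ b) (hj : j ≤ p) :
    a + (j : ℝ) * (b - a) / (p : ℝ) ∈ Icc a b := by
  have hjp : (j : ℝ) / p ≤ 1 := div_le_one_of_le₀ (by exact_mod_cast hj) (Nat.cast_nonneg p)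
  have hj0 : 0 ≤ (j : ℝ) / p := by positivity
  rw [mul_div_right_comm]
  constructor <;> nlinarith

theorem exists_abs_derivative_eval_le_of_nodes {p : ℕ} (hp : 1 ≤ p) :
    ∃ L : ℝ, 0 ≤ L ∧ ∀ Q : Polynomial ℝ, Q.degree ≤ p → ∀ V : ℝ,
      (∀ j ≤ p, |Q.eval ((j : ℝ) / (p : ℝ))| ≤ V) →
      ∀ x ∈ Icc (0 : ℝ) 1, |Q.derivative.eval x| ≤ L * V := by
  set s := Finset.range (p + 1) with hs
  set node : ℕ → ℝ := fun j => (j : ℝ) / (p : ℝ)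
  have hinj : InjOn node s := fun i _ j _ h => by
    exact_mod_cast (div_left_inj' (by positivity : (p : ℝ) ≠ 0)).mp h
  have hbasis : ∀ i, ∃ B : ℝ, ∀ x ∈ Icc (0 : ℝ) 1,
      |(Lagrange.basis s node i).derivative.eval x| ≤ B := fun i =>
    isCompact_Icc.exists_bound_of_continuousOn (Polynomial.continuous _).continuousOn
  choose B hB using hbasis
  refine ⟨∑ i ∈ s, |B i|, by positivity, fun Q hQ V hV x hx => ?_⟩
  have hdeg : Q.degree < s.card := by
    rw [hs, Finset.card_range]
    exact hQ.trans_lt (by exact_mod_cast p.lt_succ_self)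
  have hexpand : Q.derivative.eval x
      = ∑ i ∈ s, Q.eval (node i) * (Lagrange.basis s node i).derivative.eval x := by
    conv_lhs => rw [Lagrange.eq_interpolate hinj hdeg]
    simp [Lagrange.interpolate_apply, Polynomial.eval_finsetSum]
  rw [hexpand, Finset.sum_mul]
  refine (Finset.abs_sum_le_sum_abs _ _).trans (Finset.sum_le_sum fun i hi => ?_)
  rw [abs_mul, mul_comm]
  exact mul_le_mul ((hB i x hx).trans (le_abs_self _))
    (hV i (Nat.lt_succ_iff.mp (Finset.mem_range.mp hi))) (abs_nonneg _) (abs_nonneg _)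

namespace IsEquispacedInterpolant

variable {p : ℕ} {a b : ℝ} {v : ℝ → ℝ} {q : Polynomial ℝ}

theorem abs_iteratedDerivWithin_sub_le {K : ℝ} (hq : IsEquispacedInterpolant p a b v q)
    (hp : 1 ≤ p) (hab : a < b) (hv : ContDiffOn ℝ (p + 1) v (Icc a b))
    (hK : ∀ y ∈ Icc a b, |iteratedDerivWithin (p + 1) v (Icc a b) y| ≤ K) :
    ∀ i ≤ p + 1, ∀ y ∈ Icc a b,
      |iteratedDerivWithin i (fun y => v y - q.eval y) (Icc a b) y|
        ≤ K * (b - a) ^ (p + 1 - i) := by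
  have : (0 : ℝ) < p := by exact_mod_cast hp
  have : 0 < b - a := sub_pos.mpr hab
  have huniq : UniqueDiffOn ℝ (Icc a b) := uniqueDiffOn_Icc hab
  have hqdeg : q.degree < ((p + 1 : ℕ) : WithBot ℕ) :=
    hq.degree_le.trans_lt (by exact_mod_cast p.lt_succ_self)
  refine abs_iteratedDerivWithin_le_of_zeros hab
    (x := fun j : Fin (p + 1) => a + (j : ℝ) * (b - a) / (p : ℝ))
    ((by exact_mod_cast hv : ContDiffOn ℝ ((p + 1 : ℕ) : ℕ∞) v (Icc a b)).sub
      (contDiff_polynomial_eval q).contDiffOn) ?_ ?_ ?_ ?_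
  · intro i j hij
    have : ((i : ℕ) : ℝ) < ((j : ℕ) : ℝ) := by exact_mod_cast hij
    dsimp only
    gcongr
  · exact fun j => equispaced_node_mem_Icc hab.le j.is_le
  · exact fun j => sub_eq_zero.mpr (hq.eval_node j j.is_le).symm
  · intro y hy
    have hsub := iteratedDerivWithin_sub (n := p + 1) hy huniq
      (hv.contDiffWithinAt hy) (contDiff_polynomial_eval q).contDiffWithinAt
    rw [show (fun y => v y - q.eval y) = v - fun y => q.eval y from rfl, hsub,
      iteratedDerivWithin_polynomial_eval_eq_zero huniq hqdeg hy, sub_zero]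
    exact hK y hy

theorem leftSingularOn_sub_of_smooth {σ K : ℝ} (hq : IsEquispacedInterpolant p a b v q)
    (hp : 1 ≤ p) (hσ : σ ≤ 1) (hab : a < b) (hv : ContDiffOn ℝ (p + 1) v (Icc a b))
    (hK : ∀ y ∈ Icc a b, |iteratedDerivWithin (p + 1) v (Icc a b) y| ≤ K) :
    LeftSingularOn σ (K * (b - a) ^ (p + 1)) a b fun y => v y - q.eval y := by
  have hba : 0 < b - a := sub_pos.mpr hab
  have hK0 : 0 ≤ K := (abs_nonneg _).trans (hK a (left_mem_Icc.mpr hab.le))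
  have herr := hq.abs_iteratedDerivWithin_sub_le hp hab hv hK
  refine .of_lipschitz hσ (by positivity) (fun x hx => ?_) fun x hx y hy => ?_
  · simpa using herr 0 (Nat.zero_le _) x hx
  · have hdiff : DifferentiableOn ℝ (fun y => v y - q.eval y) (Icc a b) :=
      (hv.differentiableOn (by simp)).sub q.differentiable.differentiableOn
    have hmvt := (convex_Icc a b).norm_image_sub_le_of_norm_derivWithin_le hdiff
      (fun y hy => by simpa [iteratedDerivWithin_one] using herr 1 (by omega) y hy) hx hy
    rwa [pow_succ, mul_div_assoc, mul_div_cancel_right₀ _ hba.ne']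

theorem exists_abs_derivative_eval_le (hp : 1 ≤ p) :
    ∃ L : ℝ, 0 ≤ L ∧ ∀ {a b c V : ℝ} {v : ℝ → ℝ} {q : Polynomial ℝ}, a < b →
      IsEquispacedInterpolant p a b v q → (∀ x ∈ Icc a b, |v x - c| ≤ V) →
      ∀ x ∈ Icc a b, |q.derivative.eval x| ≤ L * V / (b - a) := by
  obtain ⟨L, hL0, hL⟩ := exists_abs_derivative_eval_le_of_nodes hp
  refine ⟨L, hL0, fun {a b c V v q} hab hq hV x hx => ?_⟩
  have hba : 0 < b - a := sub_pos.mpr hab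
  set φ : Polynomial ℝ := Polynomial.C (b - a) * Polynomial.X + Polynomial.C a with hφ
  set Q : Polynomial ℝ := (q - Polynomial.C c).comp φ with hQ
  have hQdeg : Q.degree ≤ p := by
    refine Polynomial.degree_le_of_natDegree_le (Polynomial.natDegree_comp_le.trans ?_)
    rw [Polynomial.natDegree_sub_C]
    exact (Nat.mul_le_mul (Polynomial.natDegree_le_of_degree_le hq.degree_le)
      Polynomial.natDegree_linear_le).trans_eq (mul_one p)
  have hQnode : ∀ j ≤ p, |Q.eval ((j : ℝ) / (p : ℝ))| ≤ V := by
    intro j hj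
    have heval : Q.eval ((j : ℝ) / p) = v (a + (j : ℝ) * (b - a) / p) - c := by
      rw [← hq.eval_node j hj]
      simp only [hQ, hφ, Polynomial.eval_comp, Polynomial.eval_sub, Polynomial.eval_add,
        Polynomial.eval_mul, Polynomial.eval_C, Polynomial.eval_X]
      congr 2
      ring
    rw [heval]
    exact hV _ (equispaced_node_mem_Icc hab.le hj)
  have hderiv : Q.derivative.eval ((x - a) / (b - a)) = (b - a) * q.derivative.eval x := by
    simp [hQ, hφ, Polynomial.derivative_comp, Polynomial.eval_comp, mul_div_cancel₀ _ hba.ne']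
  have h := hL Q hQdeg V hQnode ((x - a) / (b - a))
    ⟨div_nonneg (by linarith [hx.1]) hba.le, (div_le_one hba).mpr (by linarith [hx.2])⟩
  rwa [hderiv, abs_mul, abs_of_pos hba, mul_comm, ← le_div_iff₀ hba] at h

end IsEquispacedInterpolant

namespace IsWeaklySingular

variable {T σ C₀ : ℝ} {p : ℕ} {v : ℝ → ℝ}

theorem abs_iteratedDerivWithin_Icc_le {a b y : ℝ} {ℓ : ℕ} (hv : IsWeaklySingular T σ C₀ p v)
    (hσ : σ ≤ 1) (hC₀ : 0 ≤ C₀) (hℓ : 1 ≤ ℓ) (hℓp : ℓ ≤ p + 1) (ha : 0 < a) (hab : a < b)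
    (hbT : b ≤ T) (hy : y ∈ Icc a b) :
    |iteratedDerivWithin ℓ v (Icc a b) y| ≤ C₀ * (1 + T ^ (ℓ - σ)) * a ^ (σ - ℓ) := by
  have hsub : Icc a b ⊆ Ioc 0 T := fun z hz => ⟨ha.trans_le hz.1, hz.2.trans hbT⟩
  have : 0 < T := ha.trans (hab.trans_le hbT)
  have hℓ1 : (1 : ℝ) ≤ ℓ := by exact_mod_cast hℓ
  rw [iteratedDerivWithin_eq_of_subset hsub (uniqueDiffOn_Icc hab) (uniqueDiffOn_Ioc 0 T)
    (hv.contDiffOn.of_le (by exact_mod_cast hℓp)) hy]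
  have hpow := one_add_rpow_le_mul_rpow ha hy.1 (hsub hy).2 (by linarith : σ - ℓ ≤ 0)
  rw [neg_sub] at hpow
  calc |iteratedDerivWithin ℓ v (Ioc 0 T) y| ≤ C₀ * (1 + y ^ (σ - ℓ)) :=
        hv.abs_iteratedDerivWithin_le y (hsub hy) ℓ hℓp
    _ ≤ C₀ * ((1 + T ^ (ℓ - σ)) * a ^ (σ - ℓ)) := by gcongr
    _ = _ := by ring

theorem abs_sub_le {x y : ℝ} (hv : IsWeaklySingular T σ C₀ p v) (hσ : σ ≤ 1) (hC₀ : 0 ≤ C₀)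
    (hx : 0 < x) (hxy : x ≤ y) (hyT : y ≤ T) :
    |v y - v x| ≤ C₀ * (1 + T ^ (1 - σ)) * x ^ (σ - 1) * (y - x) := by
  rcases hxy.eq_or_lt with rfl | hlt
  · simp
  have hsub : Icc x y ⊆ Ioc 0 T := fun z hz => ⟨hx.trans_le hz.1, hz.2.trans hyT⟩
  have hderiv : ∀ z ∈ Icc x y,
      ‖derivWithin v (Icc x y) z‖ ≤ C₀ * (1 + T ^ (1 - σ)) * x ^ (σ - 1) := fun z hz => by
    simpa [iteratedDerivWithin_one] using
      hv.abs_iteratedDerivWithin_Icc_le hσ hC₀ le_rfl (by omega) hx hlt hyT hz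
  have hmvt := (convex_Icc x y).norm_image_sub_le_of_norm_derivWithin_le
    ((hv.contDiffOn.mono hsub).differentiableOn (by simp)) hderiv (left_mem_Icc.mpr hxy)
    (right_mem_Icc.mpr hxy)
  rwa [Real.norm_eq_abs, Real.norm_eq_abs, abs_of_nonneg (sub_nonneg.mpr hxy)] at hmvt

theorem leftSingularOn_sub_const {b : ℝ} (hv : IsWeaklySingular T σ C₀ p v) (hσ0 : 0 < σ)
    (hσ : σ ≤ 1) (hC₀ : 0 ≤ C₀) (hb : 0 < b) (hbT : b ≤ T) :
    LeftSingularOn σ (C₀ * (1 + T ^ (1 - σ)) * b ^ σ) 0 b fun x => v x - v 0 where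
  abs_le x hx := by
    have hT : 0 < T := hb.trans_le hbT
    rcases hx.1.eq_or_lt with rfl | hx0
    · rw [sub_self, abs_zero]
      positivity
    · calc |v x - v 0| ≤ C₀ * 1 * x ^ σ := by
            simpa using hv.abs_sub_zero_le x ⟨hx0, hx.2.trans hbT⟩
        _ ≤ C₀ * (1 + T ^ (1 - σ)) * b ^ σ := by
          have hTσ : 0 ≤ T ^ (1 - σ) := by positivity
          have hxb : x ≤ b := hx.2
          gcongr
          linarith
  abs_sub_le x y hx hxy hy := by
    have h := hv.abs_sub_le hσ hC₀ hx hxy (hy.trans hbT)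
    rwa [sub_sub_sub_cancel_right, sub_zero, sub_zero, mul_assoc (C₀ * (1 + T ^ (1 - σ))),
      ← Real.rpow_add hb, add_neg_cancel, Real.rpow_zero, mul_one]

theorem exists_interp_error_Icc_zero_le (hp : 1 ≤ p) (hσ0 : 0 < σ) (hσ : σ ≤ 1)
    (hC₀ : 0 ≤ C₀) (hT : 0 < T) :
    ∃ C : ℝ, 0 ≤ C ∧ ∀ {v : ℝ → ℝ}, IsWeaklySingular T σ C₀ p v →
      ∀ {b : ℝ} {q : Polynomial ℝ}, 0 < b → b ≤ T → IsEquispacedInterpolant p 0 b v q →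
        LeftSingularOn σ (C * b ^ σ) 0 b (fun x => v x - q.eval x) ∧
        ∀ x ∈ Ioc 0 b, |v x - q.eval x| ≤ C * x ^ σ := by
  obtain ⟨L, hL0, hL⟩ := IsEquispacedInterpolant.exists_abs_derivative_eval_le hp
  set C₁ := C₀ * (1 + T ^ (1 - σ))
  have : 0 ≤ C₁ := by positivity
  refine ⟨C₁ + L * C₁, by positivity, fun {v} hv {b q} hb hbT hq => ?_⟩
  have hv0 : LeftSingularOn σ (C₁ * b ^ σ) 0 b fun x => v x - v 0 :=
    hv.leftSingularOn_sub_const hσ0 hσ hC₀ hb hbT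
  have hq0 : q.eval 0 = v 0 := by simpa using hq.eval_node 0 p.zero_le
  have hlip : ∀ x ∈ Icc 0 b, ∀ y ∈ Icc 0 b,
      |q.eval y - q.eval x| ≤ L * C₁ * b ^ σ / (b - 0) * |y - x| := fun x hx y hy =>
    (convex_Icc 0 b).norm_image_sub_le_of_norm_hasDerivWithin_le
      (fun z _ => (q.hasDerivAt z).hasDerivWithinAt)
      (fun z hz => by simpa [mul_assoc] using hL hb hq hv0.abs_le z hz) hx hy
  have hqx : ∀ x ∈ Icc 0 b, |q.eval x - v 0| ≤ L * C₁ * b ^ σ / b * x := fun x hx => by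
    simpa [hq0, abs_of_nonneg hx.1] using hlip 0 (left_mem_Icc.mpr hb.le) x hx
  have hqsing : LeftSingularOn σ (L * C₁ * b ^ σ) 0 b fun x => q.eval x - v 0 := by
    refine .of_lipschitz hσ (by positivity) (fun x hx => (hqx x hx).trans ?_) (by simpa using hlip)
    rw [div_mul_eq_mul_div]
    exact div_le_of_le_mul₀ hb.le (by positivity) (by have := hx.2; gcongr)
  refine ⟨by simpa [add_mul] using hv0.sub hqsing, fun x hx => ?_⟩
  have hvx : |v x - v 0| ≤ C₁ * x ^ σ :=
    (hv.leftSingularOn_sub_const hσ0 hσ hC₀ hx.1 (hx.2.trans hbT)).abs_le x ⟨hx.1.le, le_rfl⟩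
  have hpow : b ^ σ / b * x ≤ x ^ σ := by
    calc b ^ σ / b * x = b ^ (σ - 1) * x := by rw [Real.rpow_sub_one hb.ne']
      _ ≤ x ^ (σ - 1) * x := by
        have := Real.rpow_le_rpow_of_nonpos hx.1 hx.2 (by linarith : σ - 1 ≤ 0)
        have := hx.1
        gcongr
      _ = x ^ σ := by rw [Real.rpow_sub_one hx.1.ne', div_mul_cancel₀ _ hx.1.ne']
  calc |v x - q.eval x| ≤ |v x - v 0| + |q.eval x - v 0| := by
        simpa using abs_sub (v x - v 0) (q.eval x - v 0)
    _ ≤ C₁ * x ^ σ + L * C₁ * (b ^ σ / b * x) :=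
      add_le_add hvx ((hqx x (Ioc_subset_Icc_self hx)).trans_eq (by ring))
    _ ≤ C₁ * x ^ σ + L * C₁ * x ^ σ := by gcongr
    _ = (C₁ + L * C₁) * x ^ σ := by ring

theorem leftSingularOn_interp_error_of_pos {a b R : ℝ} {q : Polynomial ℝ}
    (hv : IsWeaklySingular T σ C₀ p v) (hp : 1 ≤ p) (hσ : σ ≤ 1)
    (hC₀ : 0 ≤ C₀) (ha : 0 < a) (hab : a < b) (hbT : b ≤ T) (hbR : b ≤ R * a)
    (hq : IsEquispacedInterpolant p a b v q) :
    LeftSingularOn σ (C₀ * (1 + T ^ ((p + 1 : ℕ) - σ)) * R ^ (p + 1) * (a ^ σ *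
      ((b - a) / b) ^ (p + 1))) a b fun x => v x - q.eval x := by
  have : 0 < b - a := sub_pos.mpr hab
  have hb : 0 < b := ha.trans hab
  have hT : 0 < T := hb.trans_le hbT
  have hsub : Icc a b ⊆ Ioc 0 T := fun z hz => ⟨ha.trans_le hz.1, hz.2.trans hbT⟩
  have hratio : (b - a) / a ≤ R * ((b - a) / b) := by
    rw [← mul_div_assoc, div_le_div_iff₀ ha hb]
    nlinarith
  refine (hq.leftSingularOn_sub_of_smooth hp hσ hab (hv.contDiffOn.mono hsub) fun y hy =>
    hv.abs_iteratedDerivWithin_Icc_le hσ hC₀ (by omega) le_rfl ha hab hbT hy).mono ?_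
  calc C₀ * (1 + T ^ ((p + 1 : ℕ) - σ)) * a ^ (σ - (p + 1 : ℕ)) * (b - a) ^ (p + 1)
      = C₀ * (1 + T ^ ((p + 1 : ℕ) - σ)) * (a ^ σ * ((b - a) / a) ^ (p + 1)) := by
        rw [Real.rpow_sub_natCast ha.ne', div_pow]
        ring
    _ ≤ C₀ * (1 + T ^ ((p + 1 : ℕ) - σ)) * (a ^ σ * (R * ((b - a) / b)) ^ (p + 1)) := by gcongr
    _ = _ := by rw [mul_pow]; ring

theorem exists_interp_error_le (hp : 1 ≤ p) (hσ0 : 0 < σ) (hσ : σ ≤ 1) (hC₀ : 0 ≤ C₀)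
    (hT : 0 < T) {R : ℝ} (hR : 0 ≤ R) :
    ∃ C : ℝ, 0 ≤ C ∧ ∀ {v : ℝ → ℝ}, IsWeaklySingular T σ C₀ p v →
      ∀ {a b : ℝ} {q : Polynomial ℝ}, 0 ≤ a → a < b → b ≤ T → (0 < a → b ≤ R * a) →
        IsEquispacedInterpolant p a b v q →
        LeftSingularOn σ (C * (b ^ σ * ((b - a) / b) ^ (p + 1))) a b
          (fun x => v x - q.eval x) ∧
        ∀ x ∈ Ioc a b, |v x - q.eval x| ≤ C * (x ^ σ * ((b - a) / b) ^ (p + 1)) := by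
  obtain ⟨C, hC, hzero⟩ := exists_interp_error_Icc_zero_le hp hσ0 hσ hC₀ hT
  set C' := C₀ * (1 + T ^ ((p + 1 : ℕ) - σ)) * R ^ (p + 1)
  have hC' : 0 ≤ C' := by positivity
  refine ⟨C + C', by positivity, fun {v} hv {a b q} ha hab hbT hbR hq => ?_⟩
  have hb : 0 < b := ha.trans_lt hab
  have hba : 0 < b - a := sub_pos.mpr hab
  rcases ha.eq_or_lt with rfl | ha0
  · obtain ⟨hsing, hpt⟩ := hzero hv hb hbT hq
    rw [sub_zero, div_self hb.ne', one_pow, mul_one]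
    refine ⟨hsing.mono (by gcongr; linarith), fun x hx => (hpt x hx).trans ?_⟩
    have := Real.rpow_nonneg hx.1.le σ
    rw [mul_one]
    gcongr
    linarith
  · have hsing := hv.leftSingularOn_interp_error_of_pos hp hσ hC₀ ha0 hab hbT (hbR ha0) hq
    have hle : ∀ x ∈ Ioc a b, C' * (a ^ σ * ((b - a) / b) ^ (p + 1))
        ≤ (C + C') * (x ^ σ * ((b - a) / b) ^ (p + 1)) := fun x hx => by
      have := hx.1.le
      have : 0 ≤ x := ha.trans this
      gcongr
      linarith
    exact ⟨hsing.mono (hle b (right_mem_Ioc.mpr hab)), fun x hx =>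
      (hsing.abs_le x (Ioc_subset_Icc_self hx)).trans (hle x hx)⟩

end IsWeaklySingular

/-! ### The Riemann–Liouville fractional integral -/

/-- The Riemann–Liouville fractional integral of order `β` based at `0`; its derivative for
`β = 1 - γ` is the fractional derivative of order `γ`. -/
noncomputable def rlIntegral (β : ℝ) (f : ℝ → ℝ) (t : ℝ) : ℝ :=
  ∫ s in (0 : ℝ)..t, rlKernel β (t - s) * f s

theorem intervalIntegrable_rlKernel {β : ℝ} (hβ : 0 < β) (x y : ℝ) :
    IntervalIntegrable (rlKernel β) volume x y :=
  (intervalIntegral.intervalIntegrable_rpow' (by linarith)).div_const _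

theorem abs_rlKernel_le {γ x u : ℝ} (hγ0 : 0 ≤ γ) (hγ1 : γ < 1) (hx : 0 < x) (hxu : x ≤ u) :
    |rlKernel (1 - γ) u| ≤ x ^ (-γ) / Real.Gamma (1 - γ) := by
  have hΓ : 0 < Real.Gamma (1 - γ) := Real.Gamma_pos_of_pos (by linarith)
  rw [rlKernel, abs_div, abs_of_pos hΓ, abs_of_pos (Real.rpow_pos_of_pos (hx.trans_le hxu) _),
    sub_sub_cancel_left]
  gcongr ?_ / _
  exact Real.rpow_le_rpow_of_nonpos hx hxu (by linarith)

theorem abs_rlKernel_sub_le {γ x h : ℝ} (hγ0 : 0 ≤ γ) (hγ1 : γ < 1) (hx : 0 < x) (hh : 0 ≤ h) :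
    |rlKernel (1 - γ) (x + h) - rlKernel (1 - γ) x|
      ≤ γ / Real.Gamma (1 - γ) * h * x ^ (-γ - 1) := by
  have hΓ : 0 < Real.Gamma (1 - γ) := Real.Gamma_pos_of_pos (by linarith)
  rw [rlKernel, rlKernel, ← sub_div, abs_div, abs_of_pos hΓ, sub_sub_cancel_left,
    div_le_iff₀ hΓ]
  refine (abs_rpow_neg_sub_rpow_neg_le hγ0 hx hh).trans_eq ?_
  field_simp

theorem abs_integral_le_of_abs_le_rpow_mul_rpow {c d t a W : ℝ} (hc : -1 < c) (ha : 0 ≤ a)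
    (hat : a ≤ t) (hW : 0 ≤ W) (hd : IntervalIntegrable (fun s => (t - s) ^ d) volume 0 a)
    {g : ℝ → ℝ} (hg : ∀ s ∈ Ioo 0 a, |g s| ≤ W * (s ^ c * (t - s) ^ d)) :
    |∫ s in (0 : ℝ)..a, g s| ≤ W * ((2 ^ |c| + 2 ^ |d|) *
      (t ^ d * (a ^ (c + 1) / (c + 1)) + t ^ c * ∫ s in (0 : ℝ)..a, (t - s) ^ d)) := by
  have hci : IntervalIntegrable (fun s : ℝ => s ^ c) volume 0 a :=
    intervalIntegral.intervalIntegrable_rpow' hc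
  have hne : ∀ᵐ s : ℝ, s ≠ a := by simp [ae_iff]
  have hbound : ∀ᵐ s : ℝ, s ∈ Ioc 0 a →
      ‖g s‖ ≤ W * ((2 ^ |c| + 2 ^ |d|) * (t ^ d * s ^ c + t ^ c * (t - s) ^ d)) := by
    filter_upwards [hne] with s hsa hs
    have hsa : s < a := hs.2.lt_of_ne hsa
    refine (hg s ⟨hs.1, hsa⟩).trans ?_
    gcongr ?_ * ?_
    exact rpow_mul_rpow_le_of_add_eq hs.1 (sub_pos.mpr (hsa.trans_le hat)) (add_sub_cancel s t) c d
  have hle := intervalIntegral.norm_integral_le_of_norm_le ha hbound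
    ((((hci.const_mul _).add (hd.const_mul _)).const_mul _).const_mul _)
  rwa [Real.norm_eq_abs, intervalIntegral.integral_const_mul, intervalIntegral.integral_const_mul,
    intervalIntegral.integral_add (hci.const_mul _) (hd.const_mul _),
    intervalIntegral.integral_const_mul, intervalIntegral.integral_const_mul,
    integral_rpow (Or.inl hc), Real.zero_rpow (by linarith), sub_zero] at hle

theorem exists_abs_integral_le_of_beta {c d : ℝ} (hc : -1 < c) (hd : -1 < d) :
    ∃ C : ℝ, 0 ≤ C ∧ ∀ {ℓ W : ℝ} {g : ℝ → ℝ}, 0 < ℓ → 0 ≤ W →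
      (∀ s ∈ Ioo 0 ℓ, |g s| ≤ W * (s ^ c * (ℓ - s) ^ d)) →
      |∫ s in (0 : ℝ)..ℓ, g s| ≤ C * (W * ℓ ^ (c + d + 1)) := by
  have hc1 : 0 < c + 1 := by linarith
  have hd1 : 0 < d + 1 := by linarith
  refine ⟨(2 ^ |c| + 2 ^ |d|) * (1 / (c + 1) + 1 / (d + 1)), by positivity,
    fun {ℓ W g} hℓ hW hg => ?_⟩
  have hdi : IntervalIntegrable (fun s : ℝ => (ℓ - s) ^ d) volume 0 ℓ := by
    simpa using (intervalIntegral.intervalIntegrable_rpow' (a := ℓ) (b := 0) hd).comp_sub_left ℓ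
  refine (abs_integral_le_of_abs_le_rpow_mul_rpow hc hℓ.le le_rfl hW hdi hg).trans_eq ?_
  rw [intervalIntegral.integral_comp_sub_left (fun x : ℝ => x ^ d) ℓ, integral_rpow (Or.inl hd),
    sub_self, sub_zero, Real.zero_rpow hd1.ne', sub_zero, mul_div_assoc', mul_div_assoc',
    ← Real.rpow_add hℓ, ← Real.rpow_add hℓ, ← add_assoc, ← add_assoc, add_comm d c]
  ring

theorem exists_abs_integral_le_of_history {γ c : ℝ} (hγ : 0 < γ) (hc : -1 < c) :
    ∃ C : ℝ, 0 ≤ C ∧ ∀ {a t W : ℝ} {g : ℝ → ℝ}, 0 ≤ a → a < t → 0 ≤ W →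
      (∀ s ∈ Ioo 0 a, |g s| ≤ W * (s ^ c * (t - s) ^ (-γ - 1))) →
      |∫ s in (0 : ℝ)..a, g s| ≤ C * (W * (t ^ c * (t - a) ^ (-γ))) := by
  have hc1 : 0 < c + 1 := by linarith
  refine ⟨(2 ^ |c| + 2 ^ |-γ - 1|) * (1 / (c + 1) + 1 / γ), by positivity,
    fun {a t W g} ha hat hW hg => ?_⟩
  have ht : 0 < t := ha.trans_lt hat
  have hta : 0 < t - a := sub_pos.mpr hat
  have hdi : IntervalIntegrable (fun s : ℝ => (t - s) ^ (-γ - 1)) volume 0 a := by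
    refine ContinuousOn.intervalIntegrable fun s hs => ?_
    rw [uIcc_of_le ha] at hs
    exact ((continuousAt_const.sub continuousAt_id).rpow_const
      (Or.inl (by simpa using (by linarith [hs.2] : t - s ≠ 0)))).continuousWithinAt
  have hmono : t ^ (-γ) ≤ (t - a) ^ (-γ) :=
    Real.rpow_le_rpow_of_nonpos hta (by linarith) (by linarith)
  have hfirst : t ^ (-γ - 1) * (a ^ (c + 1) / (c + 1))
      ≤ t ^ c * (t - a) ^ (-γ) * (1 / (c + 1)) := by
    calc t ^ (-γ - 1) * (a ^ (c + 1) / (c + 1)) ≤ t ^ (-γ - 1) * (t ^ (c + 1) / (c + 1)) := by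
          gcongr
      _ = t ^ c * t ^ (-γ) * (1 / (c + 1)) := by
        rw [mul_div_assoc', ← Real.rpow_add ht, ← Real.rpow_add ht, mul_one_div]
        ring_nf
      _ ≤ _ := by gcongr
  have hsecond : ∫ s in (0 : ℝ)..a, (t - s) ^ (-γ - 1) ≤ (t - a) ^ (-γ) * (1 / γ) := by
    rw [intervalIntegral.integral_comp_sub_left (fun x : ℝ => x ^ (-γ - 1)) t,
      integral_rpow (Or.inr ⟨by linarith, by
        rw [uIcc_of_le (by linarith)]; exact fun h => by linarith [h.1]⟩),
      sub_zero, sub_add_cancel, div_neg, ← neg_div, mul_one_div]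
    have := Real.rpow_pos_of_pos ht (-γ)
    gcongr
    linarith
  refine (abs_integral_le_of_abs_le_rpow_mul_rpow hc ha hat.le hW hdi hg).trans ?_
  calc W * ((2 ^ |c| + 2 ^ |-γ - 1|) * (t ^ (-γ - 1) * (a ^ (c + 1) / (c + 1))
        + t ^ c * ∫ s in (0 : ℝ)..a, (t - s) ^ (-γ - 1)))
      ≤ W * ((2 ^ |c| + 2 ^ |-γ - 1|) * (t ^ c * (t - a) ^ (-γ) * (1 / (c + 1))
        + t ^ c * ((t - a) ^ (-γ) * (1 / γ)))) := by gcongr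
    _ = _ := by ring

theorem integral_sub_mul_increment {κ η : ℝ → ℝ} {a b t h : ℝ}
    (hκ : ∀ x y, IntervalIntegrable κ volume x y) (ha : 0 ≤ a) (hat : a ≤ t) (hh : 0 ≤ h)
    (htb : t + h ≤ b) (hη : ContinuousOn η (Icc 0 b)) :
    (∫ s in (0 : ℝ)..(t + h), κ (t + h - s) * η s) - ∫ s in (0 : ℝ)..t, κ (t - s) * η s
      = (∫ s in (0 : ℝ)..a, (κ (t + h - s) - κ (t - s)) * η s)
        + (∫ u in (0 : ℝ)..(t - a), κ u * (η (t + h - u) - η (t - u)))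
        + ∫ u in (t - a)..(t + h - a), κ u * η (t + h - u) := by
  have hint : ∀ d x y : ℝ, 0 ≤ x → x ≤ y → y ≤ b →
      IntervalIntegrable (fun s => κ (d - s) * η s) volume x y := fun d x y hx hxy hy =>
    IntervalIntegrable.mul_continuousOn
      (by simpa using (hκ (d - x) (d - y)).comp_sub_left d)
      (hη.mono (by rw [uIcc_of_le hxy]; exact Icc_subset_Icc hx hy))
  have hflip : ∀ d x y : ℝ, 0 ≤ d - y → x ≤ y → d - x ≤ b →
      IntervalIntegrable (fun u => κ u * η (d - u)) volume x y := fun d x y hy hxy hx =>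
    (hκ x y).mul_continuousOn
      (hη.comp (continuous_const.sub continuous_id).continuousOn fun u hu => by
        rw [uIcc_of_le hxy] at hu
        exact ⟨by linarith [hu.2], by linarith [hu.1]⟩)
  have hreflect : ∀ d, ∫ s in a..d, κ (d - s) * η s = ∫ u in (0 : ℝ)..(d - a), κ u * η (d - u) :=
    fun d => by
      simpa using intervalIntegral.integral_comp_sub_left (a := a) (b := d)
        (fun u => κ u * η (d - u)) d
  rw [← intervalIntegral.integral_add_adjacent_intervals
      (hint (t + h) 0 a le_rfl ha (by linarith)) (hint (t + h) a (t + h) ha (by linarith) htb),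
    ← intervalIntegral.integral_add_adjacent_intervals
      (hint t 0 a le_rfl ha (by linarith)) (hint t a t ha hat (by linarith)),
    hreflect, hreflect,
    ← intervalIntegral.integral_add_adjacent_intervals
      (hflip (t + h) 0 (t - a) (by linarith) (by linarith) (by linarith))
      (hflip (t + h) (t - a) (t + h - a) (by linarith) (by linarith) (by linarith))]
  simp only [sub_mul, mul_sub]
  rw [intervalIntegral.integral_sub (hint (t + h) 0 a le_rfl ha (by linarith))
      (hint t 0 a le_rfl ha (by linarith)),
    intervalIntegral.integral_sub
      (hflip (t + h) 0 (t - a) (by linarith) (by linarith) (by linarith))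
      (hflip t 0 (t - a) (by linarith) (by linarith) (by linarith))]
  ring

/-! ### Pointwise bound for the fractional derivative -/

section Pointwise

variable {γ σ c : ℝ}

theorem exists_abs_history_le (hγ0 : 0 < γ) (hγ1 : γ < 1) (hc : -1 < c) :
    ∃ C : ℝ, 0 ≤ C ∧ ∀ {a t h H : ℝ} {η : ℝ → ℝ}, 0 ≤ a → a < t → 0 ≤ h → 0 ≤ H →
      (∀ s ∈ Ioc 0 a, |η s| ≤ H * s ^ c) →
      |∫ s in (0 : ℝ)..a, (rlKernel (1 - γ) (t + h - s) - rlKernel (1 - γ) (t - s)) * η s|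
        ≤ C * (H * t ^ c * (t - a) ^ (-γ) * h) := by
  have : 0 < Real.Gamma (1 - γ) := Real.Gamma_pos_of_pos (by linarith)
  obtain ⟨A, hA, hhist⟩ := exists_abs_integral_le_of_history hγ0 hc
  refine ⟨A * (γ / Real.Gamma (1 - γ)), by positivity, fun {a t h H η} ha hat hh hH hη => ?_⟩
  refine (hhist ha hat (W := γ / Real.Gamma (1 - γ) * h * H) (by positivity)
    fun s hs => ?_).trans_eq (by ring)
  have hts : 0 < t - s := by linarith [hs.2]
  have hker := abs_rlKernel_sub_le hγ0.le hγ1 hts hh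
  rw [sub_add_eq_add_sub] at hker
  rw [abs_mul]
  calc _ ≤ γ / Real.Gamma (1 - γ) * h * (t - s) ^ (-γ - 1) * (H * s ^ c) :=
        mul_le_mul hker (hη s (Ioo_subset_Ioc_self hs)) (abs_nonneg _) (by positivity)
    _ = _ := by ring

theorem exists_abs_increment_le (hγ0 : 0 ≤ γ) (hγ1 : γ < 1) (hσ : 0 < σ) :
    ∃ C : ℝ, 0 ≤ C ∧ ∀ {a b t h M : ℝ} {η : ℝ → ℝ}, a < t → 0 ≤ h → t + h ≤ b →
      LeftSingularOn σ M a b η →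
      |∫ u in (0 : ℝ)..(t - a), rlKernel (1 - γ) u * (η (t + h - u) - η (t - u))|
        ≤ C * (M * (t - a) ^ (-γ) * h) := by
  have hΓ : 0 < Real.Gamma (1 - γ) := Real.Gamma_pos_of_pos (by linarith)
  obtain ⟨A, hA, hbeta⟩ :=
    exists_abs_integral_le_of_beta (by linarith : -1 < -γ) (by linarith : -1 < σ - 1)
  refine ⟨A / Real.Gamma (1 - γ), by positivity, fun {a b t h M η} hat hh htb hη => ?_⟩
  have hta : 0 < t - a := sub_pos.mpr hat
  have hba : 0 < b - a := by linarith
  have hM : 0 ≤ M := (abs_nonneg _).trans (hη.abs_le t ⟨hat.le, by linarith⟩)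
  have hpow : (b - a) ^ (-σ) * (t - a) ^ (-γ + (σ - 1) + 1) ≤ (t - a) ^ (-γ) := by
    calc (b - a) ^ (-σ) * (t - a) ^ (-γ + (σ - 1) + 1)
        ≤ (t - a) ^ (-σ) * (t - a) ^ (-γ + (σ - 1) + 1) := by
          gcongr ?_ * _
          exact Real.rpow_le_rpow_of_nonpos hta (by linarith) (by linarith)
      _ = (t - a) ^ (-γ) := by rw [← Real.rpow_add hta]; ring_nf
  refine (hbeta hta (W := M * (b - a) ^ (-σ) * h / Real.Gamma (1 - γ)) (by positivity)
    fun u hu => ?_).trans ?_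
  · have hinc := hη.abs_sub_le (t - u) (t + h - u) (by linarith [hu.2]) (by linarith)
      (by linarith [hu.1])
    rw [sub_right_comm t u a, show t + h - u - (t - u) = h by ring] at hinc
    rw [abs_mul]
    calc _ ≤ u ^ (-γ) / Real.Gamma (1 - γ) * (M * (b - a) ^ (-σ) * (t - a - u) ^ (σ - 1) * h) :=
          mul_le_mul (abs_rlKernel_le hγ0 hγ1 hu.1 le_rfl) hinc (abs_nonneg _)
            (div_nonneg (Real.rpow_nonneg hu.1.le _) hΓ.le)
      _ = _ := by ring
  · refine le_trans (le_of_eq ?_) (by gcongr : A / Real.Gamma (1 - γ) *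
      (M * ((b - a) ^ (-σ) * (t - a) ^ (-γ + (σ - 1) + 1)) * h) ≤ _)
    ring

theorem abs_boundary_le {a b t h M : ℝ} {η : ℝ → ℝ} (hγ0 : 0 ≤ γ) (hγ1 : γ < 1) (hat : a < t)
    (hh : 0 ≤ h) (htb : t + h ≤ b) (hη : ∀ x ∈ Icc a b, |η x| ≤ M) :
    |∫ u in (t - a)..(t + h - a), rlKernel (1 - γ) u * η (t + h - u)|
      ≤ 1 / Real.Gamma (1 - γ) * (M * (t - a) ^ (-γ) * h) := by
  have : 0 < Real.Gamma (1 - γ) := Real.Gamma_pos_of_pos (by linarith)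
  have hta : 0 < t - a := sub_pos.mpr hat
  have hle := intervalIntegral.norm_integral_le_of_norm_le_const (a := t - a) (b := t + h - a)
    (f := fun u => rlKernel (1 - γ) u * η (t + h - u))
    (C := (t - a) ^ (-γ) / Real.Gamma (1 - γ) * M) fun u hu => by
      rw [uIoc_of_le (by linarith)] at hu
      rw [Real.norm_eq_abs, abs_mul]
      exact mul_le_mul (abs_rlKernel_le hγ0 hγ1 hta hu.1.le)
        (hη _ ⟨by linarith [hu.2], by linarith [hu.1]⟩) (abs_nonneg _) (by positivity)
  rw [Real.norm_eq_abs, show t + h - a - (t - a) = h by ring, abs_of_nonneg hh] at hle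
  exact hle.trans_eq (by ring)

theorem exists_abs_rlIntegral_sub_le (hγ0 : 0 < γ) (hγ1 : γ < 1) (hσ : 0 < σ) (hc : -1 < c) :
    ∃ C : ℝ, 0 ≤ C ∧ ∀ {a b t h H M : ℝ} {η : ℝ → ℝ}, 0 ≤ a → a < t → 0 ≤ h → t + h ≤ b →
      0 ≤ H → ContinuousOn η (Icc 0 b) → (∀ s ∈ Ioc 0 a, |η s| ≤ H * s ^ c) →
      LeftSingularOn σ M a b η →
      |rlIntegral (1 - γ) η (t + h) - rlIntegral (1 - γ) η t|
        ≤ C * (M + H * t ^ c) * (t - a) ^ (-γ) * h := by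
  have : 0 < Real.Gamma (1 - γ) := Real.Gamma_pos_of_pos (by linarith)
  obtain ⟨A, hA, hhist⟩ := exists_abs_history_le hγ0 hγ1 hc
  obtain ⟨B, hB, hincr⟩ := exists_abs_increment_le hγ0.le hγ1 hσ
  refine ⟨A + B + 1 / Real.Gamma (1 - γ), by positivity,
    fun {a b t h H M η} ha hat hh htb hH hη hηH hηM => ?_⟩
  have hM : 0 ≤ M := (abs_nonneg _).trans (hηM.abs_le t ⟨hat.le, by linarith⟩)
  have ht : 0 < t := ha.trans_lt hat
  have : 0 < t - a := sub_pos.mpr hat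
  rw [rlIntegral, rlIntegral, integral_sub_mul_increment
    (intervalIntegrable_rlKernel (by linarith)) ha hat.le hh htb hη]
  have hsum := (abs_add_three _ _ _).trans (add_le_add_three (hhist ha hat hh hH hηH)
    (hincr hat hh htb hηM) (abs_boundary_le hγ0.le hγ1 hat hh htb hηM.abs_le))
  refine hsum.trans ?_
  have hAM : 0 ≤ A * (M * (t - a) ^ (-γ) * h) := by positivity
  have hBH : 0 ≤ (B + 1 / Real.Gamma (1 - γ)) * (H * t ^ c * (t - a) ^ (-γ) * h) := by positivity
  linarith

theorem exists_abs_rl_deriv_le_of_leftSingularOn (hγ0 : 0 < γ) (hγ1 : γ < 1) (hσ : 0 < σ)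
    (hc : -1 < c) :
    ∃ C : ℝ, 0 ≤ C ∧ ∀ {a b t D H M : ℝ} {η : ℝ → ℝ}, 0 ≤ a → a < t → t < b → 0 ≤ H →
      ContinuousOn η (Icc 0 b) → (∀ s ∈ Ioc 0 a, |η s| ≤ H * s ^ c) →
      LeftSingularOn σ M a b η → HasDerivAt (rlIntegral (1 - γ) η) D t →
      |D| ≤ C * (M + H * t ^ c) * (t - a) ^ (-γ) := by
  obtain ⟨C, hC, hincr⟩ := exists_abs_rlIntegral_sub_le hγ0 hγ1 hσ hc
  refine ⟨C, hC, fun {a b t D H M η} ha hat htb hH hη hηH hηM hD => ?_⟩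
  have hslope := (hasDerivWithinAt_iff_tendsto_slope' self_notMem_Ioi).mp
    (hD.hasDerivWithinAt (s := Ioi t))
  refine le_of_tendsto hslope.abs ?_
  filter_upwards [Ioo_mem_nhdsGT htb] with y hy
  have hyt : 0 < y - t := sub_pos.mpr hy.1
  have hy' := hincr ha hat hyt.le (by linarith [hy.2]) hH hη hηH hηM
  rw [add_sub_cancel] at hy'
  rwa [slope_def_field, abs_div, abs_of_pos hyt, div_le_iff₀ hyt]

end Pointwise

/-! ### Square integrability on a mesh -/

section Mesh

variable {γ σ c : ℝ} {x : ℕ → ℝ}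

theorem intervalIntegrable_sub_rpow {a b d : ℝ} (hd : -1 < d) :
    IntervalIntegrable (fun t => (t - a) ^ d) volume a b := by
  simpa using
    (intervalIntegral.intervalIntegrable_rpow' (a := 0) (b := b - a) hd).comp_sub_right a

theorem sq_le_sq_mul_rpow_of_abs_le {y z A : ℝ} (hz : 0 < z) (h : |y| ≤ A * z ^ (-γ)) :
    y ^ 2 ≤ A ^ 2 * z ^ (-(2 * γ)) := by
  have hsq := pow_le_pow_left₀ (abs_nonneg y) h 2
  rwa [sq_abs, mul_pow, ← Real.rpow_mul_natCast hz.le, Nat.cast_ofNat, neg_mul, mul_comm γ] at hsq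

theorem intervalIntegrable_sq_of_hasDerivAt {a b A : ℝ} {F D : ℝ → ℝ} (hγ : γ < 1 / 2)
    (hab : a ≤ b) (hderiv : ∀ t ∈ Ioo a b, HasDerivAt F (D t) t)
    (hD : ∀ t ∈ Ioo a b, |D t| ≤ A * (t - a) ^ (-γ)) :
    IntervalIntegrable (fun t => D t ^ 2) volume a b := by
  have hdom : IntegrableOn (fun t => A ^ 2 * (t - a) ^ (-(2 * γ))) (Ioo a b) :=
    (intervalIntegrable_iff_integrableOn_Ioo_of_le hab).mp
      ((intervalIntegrable_sub_rpow (by linarith)).const_mul _)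
  have hmeas : AEStronglyMeasurable (fun t => D t ^ 2) (volume.restrict (Ioo a b)) := by
    refine (((measurable_deriv F).pow_const 2).aestronglyMeasurable).congr ?_
    filter_upwards [ae_restrict_mem measurableSet_Ioo] with t ht
    rw [(hderiv t ht).deriv]
  rw [intervalIntegrable_iff_integrableOn_Ioo_of_le hab]
  refine hdom.mono' hmeas ?_
  filter_upwards [ae_restrict_mem measurableSet_Ioo] with t ht
  rw [Real.norm_eq_abs, abs_of_nonneg (sq_nonneg _)]
  exact sq_le_sq_mul_rpow_of_abs_le (sub_pos.mpr ht.1) (hD t ht)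

theorem integral_sq_le_of_abs_le {a b A : ℝ} {D : ℝ → ℝ} (hγ : γ < 1 / 2) (hab : a ≤ b)
    (hint : IntervalIntegrable (fun t => D t ^ 2) volume a b)
    (hD : ∀ t ∈ Ioo a b, |D t| ≤ A * (t - a) ^ (-γ)) :
    ∫ t in a..b, D t ^ 2 ≤ A ^ 2 * ((b - a) ^ (1 - 2 * γ) / (1 - 2 * γ)) := by
  refine (intervalIntegral.integral_mono_on_of_le_Ioo hab hint
    ((intervalIntegrable_sub_rpow (by linarith)).const_mul (A ^ 2)) fun t ht =>
      sq_le_sq_mul_rpow_of_abs_le (sub_pos.mpr ht.1) (hD t ht)).trans_eq ?_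
  rw [intervalIntegral.integral_const_mul,
    intervalIntegral.integral_comp_sub_right (fun t : ℝ => t ^ (-(2 * γ))) a,
    integral_rpow (Or.inl (by linarith)), sub_self, neg_add_eq_sub, Real.zero_rpow (by linarith),
    sub_zero]

theorem exists_mem_Ioc_of_mem_Ioc {s : ℝ} {n : ℕ} (hs : s ∈ Ioc (x 0) (x n)) :
    ∃ k < n, s ∈ Ioc (x k) (x (k + 1)) := by
  induction n with
  | zero => simp at hs
  | succ n ih =>
    rcases le_or_gt s (x n) with h | h
    · obtain ⟨k, hk, hsk⟩ := ih ⟨hs.1, h⟩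
      exact ⟨k, by omega, hsk⟩
    · exact ⟨n, by omega, h, hs.2⟩

theorem continuousOn_Icc_of_mesh {f : ℝ → ℝ} {n : ℕ} (hx : Monotone x)
    (hf : ∀ k < n, ContinuousOn f (Icc (x k) (x (k + 1)))) :
    ContinuousOn f (Icc (x 0) (x n)) := by
  induction n with
  | zero => simp
  | succ n ih =>
    rw [← Icc_union_Icc_eq_Icc (hx n.zero_le) (hx n.le_succ)]
    exact (ih fun k hk => hf k (by omega)).union_of_isClosed (hf n (by omega)) isClosed_Icc
      isClosed_Icc

theorem ne_of_mem_Ioo_of_strictMono {t : ℝ} {k : ℕ} (hx : StrictMono x)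
    (ht : t ∈ Ioo (x k) (x (k + 1))) (j : ℕ) : t ≠ x j := by
  rintro rfl
  have := hx.lt_iff_lt.mp ht.1
  have := hx.lt_iff_lt.mp ht.2
  omega

/-- The mesh hypotheses under which the fractional derivative of `η` is estimated on `[0, x N]`:
consecutive mesh points have ratio at most `R` away from the origin, `|η s| ≤ H s ^ c`, and `η` has
the matching local regularity on each mesh interval. -/
structure IsMeshError (x : ℕ → ℝ) (N : ℕ) (σ c R H : ℝ) (η : ℝ → ℝ) : Prop where
  zero : x 0 = 0
  strictMono : StrictMono x
  succ_le : ∀ k, 1 ≤ k → k < N → x (k + 1) ≤ R * x k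
  continuousOn : ContinuousOn η (Icc 0 (x N))
  leftSingularOn : ∀ k < N, LeftSingularOn σ (H * x (k + 1) ^ c) (x k) (x (k + 1)) η
  abs_le : ∀ s ∈ Ioc 0 (x N), |η s| ≤ H * s ^ c

theorem IsMeshError.exists_abs_rl_deriv_le {R : ℝ} (hγ0 : 0 < γ) (hγ1 : γ < 1) (hσ : 0 < σ)
    (hc : -1 < c) (hR : 1 ≤ R) :
    ∃ C : ℝ, 0 ≤ C ∧ ∀ {x : ℕ → ℝ} {N k : ℕ} {H t D : ℝ} {η : ℝ → ℝ}, 0 ≤ H →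
      IsMeshError x N σ c R H η → k < N → t ∈ Ioo (x k) (x (k + 1)) →
      HasDerivAt (rlIntegral (1 - γ) η) D t →
      |D| ≤ C * (H * x (k + 1) ^ c) * (t - x k) ^ (-γ) := by
  obtain ⟨C, hC, hderiv⟩ := exists_abs_rl_deriv_le_of_leftSingularOn hγ0 hγ1 hσ hc
  refine ⟨C * (1 + R ^ |c|), by positivity, fun {x N k H t D η} hH hη hk ht hD => ?_⟩
  have hcont : ContinuousOn η (Icc 0 (x (k + 1))) :=
    hη.continuousOn.mono (Icc_subset_Icc_right (hη.strictMono.monotone hk))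
  have hxk1 : 0 < x (k + 1) := hη.zero ▸ hη.strictMono k.succ_pos
  have htk : 0 < t - x k := sub_pos.mpr ht.1
  have hM : 0 ≤ H * x (k + 1) ^ c := by positivity
  rcases Nat.eq_zero_or_pos k with rfl | hk0
  · have hhist : ∀ s ∈ Ioc 0 (x 0), |η s| ≤ 0 * s ^ c := fun s hs => by
      rw [hη.zero] at hs
      simp at hs
    refine (hderiv hη.zero.ge ht.1 ht.2 le_rfl hcont hhist (hη.leftSingularOn 0 hk) hD).trans ?_
    rw [zero_mul, add_zero, mul_assoc C (1 + R ^ |c|)]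
    gcongr C * ?_ * _
    exact le_mul_of_one_le_left hM (le_add_of_nonneg_right (by positivity))
  · have hxk : 0 < x k := hη.zero ▸ hη.strictMono hk0
    have ht0 : 0 < t := hxk.trans ht.1
    have htc : t ^ c ≤ R ^ |c| * x (k + 1) ^ c :=
      rpow_le_rpow_abs_mul_rpow ht0 hxk1 hR (ht.2.le.trans (le_mul_of_one_le_left hxk1.le hR))
        ((hη.succ_le k hk0 hk).trans (by have := ht.1.le; gcongr)) c
    refine (hderiv hxk.le ht.1 ht.2 hH hcont (fun s hs => hη.abs_le s ⟨hs.1, hs.2.trans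
      (hη.strictMono.monotone hk.le)⟩) (hη.leftSingularOn k hk) hD).trans ?_
    calc C * (H * x (k + 1) ^ c + H * t ^ c) * (t - x k) ^ (-γ)
        ≤ C * (H * x (k + 1) ^ c + H * (R ^ |c| * x (k + 1) ^ c)) * (t - x k) ^ (-γ) := by gcongr
      _ = _ := by ring

theorem IsMeshError.exists_integral_sq_le_sum {R : ℝ} (hγ0 : 0 < γ) (hγ : γ < 1 / 2) (hσ : 0 < σ)
    (hc : -1 < c) (hR : 1 ≤ R) :
    ∃ C : ℝ, 0 ≤ C ∧ ∀ {x : ℕ → ℝ} {N : ℕ} {H : ℝ} {η D : ℝ → ℝ}, 0 ≤ H →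
      IsMeshError x N σ c R H η →
      (∀ k < N, ∀ t ∈ Ioo (x k) (x (k + 1)), HasDerivAt (rlIntegral (1 - γ) η) (D t) t) →
      ∀ n ≤ N, ∫ t in (0 : ℝ)..x n, D t ^ 2 ≤
        C * ∑ k ∈ Finset.range n, (H * x (k + 1) ^ c) ^ 2 * (x (k + 1) - x k) ^ (1 - 2 * γ) := by
  obtain ⟨C, hC, hpt⟩ := IsMeshError.exists_abs_rl_deriv_le hγ0 (by linarith) hσ hc hR
  have hγ' : 0 < 1 - 2 * γ := by linarith
  refine ⟨C ^ 2 / (1 - 2 * γ), by positivity, fun {x N H η D} hH hη hD n hn => ?_⟩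
  have hle : ∀ k, x k ≤ x (k + 1) := fun k => hη.strictMono.monotone k.le_succ
  have hbound : ∀ k < n, ∀ t ∈ Ioo (x k) (x (k + 1)),
      |D t| ≤ C * (H * x (k + 1) ^ c) * (t - x k) ^ (-γ) := fun k hk t ht =>
    hpt hH hη (hk.trans_le hn) ht (hD k (hk.trans_le hn) t ht)
  have hint : ∀ k < n, IntervalIntegrable (fun t => D t ^ 2) volume (x k) (x (k + 1)) :=
    fun k hk => intervalIntegrable_sq_of_hasDerivAt hγ (hle k) (hD k (hk.trans_le hn)) (hbound k hk)
  rw [← hη.zero, ← intervalIntegral.sum_integral_adjacent_intervals hint, Finset.mul_sum]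
  refine Finset.sum_le_sum fun k hk => ?_
  rw [Finset.mem_range] at hk
  refine (integral_sq_le_of_abs_le hγ (hle k) (hint k hk) (hbound k hk)).trans_eq ?_
  ring

end Mesh

/-! ### Interpolation on the graded mesh -/

/-- `Pv` is the piecewise Lagrange interpolant `Π^p v` on the first `N` intervals of the mesh `x`,
with equispaced nodes on each of them. -/
def IsPiecewiseInterpolant (x : ℕ → ℝ) (N p : ℕ) (v Pv : ℝ → ℝ) : Prop :=
  ∀ k < N, ∃ q : Polynomial ℝ, IsEquispacedInterpolant p (x k) (x (k + 1)) v q ∧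
    EqOn Pv (fun s => q.eval s) (Icc (x k) (x (k + 1)))

theorem IsPiecewiseInterpolant.continuousOn {x : ℕ → ℝ} {N p : ℕ} {v Pv : ℝ → ℝ}
    (h : IsPiecewiseInterpolant x N p v Pv) (hx : Monotone x) :
    ContinuousOn Pv (Icc (x 0) (x N)) :=
  continuousOn_Icc_of_mesh hx fun k hk =>
    let ⟨q, _, hPv⟩ := h k hk
    q.continuous.continuousOn.congr hPv

section GradedMesh

variable {T r σ m α : ℝ} {N p k n : ℕ}

theorem gradedMesh_zero (hr : r ≠ 0) : gradedMesh T r N 0 = 0 := by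
  simp [gradedMesh, Real.zero_rpow hr]

theorem gradedMesh_one : gradedMesh T r N 1 = T / (N : ℝ) ^ r := by
  rw [gradedMesh, Nat.cast_one, one_div, Real.inv_rpow N.cast_nonneg, mul_comm, div_eq_mul_inv]

theorem gradedMesh_self (hN : N ≠ 0) : gradedMesh T r N N = T := by
  rw [gradedMesh, div_self (Nat.cast_ne_zero.mpr hN), Real.one_rpow, one_mul]

theorem gradedMesh_eq_one_mul (n : ℕ) :
    gradedMesh T r N n = gradedMesh T r N 1 * (n : ℝ) ^ r := by
  rw [gradedMesh_one, gradedMesh, Real.div_rpow n.cast_nonneg N.cast_nonneg]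
  ring

theorem gradedMesh_pos (hT : 0 < T) (hN : N ≠ 0) (hn : n ≠ 0) : 0 < gradedMesh T r N n := by
  unfold gradedMesh
  positivity

theorem gradedMesh_strictMono (hT : 0 < T) (hr : 0 < r) (hN : N ≠ 0) :
    StrictMono (gradedMesh T r N) := fun i j hij => by
  unfold gradedMesh
  gcongr

theorem Ioo_gradedMesh_subset (hT : 0 < T) (hr : 0 < r) (hk : k < N) :
    Ioo (gradedMesh T r N k) (gradedMesh T r N (k + 1)) ⊆ Ioo 0 T := by
  have hmono := (gradedMesh_strictMono hT hr (Nat.ne_zero_of_lt hk)).monotone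
  exact Ioo_subset_Ioo ((gradedMesh_zero hr.ne').symm.trans_le (hmono k.zero_le))
    ((hmono hk).trans_eq (gradedMesh_self (Nat.ne_zero_of_lt hk)))

theorem gradedMesh_succ_le (hT : 0 < T) (hr : 0 ≤ r) (hk : 1 ≤ k) :
    gradedMesh T r N (k + 1) ≤ 2 ^ r * gradedMesh T r N k := by
  have hk' : ((k + 1 : ℕ) : ℝ) ≤ 2 * k := by exact_mod_cast (by omega : k + 1 ≤ 2 * k)
  unfold gradedMesh
  rw [← mul_assoc, ← Real.mul_rpow zero_le_two (by positivity), ← mul_div_assoc]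
  gcongr

theorem gradedMesh_step_le (hT : 0 < T) (hr : 1 ≤ r) (k : ℕ) :
    gradedMesh T r N (k + 1) - gradedMesh T r N k ≤
      r / ((k : ℝ) + 1) * gradedMesh T r N (k + 1) := by
  have hk : (0 : ℝ) < (k : ℝ) + 1 := by positivity
  have hbernoulli : 1 - r / ((k : ℝ) + 1) ≤ ((k : ℝ) / (k + 1)) ^ r := by
    have hk1 : -1 ≤ -(1 / ((k : ℝ) + 1)) :=
      neg_le_neg ((div_le_one hk).mpr (le_add_of_nonneg_left k.cast_nonneg))
    convert one_add_mul_self_le_rpow_one_add hk1 hr using 1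
    · ring
    · congr 1
      field_simp
      ring
  have hquot : gradedMesh T r N k = ((k : ℝ) / (k + 1)) ^ r * gradedMesh T r N (k + 1) := by
    unfold gradedMesh
    rw [← mul_assoc, ← Real.mul_rpow (by positivity) (by positivity)]
    push_cast
    field_simp
  have hx : 0 ≤ gradedMesh T r N (k + 1) := by unfold gradedMesh; positivity
  rw [hquot]
  linarith [mul_le_mul_of_nonneg_right hbernoulli hx]

theorem gradedMesh_relative_step_pow_le (hT : 0 < T) (hr : 1 ≤ r) (hN : N ≠ 0)
    (hm : r * m ≤ p + 1) (k : ℕ) :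
    ((gradedMesh T r N (k + 1) - gradedMesh T r N k) / gradedMesh T r N (k + 1)) ^ (p + 1) ≤
      r ^ (p + 1) * (gradedMesh T r N 1 ^ m * gradedMesh T r N (k + 1) ^ (-m)) := by
  have hx : 0 < gradedMesh T r N (k + 1) := gradedMesh_pos hT hN k.succ_ne_zero
  have hδ : 0 < gradedMesh T r N 1 := gradedMesh_pos hT hN one_ne_zero
  have hk : (1 : ℝ) ≤ (k : ℝ) + 1 := le_add_of_nonneg_left k.cast_nonneg
  have hmono : gradedMesh T r N k ≤ gradedMesh T r N (k + 1) :=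
    (gradedMesh_strictMono hT (by linarith) hN).monotone k.le_succ
  calc _ ≤ (r / ((k : ℝ) + 1)) ^ (p + 1) :=
        pow_le_pow_left₀ (div_nonneg (sub_nonneg.mpr hmono) hx.le)
          ((div_le_iff₀ hx).mpr (gradedMesh_step_le hT hr k)) _
    _ = r ^ (p + 1) * ((k : ℝ) + 1) ^ (-((p : ℝ) + 1)) := by
        rw [div_pow, Real.rpow_neg (by positivity), div_eq_mul_inv]
        norm_cast
    _ ≤ r ^ (p + 1) * ((k : ℝ) + 1) ^ (r * -m) := by
        gcongr
        linarith
    _ = _ := by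
        rw [gradedMesh_eq_one_mul (k + 1), Nat.cast_succ, Real.mul_rpow hδ.le (by positivity),
          ← mul_assoc _ _ (_ ^ _), ← Real.rpow_add hδ, add_neg_cancel, Real.rpow_zero, one_mul,
          Real.rpow_mul (by positivity)]

theorem exists_isMeshError_gradedMesh {C₀ : ℝ} (hp : 1 ≤ p) (hσ0 : 0 < σ) (hσ : σ ≤ 1)
    (hC₀ : 0 ≤ C₀) (hT : 0 < T) (hr : 1 ≤ r) (hm0 : 0 ≤ m) (hm : r * m ≤ p + 1) :
    ∃ E : ℝ, 0 ≤ E ∧ ∀ {N : ℕ} {v Pv : ℝ → ℝ}, N ≠ 0 → IsWeaklySingular T σ C₀ p v →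
      IsPiecewiseInterpolant (gradedMesh T r N) N p v Pv →
      IsMeshError (gradedMesh T r N) N σ (σ - m) (2 ^ r) (E * gradedMesh T r N 1 ^ m)
        (fun s => v s - Pv s) := by
  obtain ⟨C, hC, herr⟩ := IsWeaklySingular.exists_interp_error_le (p := p) hp hσ0 hσ hC₀ hT
    (by positivity : (0 : ℝ) ≤ 2 ^ r)
  refine ⟨C * r ^ (p + 1), by positivity, fun {N v Pv} hN hv hPv => ?_⟩
  have hr0 : 0 < r := by linarith
  have hmesh := gradedMesh_strictMono hT hr0 hN
  have hself : gradedMesh T r N N = T := gradedMesh_self hN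
  have hzero : gradedMesh T r N 0 = 0 := gradedMesh_zero hr0.ne'
  have hpos : ∀ k, 0 < gradedMesh T r N (k + 1) := fun k => gradedMesh_pos hT hN k.succ_ne_zero
  have hδ : 0 < gradedMesh T r N 1 := hpos 0
  have hlocal := fun k (hk : k < N) q hq => herr hv (q := q)
    (hzero ▸ hmesh.monotone k.zero_le) (hmesh k.lt_succ_self) ((hmesh.monotone hk).trans_eq hself)
    (fun hk0 => gradedMesh_succ_le hT hr0.le (hmesh.lt_iff_lt.mp (hzero.symm ▸ hk0))) hq
  have hsize : ∀ k s, 0 < s → s ≤ gradedMesh T r N (k + 1) →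
      C * (s ^ σ * ((gradedMesh T r N (k + 1) - gradedMesh T r N k) /
        gradedMesh T r N (k + 1)) ^ (p + 1)) ≤
      C * r ^ (p + 1) * gradedMesh T r N 1 ^ m * s ^ (σ - m) := fun k s hs hsk => by
    calc _ ≤ C * (s ^ σ * (r ^ (p + 1) * (gradedMesh T r N 1 ^ m * s ^ (-m)))) := by
          gcongr
          refine (gradedMesh_relative_step_pow_le hT hr hN hm k).trans ?_
          gcongr _ * (_ * ?_)
          exact Real.rpow_le_rpow_of_nonpos hs hsk (neg_nonpos.mpr hm0)
      _ = _ := by rw [sub_eq_add_neg, Real.rpow_add hs]; ring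
  refine ⟨hzero, hmesh, fun k hk _ => gradedMesh_succ_le hT hr0.le hk, ?_, fun k hk => ?_,
    fun s hs => ?_⟩
  · exact (hself ▸ hv.continuousOn).sub (hzero ▸ hPv.continuousOn hmesh.monotone)
  · obtain ⟨q, hq, hPvq⟩ := hPv k hk
    exact ((hlocal k hk q hq).1.congr fun s hs => by rw [hPvq hs]).mono
      (hsize k _ (hpos k) le_rfl)
  · obtain ⟨k, hk, hsk⟩ := exists_mem_Ioc_of_mem_Ioc (hzero.symm ▸ hs)
    obtain ⟨q, hq, hPvq⟩ := hPv k hk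
    rw [hPvq ⟨hsk.1.le, hsk.2⟩]
    exact ((hlocal k hk q hq).2 s hsk).trans (hsize k s hs.1 hsk.2)

theorem gradedWeight_eq {δ K : ℝ} (hδ : 0 < δ) (hK : 0 < K) (hr : 0 ≤ r) :
    (δ ^ m * (δ * K ^ r) ^ (σ - m)) ^ 2 * (r / K * (δ * K ^ r)) ^ (1 - α) =
      r ^ (1 - α) * (δ ^ (1 + 2 * σ - α) *
        K ^ (r * (1 + 2 * σ - α) - 2 * (r * m) + α - 1)) := by
  calc _ = r ^ (1 - α) * (δ ^ m * δ ^ m * δ ^ (σ - m) * δ ^ (σ - m) * δ ^ (1 - α) *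
        (K ^ (r * (σ - m)) * K ^ (r * (σ - m)) * K ^ (r * (1 - α)) * K ^ (-(1 - α)))) := by
        rw [Real.mul_rpow (x := r / K) (by positivity) (by positivity), Real.div_rpow hr hK.le,
          Real.mul_rpow hδ.le (by positivity), Real.mul_rpow hδ.le (by positivity),
          ← Real.rpow_mul hK.le, ← Real.rpow_mul hK.le, Real.rpow_neg hK.le]
        ring
    _ = _ := by
        simp only [← Real.rpow_add hδ, ← Real.rpow_add hK]
        congr 3 <;> ring

theorem gradedMesh_weight_le (hT : 0 < T) (hr : 1 ≤ r) (hα : α ≤ 1) (hN : N ≠ 0) (k : ℕ) :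
    (gradedMesh T r N 1 ^ m * gradedMesh T r N (k + 1) ^ (σ - m)) ^ 2 *
        (gradedMesh T r N (k + 1) - gradedMesh T r N k) ^ (1 - α) ≤
      r ^ (1 - α) * (gradedMesh T r N 1 ^ (1 + 2 * σ - α) *
        ((k : ℝ) + 1) ^ (r * (1 + 2 * σ - α) - 2 * (r * m) + α - 1)) := by
  have hδ : 0 < gradedMesh T r N 1 := gradedMesh_pos hT hN one_ne_zero
  have hx : gradedMesh T r N (k + 1) = gradedMesh T r N 1 * ((k : ℝ) + 1) ^ r := by
    rw [gradedMesh_eq_one_mul, Nat.cast_succ]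
  have hmono : gradedMesh T r N k ≤ gradedMesh T r N (k + 1) :=
    (gradedMesh_strictMono hT (by linarith) hN).monotone k.le_succ
  have hstep := Real.rpow_le_rpow (sub_nonneg.mpr hmono) (gradedMesh_step_le hT hr k)
    (sub_nonneg.mpr hα)
  have hK : (0 : ℝ) < (k : ℝ) + 1 := by positivity
  refine (mul_le_mul_of_nonneg_left hstep (sq_nonneg _)).trans_eq ?_
  rw [hx]
  exact gradedWeight_eq hδ hK (by linarith)

theorem exists_integral_sq_le_sum_rpow {C₀ : ℝ} (hp : 1 ≤ p) (hσ0 : 0 < σ) (hσ : σ ≤ 1)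
    (hC₀ : 0 ≤ C₀) (hT : 0 < T) (hα0 : 0 < α) (hα1 : α < 1) (hr : 1 ≤ r) (hm0 : 0 ≤ m)
    (hmσ : m < σ + 1) (hm : r * m ≤ p + 1) :
    ∃ C : ℝ, 0 ≤ C ∧ ∀ {N : ℕ} {v Pv D : ℝ → ℝ}, N ≠ 0 → IsWeaklySingular T σ C₀ p v →
      IsPiecewiseInterpolant (gradedMesh T r N) N p v Pv →
      (∀ k < N, ∀ t ∈ Ioo (gradedMesh T r N k) (gradedMesh T r N (k + 1)),
        HasDerivAt (rlIntegral (1 - α / 2) fun s => v s - Pv s) (D t) t) →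
      ∀ n ≤ N, ∫ t in (0 : ℝ)..gradedMesh T r N n, D t ^ 2 ≤
        C * (gradedMesh T r N 1 ^ (1 + 2 * σ - α) * ∑ k ∈ Finset.range n,
          ((k : ℝ) + 1) ^ (r * (1 + 2 * σ - α) - 2 * (r * m) + α - 1)) := by
  obtain ⟨E, hE, herr⟩ := exists_isMeshError_gradedMesh hp hσ0 hσ hC₀ hT hr hm0 hm
  obtain ⟨A, hA, hsum⟩ := IsMeshError.exists_integral_sq_le_sum (γ := α / 2) (c := σ - m)
    (half_pos hα0) (by linarith) hσ0 (by linarith)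
    (Real.one_le_rpow one_le_two (by linarith) : (1 : ℝ) ≤ 2 ^ r)
  refine ⟨A * (E ^ 2 * r ^ (1 - α)), by positivity, fun {N v Pv D} hN hv hPv hD n hn => ?_⟩
  have hδ : 0 < gradedMesh T r N 1 := gradedMesh_pos hT hN one_ne_zero
  refine (hsum (by positivity) (herr hN hv hPv) hD n hn).trans ?_
  rw [mul_assoc A]
  gcongr A * ?_
  rw [Finset.mul_sum, Finset.mul_sum]
  refine Finset.sum_le_sum fun k _ => ?_
  rw [mul_div_cancel₀ _ two_ne_zero, mul_assoc E, mul_pow E, mul_assoc (E ^ 2), mul_assoc (E ^ 2)]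
  gcongr E ^ 2 * ?_
  exact gradedMesh_weight_le hT hr hα1.le hN k

end GradedMesh

/-! ### Power sums and the three grading regimes -/

theorem exists_sum_rpow_le_const {e : ℝ} (he : e < 0) :
    ∃ C : ℝ, 0 ≤ C ∧ ∀ n : ℕ, ∑ k ∈ Finset.range n, ((k : ℝ) + 1) ^ (e - 1) ≤ C := by
  have hs : Summable fun k : ℕ => ((k : ℝ) + 1) ^ (e - 1) := by
    simpa using (summable_nat_add_iff 1).mpr (Real.summable_nat_rpow.mpr (by linarith : e - 1 < -1))
  exact ⟨_, tsum_nonneg fun k => by positivity,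
    fun n => hs.sum_le_tsum _ fun k _ => by positivity⟩

theorem sum_rpow_neg_one_le (n : ℕ) :
    ∑ k ∈ Finset.range n, ((k : ℝ) + 1) ^ (-1 : ℝ) ≤ 1 + Real.log n := by
  refine le_of_eq_of_le ?_ (harmonic_le_one_add_log n)
  simp [harmonic, Real.rpow_neg_one]

theorem sum_rpow_le_rpow_of_one_le {e : ℝ} (he : 1 ≤ e) (n : ℕ) :
    ∑ k ∈ Finset.range n, ((k : ℝ) + 1) ^ (e - 1) ≤ (n : ℝ) ^ e := by
  calc _ ≤ ∑ _k ∈ Finset.range n, (n : ℝ) ^ (e - 1) := by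
        refine Finset.sum_le_sum fun k hk => Real.rpow_le_rpow (by positivity) ?_ (by linarith)
        exact_mod_cast Finset.mem_range.mp hk
    _ = (n : ℝ) ^ e := by
        rcases eq_or_ne n 0 with rfl | hn
        · simp [Real.zero_rpow (by linarith : e ≠ 0)]
        · rw [Finset.sum_const, Finset.card_range, nsmul_eq_mul,
            Real.rpow_sub_one (Nat.cast_ne_zero.mpr hn),
            mul_div_cancel₀ _ (Nat.cast_ne_zero.mpr hn)]

theorem mul_rpow_sub_one_le_rpow_sub {e : ℝ} (he0 : 0 ≤ e) (he1 : e ≤ 1) (k : ℕ) :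
    e * ((k : ℝ) + 1) ^ (e - 1) ≤ ((k : ℝ) + 1) ^ e - (k : ℝ) ^ e := by
  have hk : (0 : ℝ) < (k : ℝ) + 1 := by positivity
  have hk1 : -1 ≤ -(1 / ((k : ℝ) + 1)) :=
    neg_le_neg ((div_le_one hk).mpr (le_add_of_nonneg_left k.cast_nonneg))
  have hbernoulli := rpow_one_add_le_one_add_mul_self hk1 he0 he1
  have hquot : 1 + -(1 / ((k : ℝ) + 1)) = (k : ℝ) / (k + 1) := by
    field_simp
    ring
  rw [hquot, Real.div_rpow k.cast_nonneg hk.le, div_le_iff₀ (by positivity)] at hbernoulli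
  rw [Real.rpow_sub_one hk.ne']
  linear_combination hbernoulli

theorem sum_rpow_le_rpow_of_le_one {e : ℝ} (he0 : 0 < e) (he1 : e ≤ 1) (n : ℕ) :
    ∑ k ∈ Finset.range n, ((k : ℝ) + 1) ^ (e - 1) ≤ 1 / e * (n : ℝ) ^ e := by
  have htelescope := Finset.sum_range_sub (fun k : ℕ => (k : ℝ) ^ e) n
  rw [Nat.cast_zero, Real.zero_rpow he0.ne', sub_zero] at htelescope
  rw [div_mul_eq_mul_div, one_mul, le_div_iff₀' he0, ← htelescope, Finset.mul_sum]
  refine Finset.sum_le_sum fun k _ => ?_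
  rw [Nat.cast_succ]
  exact mul_rpow_sub_one_le_rpow_sub he0.le he1 k

theorem exists_sum_rpow_le_rpow {e : ℝ} (he : 0 < e) :
    ∃ C : ℝ, 0 ≤ C ∧ ∀ n : ℕ,
      ∑ k ∈ Finset.range n, ((k : ℝ) + 1) ^ (e - 1) ≤ C * (n : ℝ) ^ e := by
  rcases le_total 1 e with he1 | he1
  · exact ⟨1, zero_le_one, fun n => (sum_rpow_le_rpow_of_one_le he1 n).trans_eq (one_mul _).symm⟩
  · exact ⟨1 / e, by positivity, sum_rpow_le_rpow_of_le_one he he1⟩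

/-- The exponent `m` to which the mesh width enters the interpolation error
`O(δ ^ m * t ^ (σ - m))`. It is the order `(p + 1) / r` delivered by the grading, capped below
`σ + 1` so that `t ^ (σ - m)` stays integrable at `0`. -/
noncomputable def decayExponent (p : ℕ) (r σ : ℝ) : ℝ :=
  min (((p : ℝ) + 1) / r) (σ + 3 / 4)

section Regimes

variable {T r α σ : ℝ} {p N n : ℕ}

theorem decayExponent_nonneg (hr : 0 ≤ r) (hσ : 0 ≤ σ) : 0 ≤ decayExponent p r σ :=
  le_min (by positivity) (by positivity)

theorem decayExponent_lt_add_one : decayExponent p r σ < σ + 1 :=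
  (min_le_right _ _).trans_lt (by linarith)

theorem mul_decayExponent_le (hr : 0 < r) : r * decayExponent p r σ ≤ p + 1 :=
  (le_div_iff₀' hr).mp (min_le_left _ _)

theorem mul_decayExponent_eq (hα : 0 ≤ α) (hr : 1 ≤ r)
    (h : 2 * (p : ℝ) + 2 - α ≤ r * (1 + 2 * σ - α)) : r * decayExponent p r σ = p + 1 := by
  have hr0 : 0 < r := by linarith
  have hle : ((p : ℝ) + 1) / r ≤ σ + 3 / 4 := by
    rw [div_le_iff₀' hr0]
    nlinarith [mul_nonneg hα (sub_nonneg.mpr hr)]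
  rw [decayExponent, min_eq_left hle, mul_div_cancel₀ _ hr0.ne']

theorem sub_mul_decayExponent_neg (hα : 0 ≤ α) (hr : 1 ≤ r)
    (h : r * (1 + 2 * σ - α) < 2 * (p : ℝ) + 2 - α) :
    r * (1 + 2 * σ - α) - 2 * (r * decayExponent p r σ) + α < 0 := by
  have hr0 : 0 < r := by linarith
  rcases min_choice (((p : ℝ) + 1) / r) (σ + 3 / 4) with hmin | hmin <;> rw [decayExponent, hmin]
  · rw [mul_div_cancel₀ _ hr0.ne']
    linarith
  · nlinarith [mul_nonneg hα (sub_nonneg.mpr hr)]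

theorem gradedMesh_one_rpow (hT : 0 ≤ T) (y : ℝ) :
    gradedMesh T r N 1 ^ y = T ^ y * (N : ℝ) ^ (-(r * y)) := by
  rw [gradedMesh_one, Real.div_rpow hT (by positivity), ← Real.rpow_mul N.cast_nonneg,
    Real.rpow_neg N.cast_nonneg, div_eq_mul_inv]

theorem gradedMesh_rpow_div (hT : 0 ≤ T) (hr : r ≠ 0) (y : ℝ) :
    gradedMesh T r N n ^ (y / r) = (n : ℝ) ^ y * (N : ℝ) ^ (-y) * T ^ (y / r) := by
  rw [gradedMesh, Real.mul_rpow (by positivity) hT, ← Real.rpow_mul (by positivity),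
    mul_div_cancel₀ _ hr, Real.div_rpow n.cast_nonneg N.cast_nonneg, Real.rpow_neg N.cast_nonneg,
    div_eq_mul_inv]

theorem halfDerivBound_nonneg (hT : 0 ≤ T) : 0 ≤ halfDerivBound T r α σ p N n := by
  have hmesh : 0 ≤ gradedMesh T r N n := by unfold gradedMesh; positivity
  have := Real.log_natCast_nonneg n
  unfold halfDerivBound
  split_ifs <;> positivity

theorem exists_mul_sum_le_halfDerivBound_of_lt {e : ℝ} (hT : 0 ≤ T)
    (h : r < (2 * (p : ℝ) + 2 - α) / (1 + 2 * σ - α)) (he : e < 0) :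
    ∃ C : ℝ, 0 ≤ C ∧ ∀ N n : ℕ,
      gradedMesh T r N 1 ^ (1 + 2 * σ - α) * ∑ k ∈ Finset.range n, ((k : ℝ) + 1) ^ (e - 1) ≤
        C * halfDerivBound T r α σ p N n := by
  obtain ⟨C, hC, hsum⟩ := exists_sum_rpow_le_const he
  refine ⟨T ^ (1 + 2 * σ - α) * C, by positivity, fun N n => ?_⟩
  rw [halfDerivBound, if_pos h, gradedMesh_one_rpow hT, mul_right_comm (T ^ _) C]
  gcongr
  exact hsum n

theorem mul_sum_le_halfDerivBound_of_eq (hT : 0 ≤ T) (hψ : 0 < 1 + 2 * σ - α)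
    (h : r = (2 * (p : ℝ) + 2 - α) / (1 + 2 * σ - α)) (N n : ℕ) :
    gradedMesh T r N 1 ^ (1 + 2 * σ - α) * ∑ k ∈ Finset.range n, ((k : ℝ) + 1) ^ (-1 : ℝ) ≤
      T ^ (1 + 2 * σ - α) * halfDerivBound T r α σ p N n := by
  have hexp : -(r * (1 + 2 * σ - α)) = -2 * (p : ℝ) - 2 + α := by
    rw [(eq_div_iff hψ.ne').mp h]
    ring
  rw [halfDerivBound, if_neg h.not_lt, if_pos h, gradedMesh_one_rpow hT, hexp, mul_assoc]
  gcongr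
  exact sum_rpow_neg_one_le n

theorem exists_mul_sum_le_halfDerivBound_of_gt {e : ℝ} (hT : 0 < T) (hr : 0 < r)
    (h : (2 * (p : ℝ) + 2 - α) / (1 + 2 * σ - α) < r)
    (he : e = r * (1 + 2 * σ - α) - (2 * (p : ℝ) + 2 - α)) (he0 : 0 < e) :
    ∃ C : ℝ, 0 ≤ C ∧ ∀ N n : ℕ, N ≠ 0 →
      gradedMesh T r N 1 ^ (1 + 2 * σ - α) * ∑ k ∈ Finset.range n, ((k : ℝ) + 1) ^ (e - 1) ≤
        C * halfDerivBound T r α σ p N n := by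
  obtain ⟨C, hC, hsum⟩ := exists_sum_rpow_le_rpow he0
  refine ⟨T ^ (1 + 2 * σ - α) * C / T ^ (e / r), by positivity, fun N n hN => ?_⟩
  have hN0 : (0 : ℝ) < N := by positivity
  have hmesh : 1 + 2 * σ - α - (2 * (p : ℝ) + 2 - α) / r = e / r := by
    rw [he]
    field_simp
  have hsplit : -(r * (1 + 2 * σ - α)) = (-2 * (p : ℝ) - 2 + α) + -e := by
    rw [he]
    ring
  rw [halfDerivBound, if_neg h.not_gt, if_neg h.ne', gradedMesh_one_rpow hT.le, hmesh,
    gradedMesh_rpow_div hT.le hr.ne', hsplit, Real.rpow_add hN0]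
  calc _ ≤ T ^ (1 + 2 * σ - α) * ((N : ℝ) ^ (-2 * (p : ℝ) - 2 + α) * (N : ℝ) ^ (-e)) *
        (C * (n : ℝ) ^ e) := by
        gcongr
        exact hsum n
    _ = _ := by field_simp

theorem exists_mul_sum_le_halfDerivBound (hT : 0 < T) (hα : 0 ≤ α) (hr : 1 ≤ r)
    (hψ : 0 < 1 + 2 * σ - α) :
    ∃ C : ℝ, 0 ≤ C ∧ ∀ N n : ℕ, N ≠ 0 →
      gradedMesh T r N 1 ^ (1 + 2 * σ - α) * ∑ k ∈ Finset.range n, ((k : ℝ) + 1) ^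
          (r * (1 + 2 * σ - α) - 2 * (r * decayExponent p r σ) + α - 1) ≤
        C * halfDerivBound T r α σ p N n := by
  rcases lt_trichotomy r ((2 * (p : ℝ) + 2 - α) / (1 + 2 * σ - α)) with h | h | h
  · obtain ⟨C, hC, hbound⟩ := exists_mul_sum_le_halfDerivBound_of_lt hT.le h
      (sub_mul_decayExponent_neg hα hr ((lt_div_iff₀ hψ).mp h))
    exact ⟨C, hC, fun N n _ => hbound N n⟩
  · have hθ := (eq_div_iff hψ.ne').mp h
    refine ⟨T ^ (1 + 2 * σ - α), by positivity, fun N n _ => ?_⟩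
    convert mul_sum_le_halfDerivBound_of_eq hT.le hψ h N n using 5
    rw [mul_decayExponent_eq hα hr hθ.ge, hθ]
    ring
  · have hθ := (div_lt_iff₀ hψ).mp h
    have he : r * (1 + 2 * σ - α) - 2 * (r * decayExponent p r σ) + α =
        r * (1 + 2 * σ - α) - (2 * (p : ℝ) + 2 - α) := by
      rw [mul_decayExponent_eq hα hr hθ.le]
      ring
    exact exists_mul_sum_le_halfDerivBound_of_gt hT (by linarith) h he (by linarith)

end Regimes

/-- Global `L²` bound for the Riemann–Liouville derivative of order `α/2` of the
interpolation error: `∫_0^{t_n} ((D_{0+}^{α/2} η_v)(t))² dt ≤ C ⋅ B`, with `C` depending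
only on `p, σ, α, r, C₀, T`. -/
theorem rl_half_deriv_interp_error_L2 (T : ℝ) (hT : 0 < T)
    (α : ℝ) (hα0 : 0 < α) (hα1 : α < 1)
    (r : ℝ) (hr : 1 ≤ r) (p : ℕ) (hp : 1 ≤ p)
    (σ C₀ : ℝ) (hσ0 : 0 < σ) (hσ1 : σ < 1) (hσα : σ ≤ (p : ℝ) + ((p : ℝ) + 1) / α)
    (hC₀ : 0 < C₀) :
    ∃ C : ℝ, 0 < C ∧
      ∀ (N : ℕ), 1 ≤ N → ∀ v Pv : ℝ → ℝ,
        -- regularity of v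
        ContinuousOn v (Set.Icc 0 T) →
        ContDiffOn ℝ (p + 1) v (Set.Ioc 0 T) →
        (∀ t ∈ Set.Ioc (0 : ℝ) T, |v t - v 0| ≤ C₀ * t ^ σ) →
        (∀ t ∈ Set.Ioc (0 : ℝ) T, ∀ ℓ ≤ p + 1,
          |iteratedDerivWithin ℓ v (Set.Ioc 0 T) t| ≤ C₀ * (1 + t ^ (σ - (ℓ : ℝ)))) →
        -- Pv is the piecewise Lagrange interpolant of degree p on the graded mesh
        (∀ k, 1 ≤ k → k ≤ N → ∃ q : Polynomial ℝ, q.degree ≤ p ∧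
          (∀ s ∈ Set.Icc (gradedMesh T r N (k - 1)) (gradedMesh T r N k), Pv s = q.eval s) ∧
          (∀ j ≤ p, q.eval (gradedMesh T r N (k - 1) +
              (j : ℝ) * (gradedMesh T r N k - gradedMesh T r N (k - 1)) / (p : ℝ))
            = v (gradedMesh T r N (k - 1) +
              (j : ℝ) * (gradedMesh T r N k - gradedMesh T r N (k - 1)) / (p : ℝ)))) →
        ∀ D : ℝ → ℝ,
          (∀ t ∈ Set.Ioo (0 : ℝ) T, (∀ k ≤ N, t ≠ gradedMesh T r N k) →
            HasDerivAt
              (fun τ => ∫ s in (0:ℝ)..τ, rlKernel (1 - α / 2) (τ - s) * (v s - Pv s))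
              (D t) t) →
          ∀ n, 1 ≤ n → n ≤ N →
            (∫ t in (0:ℝ)..(gradedMesh T r N n), (D t) ^ 2)
              ≤ C * halfDerivBound T r α σ p N n := by
  have hr0 : 0 < r := by linarith
  obtain ⟨A, hA, hsum⟩ := exists_integral_sq_le_sum_rpow hp hσ0 hσ1.le hC₀.le hT hα0 hα1 hr
    (decayExponent_nonneg hr0.le hσ0.le) decayExponent_lt_add_one (mul_decayExponent_le hr0)
  obtain ⟨B, hB, hregime⟩ := exists_mul_sum_le_halfDerivBound (p := p) (σ := σ) hT hα0.le hr
    (by linarith)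
  refine ⟨A * B + 1, by positivity, fun N hN v Pv hcont hdiff hsing hderiv hPv D hD n _ hn => ?_⟩
  have hN0 : N ≠ 0 := Nat.one_le_iff_ne_zero.mp hN
  have hinterp : IsPiecewiseInterpolant (gradedMesh T r N) N p v Pv := fun k hk => by
    obtain ⟨q, hdeg, hPvq, hnode⟩ := hPv (k + 1) k.succ_pos hk
    exact ⟨q, ⟨hdeg, hnode⟩, hPvq⟩
  have hDk : ∀ k < N, ∀ t ∈ Ioo (gradedMesh T r N k) (gradedMesh T r N (k + 1)),
      HasDerivAt (rlIntegral (1 - α / 2) fun s => v s - Pv s) (D t) t := fun k hk t ht =>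
    hD t (Ioo_gradedMesh_subset hT hr0 hk ht) fun j _ =>
      ne_of_mem_Ioo_of_strictMono (gradedMesh_strictMono hT hr0 hN0) ht j
  calc ∫ t in (0 : ℝ)..gradedMesh T r N n, D t ^ 2
      ≤ A * (B * halfDerivBound T r α σ p N n) :=
        (hsum hN0 ⟨hcont, hdiff, hsing, hderiv⟩ hinterp hDk n hn).trans
          (mul_le_mul_of_nonneg_left (hregime N n hN0) hA)
    _ ≤ (A * B + 1) * halfDerivBound T r α σ p N n := by
        linarith [halfDerivBound_nonneg (r := r) (α := α) (σ := σ) (p := p) (N := N) (n := n) hT.le]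
end
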